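/- Let u^{ε,R} ∈ C^∞(Ω̄_R^ε) be the k-convex solution of the approximating problem with α ≥ α₀. Then (i) |Du^{ε,R}| ≤ C_ε in B₂(0)∖B_ε(x₀); (ii) |Du^{ε,R}| ≤ C√R in E_R(0)∖E_{2R/3}(0); and (iii) for any given small δ > 0 and every 0 < ε < δ, |Du^{ε,R}| ≤ C' in B₂(0)∖B_δ(x₀), where C is a positive constant depending only on n, k, λ_max(A), λ_min(A), R₀ and α, C' additionally depends on δ, both independent of ε and R, and C_ε = C(n/k − 2)ε^{−1} if k < n/2, C_ε = Cε^{−1}|log ε|^{−1} if k = n/2, C_ε = C(2 − n/k)ε^{1−n/k} if k > n/2. -/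

import Mathlib

open scoped Classical Topology
open Real Filter MeasureTheory

noncomputable section

/-- Euclidean space ℝⁿ. -/
abbrev Euc (n : ℕ) : Type := EuclideanSpace ℝ (Fin n)

/-- The standard basis vector `e i`. -/
def ebasis (n : ℕ) (i : Fin n) : Euc n := EuclideanSpace.single i 1

/-- The Hessian matrix `D²u(x)`. -/
def hessMat (n : ℕ) (u : Euc n → ℝ) (x : Euc n) : Matrix (Fin n) (Fin n) ℝ :=
  Matrix.of fun i j => iteratedFDeriv ℝ 2 u x ![ebasis n i, ebasis n j]

/-- The Laplacian `Δu(x)` (trace of the Hessian). -/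
def lapl (n : ℕ) (u : Euc n → ℝ) (x : Euc n) : ℝ := ∑ i, hessMat n u x i i

/-- The `k`-th elementary symmetric function of the eigenvalues of an `n × n` matrix,
expressed through the coefficients of the characteristic polynomial. -/
def matSk (n k : ℕ) (M : Matrix (Fin n) (Fin n) ℝ) : ℝ :=
  (-1 : ℝ) ^ k * (Matrix.charpoly M).coeff (n - k)

/-- `S_k(D²u)(x)`. -/
def SkHess (n k : ℕ) (u : Euc n → ℝ) (x : Euc n) : ℝ := matSk n k (hessMat n u x)

/-- `u` is `k`-convex on `U`: the eigenvalues of the Hessian lie in the Gårding cone `Γ_k`. -/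
def KConvexOn (n k : ℕ) (u : Euc n → ℝ) (U : Set (Euc n)) : Prop :=
  ∀ x ∈ U, ∀ j : ℕ, 1 ≤ j → j ≤ k → 0 < matSk n j (hessMat n u x)

/-- Membership in the class `𝒜_k`: symmetric positive definite with `S_k(λ(A)) = 1`. -/
def MemA (n k : ℕ) (A : Matrix (Fin n) (Fin n) ℝ) : Prop :=
  A.IsSymm ∧ A.PosDef ∧ matSk n k A = 1

/-- The quadratic form `½ xᵀ A x`. -/
def quadA (n : ℕ) (A : Matrix (Fin n) (Fin n) ℝ) (x : Euc n) : ℝ :=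
  (1 / 2) * ∑ i, ∑ j, x i * A i j * x j

/-- The linear form `b ⋅ x`. -/
def linB (n : ℕ) (b x : Euc n) : ℝ := ∑ i, b i * x i

/-- `λ_max(A) < c`, expressed through the quadratic form (for symmetric `A`). -/
def lambdaMaxLT (n : ℕ) (A : Matrix (Fin n) (Fin n) ℝ) (c : ℝ) : Prop :=
  ∀ x : Euc n, x ≠ 0 → ∑ i, ∑ j, x i * A i j * x j < c * ‖x‖ ^ 2

/-- `u` is smooth on an open neighbourhood of the (closed) set `S`;
this is our rendering of `u ∈ C^∞(S)` for a closed set `S`. -/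
def SmoothOnNhd (n : ℕ) (u : Euc n → ℝ) (S : Set (Euc n)) : Prop :=
  ∃ U : Set (Euc n), IsOpen U ∧ S ⊆ U ∧ ContDiffOn ℝ (⊤ : ℕ∞) u U

/-- A smooth bounded strictly convex domain in ℝⁿ. -/
def SmoothStrictConvexDomain (n : ℕ) (Ω : Set (Euc n)) : Prop :=
  IsOpen Ω ∧ Bornology.IsBounded Ω ∧ Ω.Nonempty ∧ Convex ℝ Ω ∧ StrictConvex ℝ Ω ∧
    ∃ f : Euc n → ℝ, ContDiff ℝ (⊤ : ℕ∞) f ∧ Ω = {x | f x < 0} ∧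
      ∀ x ∈ frontier Ω, fderiv ℝ f x ≠ 0

/-- Extension of `u` by the constant value `v` inside `Ω`. -/
def extBy (n : ℕ) (Ω : Set (Euc n)) (v : ℝ) (u : Euc n → ℝ) : Euc n → ℝ :=
  fun x => if x ∈ Ω then v else u x

/-- `u` (vanishing on `∂Ω`) is quasiconvex: all sublevel sets of its zero-extension are convex. -/
def QuasiconvexSol (n : ℕ) (Ω : Set (Euc n)) (u : Euc n → ℝ) : Prop :=
  ∀ t : ℝ, Convex ℝ {x : Euc n | extBy n Ω 0 u x ≤ t}

/-- The `k`-th elementary symmetric polynomial of a vector `a ∈ ℝⁿ`. -/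
def esymmVec (n k : ℕ) (a : Fin n → ℝ) : ℝ :=
  ∑ s ∈ Finset.powersetCard k (Finset.univ : Finset (Fin n)), ∏ i ∈ s, a i

/-- `h_k(a) = max_i S_{k-1}(a)|_{a_i = 0} · a_i`. -/
def hkfun (n k : ℕ) (a : Fin n → ℝ) : ℝ :=
  ⨆ i : Fin n, esymmVec n (k - 1) (Function.update a i 0) * a i

/-- The exponent `-k / (2 h_k(a))`. -/
def genExp (n k : ℕ) (a : Fin n → ℝ) : ℝ := -(k : ℝ) / (2 * hkfun n k a)

/-- The integrand `(1 + α t^{-k/(2h_k(a))})^{1/k}`. -/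
def genInt (n k : ℕ) (a : Fin n → ℝ) (α t : ℝ) : ℝ :=
  (1 + α * t ^ genExp n k a) ^ ((1 : ℝ) / (k : ℝ))

/-- The generalized symmetric function `ū`. -/
def ubar (n k : ℕ) (a : Fin n → ℝ) (R₀ α : ℝ) (x : Euc n) : ℝ :=
  ∫ t in R₀..(quadA n (Matrix.diagonal a) x), genInt n k a α t

/-- `μ(α) = ∫_{R₀}^∞ ((1 + α t^{-k/(2h_k(a))})^{1/k} - 1) dt - R₀`. -/
def muA (n k : ℕ) (a : Fin n → ℝ) (R₀ α : ℝ) : ℝ :=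
  (∫ t in Set.Ioi R₀, (genInt n k a α t - 1)) - R₀

/-- The ellipsoid `E_R(xb) = {x : ½ (x - xb)ᵀ A (x - xb) < R}`. -/
def ESet (n : ℕ) (A : Matrix (Fin n) (Fin n) ℝ) (xb : Euc n) (R : ℝ) : Set (Euc n) :=
  {x : Euc n | quadA n A (x - xb) < R}

/-- The non-concentric convex ring `Ω_R^ε = E_R(0) ∖ B̄_ε(x₀)`. -/
def OmegaRe (n : ℕ) (a : Fin n → ℝ) (x₀ : Euc n) (ε R : ℝ) : Set (Euc n) :=
  ESet n (Matrix.diagonal a) 0 R \ closure (Metric.ball x₀ ε)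

/-- `u` is a `k`-convex solution of the approximating problem
`S_k(D²u) = 1` in `Ω_R^ε`, `u = 0` on `∂B_ε(x₀)`, `u = ū` on `∂E_R(0)`. -/
def ApproxSol (n k : ℕ) (a : Fin n → ℝ) (x₀ : Euc n) (ε R R₀ α : ℝ)
    (u : Euc n → ℝ) : Prop :=
  SmoothOnNhd n u (closure (OmegaRe n a x₀ ε R)) ∧
  KConvexOn n k u (OmegaRe n a x₀ ε R) ∧
  (∀ x ∈ OmegaRe n a x₀ ε R, SkHess n k u x = 1) ∧
  (∀ x ∈ Metric.sphere x₀ ε, u x = 0) ∧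
  (∀ x : Euc n, quadA n (Matrix.diagonal a) x = R → u x = ubar n k a R₀ α x)

/-- The constant `C_ε` of the boundary gradient estimate. -/
def Ceps (n k : ℕ) (C ε : ℝ) : ℝ :=
  if 2 * k < n then C * ((n : ℝ) / (k : ℝ) - 2) * ε⁻¹
  else if 2 * k = n then C * ε⁻¹ * |Real.log ε|⁻¹
  else C * (2 - (n : ℝ) / (k : ℝ)) * ε ^ (1 - (n : ℝ) / (k : ℝ))

/-- `u` is a `k`-convex solution of the exterior Dirichlet problem
`S_k(D²u) = 1` in `ℝⁿ ∖ B̄_ε(x₀)`, `u = 0` on `∂B_ε(x₀)`, with quadratic asymptotics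
`½ xᵀAx + c` at infinity (`A = diag a`). -/
def ExtBallSol (n k : ℕ) (a : Fin n → ℝ) (x₀ : Euc n) (ε c : ℝ) (u : Euc n → ℝ) : Prop :=
  SmoothOnNhd n u (Metric.ball x₀ ε)ᶜ ∧
  KConvexOn n k u (closure (Metric.ball x₀ ε))ᶜ ∧
  (∀ x ∈ (closure (Metric.ball x₀ ε))ᶜ, SkHess n k u x = 1) ∧
  (∀ x ∈ Metric.sphere x₀ ε, u x = 0) ∧
  Tendsto (fun x : Euc n => u x - (quadA n (Matrix.diagonal a) x + c))
    (cocompact (Euc n)) (𝓝 0)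

/-- `u` is a `k`-convex solution of the exterior Dirichlet problem on `ℝⁿ ∖ Ω₀` with
asymptotics `½ xᵀAx + b·x + c` at infinity. -/
def ExtDomSol (n k : ℕ) (Ω₀ : Set (Euc n)) (A : Matrix (Fin n) (Fin n) ℝ) (b : Euc n)
    (c : ℝ) (u : Euc n → ℝ) : Prop :=
  SmoothOnNhd n u Ω₀ᶜ ∧
  KConvexOn n k u (closure Ω₀)ᶜ ∧
  (∀ x ∈ (closure Ω₀)ᶜ, SkHess n k u x = 1) ∧
  (∀ x ∈ frontier Ω₀, u x = 0) ∧
  Tendsto (fun x : Euc n => u x - (quadA n A x + linB n b x + c))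
    (cocompact (Euc n)) (𝓝 0)

/-- `u` is a solution of the exterior Dirichlet problem for the Laplace equation
`Δu = 1` on `ℝⁿ ∖ Ω₀` with asymptotics `½ xᵀAx + b·x + c` at infinity. -/
def ExtDomSolLap (n : ℕ) (Ω₀ : Set (Euc n)) (A : Matrix (Fin n) (Fin n) ℝ) (b : Euc n)
    (c : ℝ) (u : Euc n → ℝ) : Prop :=
  SmoothOnNhd n u Ω₀ᶜ ∧
  (∀ x ∈ (closure Ω₀)ᶜ, lapl n u x = 1) ∧
  (∀ x ∈ frontier Ω₀, u x = 0) ∧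
  Tendsto (fun x : Euc n => u x - (quadA n A x + linB n b x + c))
    (cocompact (Euc n)) (𝓝 0)

/-- `u` solves the exterior problem `Δu = 0` in `ℝⁿ ∖ Ω̄`, `u = 1` on `∂Ω`,
`u → 0` at infinity. -/
def HarmExtSol (n : ℕ) (Ω : Set (Euc n)) (u : Euc n → ℝ) : Prop :=
  SmoothOnNhd n u Ωᶜ ∧
  (∀ x ∈ (closure Ω)ᶜ, lapl n u x = 0) ∧
  (∀ x ∈ frontier Ω, u x = 1) ∧
  Tendsto u (cocompact (Euc n)) (𝓝 0)

end

noncomputable section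

/-! ### Algebra of elementary symmetric functions -/

theorem esymmVec_zero' (n : ℕ) (a : Fin n → ℝ) : esymmVec n 0 a = 1 := by
  simp [esymmVec]

theorem esymmVec_update_eq (n k : ℕ) (a : Fin n → ℝ) (i : Fin n) :
    esymmVec n k (Function.update a i 0)
      = ∑ s ∈ Finset.powersetCard k (Finset.univ : Finset (Fin n)),
          if i ∈ s then 0 else ∏ j ∈ s, a j := by
  unfold esymmVec
  refine Finset.sum_congr rfl fun s _ => ?_
  split_ifs with h
  · exact Finset.prod_eq_zero h (by simp)
  · refine Finset.prod_congr rfl fun j hj => ?_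
    rw [Function.update_of_ne]
    rintro rfl; exact h hj

theorem esymmVec_split (n k : ℕ) (a : Fin n → ℝ) (i : Fin n) :
    esymmVec n (k + 1) a = esymmVec n (k + 1) (Function.update a i 0)
      + a i * esymmVec n k (Function.update a i 0) := by
  have h1 : (Finset.univ : Finset (Fin n)) = insert i (Finset.univ.erase i) := by simp
  have key : ∀ (m : ℕ), esymmVec n m (Function.update a i 0)
      = ∑ s ∈ Finset.powersetCard m (Finset.univ.erase i), ∏ j ∈ s, a j := by
    intro m
    rw [esymmVec_update_eq]
    rw [Finset.sum_ite, Finset.sum_const_zero, zero_add]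
    refine Finset.sum_congr ?_ fun _ _ => rfl
    ext s
    simp only [Finset.mem_filter, Finset.mem_powersetCard, Finset.subset_univ, true_and,
      Finset.subset_erase]
    tauto
  rw [key, key, esymmVec]
  conv_lhs => rw [h1]
  rw [Finset.powersetCard_succ_insert (by simp), Finset.sum_union]
  · congr 1
    rw [Finset.sum_image, Finset.mul_sum]
    · refine Finset.sum_congr rfl fun s hs => ?_
      rw [Finset.prod_insert]
      intro h
      have := (Finset.mem_powersetCard.1 hs).1 h
      simp at this
    · intro s hs t ht hst
      have hs' : i ∉ s := fun h => by simpa using (Finset.mem_powersetCard.1 hs).1 h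
      have ht' : i ∉ t := fun h => by simpa using (Finset.mem_powersetCard.1 ht).1 h
      rw [← Finset.erase_insert hs', ← Finset.erase_insert ht', hst]
  · rw [Finset.disjoint_left]
    intro s hs hs2
    obtain ⟨t, _, rfl⟩ := Finset.mem_image.1 hs2
    have := (Finset.mem_powersetCard.1 hs).1 (Finset.mem_insert_self i t)
    simp at this

theorem esymmVec_trace (n k : ℕ) (a : Fin n → ℝ) :
    ∑ i, esymmVec n k (Function.update a i 0) = ((n : ℝ) - k) * esymmVec n k a := by
  simp_rw [esymmVec_update_eq]
  rw [Finset.sum_comm, esymmVec, Finset.mul_sum]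
  refine Finset.sum_congr rfl fun s hs => ?_
  have hc := (Finset.mem_powersetCard.1 hs).2
  rw [Finset.sum_ite]
  simp only [Finset.sum_const_zero, zero_add, Finset.sum_const, nsmul_eq_mul]
  congr 1
  have : (Finset.univ.filter (fun x => x ∉ s)) = sᶜ := by ext; simp
  rw [this, Finset.card_compl, hc, Fintype.card_fin, Nat.cast_sub]
  simpa [hc] using Finset.card_le_univ s

theorem esymmVec_euler (n k : ℕ) (a : Fin n → ℝ) :
    ∑ i, a i * esymmVec n k (Function.update a i 0) = ((k : ℝ) + 1) * esymmVec n (k + 1) a := by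
  have h1 := esymmVec_trace n (k + 1) a
  have h2 : ∑ i, esymmVec n (k + 1) (Function.update a i 0) =
      ∑ i : Fin n, (esymmVec n (k + 1) a - a i * esymmVec n k (Function.update a i 0)) :=
    Finset.sum_congr rfl fun i _ => by rw [esymmVec_split n k a i]; ring
  rw [h2, Finset.sum_sub_distrib] at h1
  simp at h1
  linarith

theorem esymmVec_smul (n k : ℕ) (c : ℝ) (a : Fin n → ℝ) :
    esymmVec n k (fun i => c * a i) = c ^ k * esymmVec n k a := by
  unfold esymmVec
  rw [Finset.mul_sum]
  refine Finset.sum_congr rfl fun s hs => ?_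
  rw [Finset.prod_mul_distrib, Finset.prod_const, (Finset.mem_powersetCard.1 hs).2]

/-! Newton's inequality -/

open Polynomial in
theorem splits_derivative_real (p : ℝ[X]) (hp : p.Splits) : (derivative p).Splits := by
  rw [splits_iff_card_roots] at hp ⊢
  have h1 := card_roots_le_derivative p
  have h2 := (derivative p).card_roots'
  have h3 := natDegree_derivative_le p
  by_cases h : p.natDegree = 0
  · rw [natDegree_eq_zero] at h
    obtain ⟨c, rfl⟩ := h
    simp
  · omega

open Polynomial in
theorem splits_laguerre (p : ℝ[X]) (hp : p.Splits) (x : ℝ) :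
    p.eval x * (derivative (derivative p)).eval x ≤ (derivative p).eval x ^ 2 := by
  have key : ∀ s : Multiset ℝ, ∀ q : ℝ[X], q = (s.map fun a => X - C a).prod →
      q.eval x * (derivative (derivative q)).eval x ≤ (derivative q).eval x ^ 2 := by
    intro s
    induction s using Multiset.induction with
    | empty => rintro q rfl; simp
    | cons r s ih =>
      intro q hq
      have := ih _ rfl
      set g := (s.map fun a => X - C a).prod with hg
      have hq : q = (X - C r) * g := by rw [hq, Multiset.map_cons, Multiset.prod_cons]
      rw [hq]
      simp only [derivative_mul, derivative_sub, derivative_X, derivative_C, eval_mul, eval_add,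
        eval_sub, eval_X, eval_C, sub_zero, one_mul, derivative_add]
      nlinarith [mul_le_mul_of_nonneg_left this (sq_nonneg (x - r)), sq_nonneg (eval x g)]
  have hs := Splits.eq_prod_roots hp
  have := key p.roots _ rfl
  set g := (p.roots.map fun a => X - C a).prod with hg
  rw [hs]
  simp only [derivative_C_mul, eval_mul, eval_C]
  nlinarith [mul_le_mul_of_nonneg_left this (sq_nonneg p.leadingCoeff)]

open Polynomial in
theorem newton_coeff (p : ℝ[X]) (hp : p.Splits) (m : ℕ) :
    p.coeff m * p.coeff (m + 2) ≤ p.coeff (m + 1) ^ 2 := by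
  have h1 : ∀ m, (derivative^[m] p).Splits := by
    intro m
    induction m with
    | zero => simpa
    | succ m ih => rw [Function.iterate_succ_apply']; exact splits_derivative_real _ ih
  have h2 := splits_laguerre _ (h1 m) 0
  rw [← Function.iterate_succ_apply' derivative, ← Function.iterate_succ_apply' derivative] at h2
  simp only [← coeff_zero_eq_eval_zero, coeff_iterate_derivative, zero_add, Nat.succ_eq_add_one,
    Nat.descFactorial_self, nsmul_eq_mul, Nat.factorial_succ, Nat.cast_mul] at h2
  by_contra hcon
  push Not at hcon
  have hf : (0 : ℝ) < (m.factorial : ℝ) ^ 2 * (m + 1) := by positivity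
  push_cast at h2
  have h3 : ((m.factorial : ℝ) ^ 2 * (m + 1)) * (p.coeff m * p.coeff (m + 2) * (m + 1 + 1)) ≤
     ((m.factorial : ℝ) ^ 2 * (m + 1)) * ((m + 1) * p.coeff (m + 1) ^ 2) := by
    nlinarith [h2]
  have h4 := le_of_mul_le_mul_left h3 hf
  have hm : (0 : ℝ) ≤ m := Nat.cast_nonneg m
  nlinarith [sq_nonneg (p.coeff (m + 1))]

open Polynomial in
theorem esymmVec_eq_coeff (n k : ℕ) (hk : k ≤ n) (a : Fin n → ℝ) :
    esymmVec n k a = (∏ i : Fin n, (X + C (a i))).coeff (n - k) := by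
  rw [Finset.prod_X_add_C_coeff _ _ (by simp)]
  simp [esymmVec, Nat.sub_sub_self hk]

theorem esymmVec_eq_zero (n k : ℕ) (hk : n < k) (a : Fin n → ℝ) : esymmVec n k a = 0 := by
  unfold esymmVec
  rw [Finset.powersetCard_eq_empty.2 (by simpa using hk)]; simp

open Polynomial in
theorem esymmVec_newton (n k : ℕ) (a : Fin n → ℝ) :
    esymmVec n k a * esymmVec n (k + 2) a ≤ esymmVec n (k + 1) a ^ 2 := by
  by_cases h : k + 2 ≤ n
  · rw [esymmVec_eq_coeff n k (by omega), esymmVec_eq_coeff n (k + 1) (by omega),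
      esymmVec_eq_coeff n (k + 2) (by omega)]
    have hs : (∏ i : Fin n, (X + C (a i))).Splits := by
      apply Splits.prod
      intro i _
      exact Splits.X_add_C _
    have := newton_coeff _ hs (n - (k + 2))
    rw [show n - (k + 2) + 2 = n - k by omega, show n - (k + 2) + 1 = n - (k + 1) by omega] at this
    linarith
  · rw [esymmVec_eq_zero n (k + 2) (by omega)]
    nlinarith [sq_nonneg (esymmVec n (k + 1) a)]

/-- Gårding cone for vectors. -/
def GamV (n k : ℕ) (a : Fin n → ℝ) : Prop := ∀ j, 1 ≤ j → j ≤ k → 0 < esymmVec n j a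

theorem GamV.del_pos {n k : ℕ} {a : Fin n → ℝ} (h : GamV n k a) (i : Fin n) :
    ∀ j, j + 1 ≤ k → 0 < esymmVec n j (Function.update a i 0) := by
  intro j
  induction j with
  | zero => intro _; rw [esymmVec_zero']; norm_num
  | succ j ih =>
    intro hj
    have h0 := ih (by omega)
    have h1 := h (j + 1) (by omega) (by omega)
    have h2 := h (j + 2) (by omega) (by omega)
    rw [esymmVec_split n j a i] at h1
    rw [esymmVec_split n (j + 1) a i] at h2
    have hN := esymmVec_newton n j (Function.update a i 0)
    by_contra hc
    push Not at hc
    set x := esymmVec n (j + 1) (Function.update a i 0)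
    set y := esymmVec n j (Function.update a i 0)
    set z := esymmVec n (j + 2) (Function.update a i 0)
    have e1 : a i * y * x ≤ -x * x := by nlinarith
    have e2 : 0 < (z + a i * x) * y := mul_pos h2 h0
    nlinarith

/-- Conditional ellipticity. -/
theorem GamV.cond_elliptic {n k : ℕ} (hk : 1 ≤ k) {a : Fin n → ℝ} (h : GamV n k a)
    (ξ : Fin n → ℝ) (hξ : ∑ i, a i * ξ i ^ 2 ≤ 0) :
    (∑ i, ξ i ^ 2) * ∑ i, esymmVec n (k - 1) (Function.update a i 0)
      ≤ n * ∑ i, ξ i ^ 2 * esymmVec n (k - 1) (Function.update a i 0) := by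
  have hS : 0 ≤ esymmVec n (k - 1) a := by
    rcases Nat.eq_or_lt_of_le hk with h1 | h1
    · subst h1; simp [esymmVec_zero']
    · exact (h (k - 1) (by omega) (by omega)).le
  have main : (∑ i, ξ i ^ 2) * esymmVec n (k - 1) a
      ≤ ∑ i, ξ i ^ 2 * esymmVec n (k - 1) (Function.update a i 0) := by
    obtain ⟨m, rfl⟩ : ∃ m, k = m + 1 := ⟨k - 1, by omega⟩
    simp only [Nat.add_sub_cancel] at *
    cases m with
    | zero => simp [esymmVec_zero']
    | succ m =>
      have e1 : ∑ i, ξ i ^ 2 * esymmVec n (m + 1) (Function.update a i 0)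
          = (∑ i, ξ i ^ 2) * esymmVec n (m + 1) a
            - ∑ i, ξ i ^ 2 * (a i * esymmVec n m (Function.update a i 0)) := by
        rw [Finset.sum_mul, ← Finset.sum_sub_distrib]
        refine Finset.sum_congr rfl fun i _ => ?_
        rw [esymmVec_split n m a i]; ring
      have e2 : ∑ i, ξ i ^ 2 * (a i * esymmVec n m (Function.update a i 0))
          ≤ esymmVec n m a * ∑ i, a i * ξ i ^ 2 := by
        rw [Finset.mul_sum]
        refine Finset.sum_le_sum fun i _ => ?_
        cases m with
        | zero => simp only [esymmVec_zero']; linarith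
        | succ m =>
          have hp := h.del_pos i m (by omega)
          rw [esymmVec_split n m a i]
          nlinarith [mul_nonneg (mul_nonneg (sq_nonneg (a i)) (sq_nonneg (ξ i))) hp.le]
      have e3 : 0 ≤ esymmVec n m a := by
        cases m with
        | zero => simp [esymmVec_zero']
        | succ m => exact (h (m + 1) (by omega) (by omega)).le
      nlinarith
  rw [esymmVec_trace]
  have hk0 : (0 : ℝ) ≤ ((k - 1 : ℕ) : ℝ) := Nat.cast_nonneg _
  have hx : 0 ≤ ∑ i, ξ i ^ 2 := Finset.sum_nonneg fun i _ => sq_nonneg _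
  have hn0 : (0 : ℝ) ≤ (n : ℝ) := Nat.cast_nonneg _
  calc (∑ i, ξ i ^ 2) * (((n : ℝ) - ((k - 1 : ℕ) : ℝ)) * esymmVec n (k - 1) a)
      ≤ n * ((∑ i, ξ i ^ 2) * esymmVec n (k - 1) a) := by
        nlinarith [mul_nonneg hk0 (mul_nonneg hx hS)]
    _ ≤ _ := mul_le_mul_of_nonneg_left main hn0

end

noncomputable section

/-! ### Matrices -/

theorem matSk_minors (n k : ℕ) (hk : k ≤ n) (M : Matrix (Fin n) (Fin n) ℝ) :
    matSk n k M = ∑ s ∈ Finset.powersetCard k (Finset.univ : Finset (Fin n)),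
      (M.submatrix (Subtype.val : s → Fin n) (Subtype.val : s → Fin n)).det := by
  have := Matrix.charpoly_coeff_eq_sum_minors M k (by simpa using hk)
  rw [Fintype.card_fin] at this
  rw [matSk, this, ← mul_assoc, ← mul_pow]
  simp

theorem matSk_diagonal (n k : ℕ) (hk : k ≤ n) (d : Fin n → ℝ) :
    matSk n k (Matrix.diagonal d) = esymmVec n k d := by
  rw [matSk_minors n k hk, esymmVec]
  refine Finset.sum_congr rfl fun s _ => ?_
  rw [Matrix.submatrix_diagonal _ _ Subtype.val_injective, Matrix.det_diagonal]
  exact Finset.prod_coe_sort s d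

theorem hasDerivAt_det_diag {m : Type*} [Fintype m] [DecidableEq m] (N : ℝ → Matrix m m ℝ)
    (P : Matrix m m ℝ) (d : m → ℝ) (t₀ : ℝ) (h0 : N t₀ = Matrix.diagonal d)
    (hN : ∀ i j, HasDerivAt (fun t => N t i j) (P i j) t₀) :
    HasDerivAt (fun t => (N t).det) (∑ i, (∏ j ∈ Finset.univ.erase i, d j) * P i i) t₀ := by
  have h1 : ∀ σ : Equiv.Perm m, HasDerivAt (fun t => ∏ i, N t (σ i) i)
      (∑ i, (∏ j ∈ Finset.univ.erase i, N t₀ (σ j) j) • P (σ i) i) t₀ := fun σ => by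
    have := HasDerivAt.fun_finsetProd (u := (Finset.univ : Finset m))
      (f := fun i t => N t (σ i) i) (f' := fun i => P (σ i) i) (x := t₀)
      (fun i _ => hN (σ i) i)
    exact this
  have h2 : HasDerivAt (fun t => ∑ σ : Equiv.Perm m, (Equiv.Perm.sign σ : ℤ) • ∏ i, N t (σ i) i)
      (∑ σ : Equiv.Perm m, (Equiv.Perm.sign σ : ℤ) •
        (∑ i, (∏ j ∈ Finset.univ.erase i, N t₀ (σ j) j) • P (σ i) i)) t₀ := by
    apply HasDerivAt.fun_sum
    intro σ _
    simp only [zsmul_eq_mul]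
    exact (h1 σ).const_mul _
  have h3 : (fun t => (N t).det) =
      (fun t => ∑ σ : Equiv.Perm m, (Equiv.Perm.sign σ : ℤ) • ∏ i, N t (σ i) i) := by
    funext t; rw [Matrix.det_apply]; rfl
  rw [h3]
  convert h2 using 1
  rw [Finset.sum_eq_single (1 : Equiv.Perm m)]
  · simp [h0]
  · intro σ _ hσ
    rw [Finset.sum_eq_zero, smul_zero]
    intro i _
    obtain ⟨j, hj⟩ : ∃ j, σ j ≠ j := by
      by_contra hc; push Not at hc; exact hσ (Equiv.ext hc)
    obtain ⟨l, hl, hli⟩ : ∃ l, σ l ≠ l ∧ l ≠ i := by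
      by_cases hji : j = i
      · refine ⟨σ j, fun h => hj (σ.injective h), ?_⟩
        rw [← hji]; exact hj
      · exact ⟨j, hj, hji⟩
    rw [Finset.prod_eq_zero (i := l)]
    · simp
    · simp [hli]
    · rw [h0, Matrix.diagonal_apply_ne _ hl]
  · simp

theorem esymmVec_del_eq (n k : ℕ) (a : Fin n → ℝ) (i : Fin n) :
    esymmVec n k (Function.update a i 0)
      = ∑ s ∈ Finset.powersetCard (k + 1) (Finset.univ : Finset (Fin n)),
          if i ∈ s then ∏ j ∈ s.erase i, a j else 0 := by
  have h := esymmVec_split n k (Function.update a i 1) i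
  simp only [Function.update_idem, Function.update_self, one_mul] at h
  rw [esymmVec_update_eq n (k + 1)] at h
  have h' : esymmVec n k (Function.update a i 0) = esymmVec n (k + 1) (Function.update a i 1)
     - ∑ s ∈ Finset.powersetCard (k + 1) (Finset.univ : Finset (Fin n)),
          if i ∈ s then 0 else ∏ j ∈ s, a j := by linarith
  rw [h', esymmVec, ← Finset.sum_sub_distrib]
  refine Finset.sum_congr rfl fun s _ => ?_
  split_ifs with hi
  · rw [← Finset.mul_prod_erase s _ hi]
    simp only [Function.update_self, one_mul, sub_zero]
    refine Finset.prod_congr rfl fun j hj => ?_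
    rw [Function.update_of_ne (Finset.ne_of_mem_erase hj)]
  · rw [sub_eq_zero]
    refine Finset.prod_congr rfl fun j hj => ?_
    rw [Function.update_of_ne]
    rintro rfl; exact hi hj

theorem hasDerivAt_matSk_diag (n k : ℕ) (hk : k + 1 ≤ n) (N : ℝ → Matrix (Fin n) (Fin n) ℝ)
    (P : Matrix (Fin n) (Fin n) ℝ) (d : Fin n → ℝ) (t₀ : ℝ) (h0 : N t₀ = Matrix.diagonal d)
    (hN : ∀ i j, HasDerivAt (fun t => N t i j) (P i j) t₀) :
    HasDerivAt (fun t => matSk n (k + 1) (N t))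
      (∑ i, esymmVec n k (Function.update d i 0) * P i i) t₀ := by
  simp_rw [matSk_minors n (k + 1) hk]
  have h1 : HasDerivAt (fun t => ∑ s ∈ Finset.powersetCard (k + 1) (Finset.univ : Finset (Fin n)),
      ((N t).submatrix (Subtype.val : s → Fin n) (Subtype.val : s → Fin n)).det)
      (∑ s ∈ Finset.powersetCard (k + 1) (Finset.univ : Finset (Fin n)),
        ∑ i : s, (∏ j ∈ Finset.univ.erase i, d j) * P i i) t₀ := by
    apply HasDerivAt.fun_sum
    intro s _
    apply hasDerivAt_det_diag (fun t => (N t).submatrix (Subtype.val : s → Fin n) Subtype.val)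
      (P.submatrix (Subtype.val : s → Fin n) Subtype.val) (fun i => d i)
    · rw [h0, Matrix.submatrix_diagonal _ _ Subtype.val_injective]; rfl
    · intro i j
      exact hN i j
  convert h1 using 1
  simp_rw [esymmVec_del_eq, Finset.sum_mul]
  rw [Finset.sum_comm]
  refine Finset.sum_congr rfl fun s _ => ?_
  have h2 : ∀ i : s, (∏ j ∈ Finset.univ.erase i, d j) = ∏ j ∈ s.erase (i : Fin n), d j := by
    intro i
    refine Finset.prod_bij (fun j _ => (j : Fin n)) ?_ ?_ ?_ ?_
    · intro j hj
      simp only [Finset.mem_erase, Finset.mem_univ, and_true] at hj ⊢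
      exact ⟨fun h => hj (Subtype.ext h), j.2⟩
    · intro j _ l _ h; exact Subtype.ext h
    · intro j hj
      simp only [Finset.mem_erase] at hj
      exact ⟨⟨j, hj.2⟩, by simp [Subtype.ext_iff, hj.1], rfl⟩
    · intros; rfl
  simp_rw [h2]
  rw [Finset.sum_coe_sort s (fun i => (∏ j ∈ s.erase i, d j) * P i i)]
  simp_rw [ite_mul, zero_mul]
  rw [Finset.sum_ite_mem, Finset.univ_inter]

/-- Quadratic form of a matrix. -/
def qf (n : ℕ) (P : Matrix (Fin n) (Fin n) ℝ) (v : Euc n) : ℝ := ∑ i, ∑ j, v i * P i j * v j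

theorem symm_diag (n : ℕ) (M : Matrix (Fin n) (Fin n) ℝ) (hM : M.IsSymm) :
    ∃ (v : OrthonormalBasis (Fin n) ℝ (Euc n)) (d : Fin n → ℝ),
      (∀ ξ : Euc n, qf n M ξ = ∑ i, d i * (inner ℝ (v i) ξ) ^ 2) ∧
      (∀ i, qf n M (v i) = d i) ∧
      (∀ k, k ≤ n → matSk n k M = esymmVec n k d) ∧
      (∀ k, k + 1 ≤ n → ∀ (N : ℝ → Matrix (Fin n) (Fin n) ℝ)
        (P : Matrix (Fin n) (Fin n) ℝ) (t₀ : ℝ), N t₀ = M →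
        (∀ i j, HasDerivAt (fun t => N t i j) (P i j) t₀) →
        HasDerivAt (fun t => matSk n (k + 1) (N t))
          (∑ i, esymmVec n k (Function.update d i 0) * qf n P (v i)) t₀) := by
  have hH : M.IsHermitian := by
    rw [Matrix.IsHermitian, Matrix.conjTranspose_eq_transpose_of_trivial]; exact hM
  set U : Matrix (Fin n) (Fin n) ℝ := (hH.eigenvectorUnitary : Matrix (Fin n) (Fin n) ℝ) with hU
  have hUU : star U * U = 1 := Unitary.coe_star_mul_self _
  have hUU' : U * star U = 1 := Unitary.coe_mul_star_self _
  have hUe : ∀ i j, U i j = hH.eigenvectorBasis j i := fun i j => rfl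
  have hstar : ∀ i j, (star U) i j = U j i := fun i j => by simp [Matrix.star_apply]
  have hD : star U * M * U = Matrix.diagonal hH.eigenvalues := by
    have := hH.conjStarAlgAut_star_eigenvectorUnitary
    rw [Unitary.conjStarAlgAut_star_apply] at this
    simpa using this
  have hsim : ∀ k (N : Matrix (Fin n) (Fin n) ℝ), matSk n k (star U * N * U) = matSk n k N := by
    intro k N
    rw [matSk, matSk, Matrix.charpoly_mul_comm, ← mul_assoc, hUU', one_mul]
  have hqf : ∀ (N : Matrix (Fin n) (Fin n) ℝ) i, (star U * N * U) i i
      = qf n N (hH.eigenvectorBasis i) := by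
    intro N i
    simp only [Matrix.mul_apply, qf, hstar, hUe, Finset.sum_mul]
    rw [Finset.sum_comm]
  refine ⟨hH.eigenvectorBasis, hH.eigenvalues, ?_, ?_, ?_, ?_⟩
  · intro ξ
    have hM2 : M = U * Matrix.diagonal hH.eigenvalues * star U := by
      rw [← hD, ← mul_assoc, ← mul_assoc, hUU', one_mul, mul_assoc, hUU', mul_one]
    have hentry : ∀ p q, M p q = ∑ i, U p i * hH.eigenvalues i * U q i := by
      intro p q
      conv_lhs => rw [hM2]
      rw [Matrix.mul_apply]
      refine Finset.sum_congr rfl fun i _ => ?_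
      rw [Matrix.mul_diagonal, hstar]
    have hin : ∀ i, inner ℝ (hH.eigenvectorBasis i) ξ = ∑ p, U p i * ξ p := by
      intro i
      simp [PiLp.inner_apply, hUe, mul_comm]
    simp only [qf, hentry, hin, sq, Finset.mul_sum, Finset.sum_mul]
    rw [Finset.sum_congr rfl (fun p _ => Finset.sum_comm), Finset.sum_comm]
    refine Finset.sum_congr rfl fun i _ => ?_
    rw [Finset.sum_comm]
    refine Finset.sum_congr rfl fun p _ => Finset.sum_congr rfl fun q _ => ?_
    ring
  · intro i
    rw [← hqf, hD, Matrix.diagonal_apply_eq]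
  · intro k hk
    rw [← hsim k M, hD, matSk_diagonal n k hk]
  · intro k hk N P t₀ h0 hN
    have := hasDerivAt_matSk_diag n k hk (fun t => star U * N t * U) (star U * P * U)
      hH.eigenvalues t₀ (by simp only [h0, hD]) (by
        intro i j
        simp only [Matrix.mul_apply]
        apply HasDerivAt.fun_sum
        intro q _
        apply HasDerivAt.mul_const
        apply HasDerivAt.fun_sum
        intro p _
        exact (hN p q).const_mul _)
    simp only [hsim, hqf] at this
    exact this

/-- Gårding cone for matrices -/
def GamM (n k : ℕ) (M : Matrix (Fin n) (Fin n) ℝ) : Prop :=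
  ∀ j : ℕ, 1 ≤ j → j ≤ k → 0 < matSk n j M

/-- Monotonicity of `S_k` in the Gårding cone. -/
theorem matSk_mono (n k : ℕ) (hk1 : 1 ≤ k) (hkn : k ≤ n) (M P : Matrix (Fin n) (Fin n) ℝ)
    (hM : M.IsSymm) (hP : P.IsSymm) (hG : GamM n k M) (hP0 : ∀ v, 0 ≤ qf n P v) :
    matSk n k M ≤ matSk n k (M + P) := by
  set N : ℝ → Matrix (Fin n) (Fin n) ℝ := fun t => M + t • P with hN
  have hNs : ∀ t, (N t).IsSymm := fun t => hM.add (hP.smul t)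
  have hNd : ∀ t i j, HasDerivAt (fun t => N t i j) (P i j) t := by
    intro t i j
    have := ((hasDerivAt_id t).mul_const (P i j)).const_add (M i j)
    simpa [hN] using this
  have hder : ∀ t j, 1 ≤ j → j ≤ k → ∃ D, HasDerivAt (fun t => matSk n j (N t)) D t ∧
      (GamM n k (N t) → 0 ≤ D) := by
    intro t j hj1 hjk
    obtain ⟨v, d, _, _, h3, h4⟩ := symm_diag n (N t) (hNs t)
    obtain ⟨m, rfl⟩ : ∃ m, j = m + 1 := ⟨j - 1, by omega⟩
    refine ⟨_, h4 m (by omega) N P t rfl (hNd t), fun hg => ?_⟩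
    refine Finset.sum_nonneg fun i _ => mul_nonneg ?_ (hP0 _)
    have hgv : GamV n k d := fun j h1 h2 => by
      rw [← h3 j (by omega)]; exact hg j h1 h2
    exact (hgv.del_pos i m (by omega)).le
  have hcont : ∀ j, 1 ≤ j → j ≤ k → Continuous (fun t => matSk n j (N t)) := fun j h1 h2 =>
    continuous_iff_continuousAt.2 fun t => (hder t j h1 h2).choose_spec.1.continuousAt
  -- the set of good t
  have hmono : ∀ t, 0 ≤ t → (∀ s ∈ Set.Ico 0 t, GamM n k (N s)) →
      ∀ j, 1 ≤ j → j ≤ k → matSk n j (N 0) ≤ matSk n j (N t) := by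
    intro t ht hs j h1 h2
    have : MonotoneOn (fun t => matSk n j (N t)) (Set.Icc 0 t) := by
      apply monotoneOn_of_deriv_nonneg (convex_Icc 0 t) (hcont j h1 h2).continuousOn
      · intro s _
        exact (hder s j h1 h2).choose_spec.1.differentiableAt.differentiableWithinAt
      · intro s hs'
        rw [interior_Icc] at hs'
        obtain ⟨D, hD1, hD2⟩ := hder s j h1 h2
        rw [hD1.deriv]
        exact hD2 (hs s ⟨hs'.1.le, hs'.2⟩)
    exact this (Set.left_mem_Icc.2 ht) (Set.right_mem_Icc.2 ht) ht
  have hN0 : N 0 = M := by simp [hN]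
  have hall : ∀ t ∈ Set.Icc (0 : ℝ) 1, ∀ s ∈ Set.Icc 0 t, GamM n k (N s) := by
    by_contra hcon
    push Not at hcon
    obtain ⟨t, ht, s, hs, hbad⟩ := hcon
    set B : Set ℝ := {r | 0 ≤ r ∧ ¬ GamM n k (N r)} with hB
    have hBne : B.Nonempty := ⟨s, hs.1, hbad⟩
    have hBbd : BddBelow B := ⟨0, fun r hr => hr.1⟩
    have hclosed : IsClosed B := by
      have : B = Set.Ici 0 ∩ ⋃ j ∈ Finset.Icc 1 k, {r | matSk n j (N r) ≤ 0} := by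
        ext r
        simp only [hB, GamM, Set.mem_ofPred_eq, Set.mem_inter_iff, Set.mem_Ici, Set.mem_iUnion,
          Finset.mem_Icc]
        push Not
        simp only [exists_prop, and_assoc]
      rw [this]
      apply isClosed_Ici.inter
      apply Set.Finite.isClosed_biUnion (Finset.finite_toSet _)
      intro j hj
      simp only [Finset.coe_Icc, Set.mem_Icc] at hj
      exact isClosed_le (hcont j hj.1 hj.2) continuous_const
    have hmem := hclosed.csInf_mem hBne hBbd
    apply hmem.2
    intro j h1 h2
    have := hmono (sInf B) hmem.1 (by
      intro r hr
      by_contra hc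
      exact absurd (csInf_le hBbd (⟨hr.1, hc⟩ : r ∈ B)) (not_le.2 hr.2)) j h1 h2
    rw [hN0] at this
    exact lt_of_lt_of_le (hG j h1 h2) this
  have := hmono 1 zero_le_one (fun s hs => hall 1 (by simp) s ⟨hs.1, hs.2.le⟩) k hk1 le_rfl
  rw [hN0] at this
  simpa [hN] using this

end

noncomputable section

theorem det_diag_rank_one {m : Type*} [Fintype m] [DecidableEq m] (d w : m → ℝ) (c : ℝ)
    (hd : ∀ i, d i ≠ 0) :
    (Matrix.diagonal d + c • Matrix.vecMulVec w w).det
      = ∏ i, d i + c * ∑ i, w i ^ 2 * ∏ j ∈ Finset.univ.erase i, d j := by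
  have hu : IsUnit (Matrix.diagonal d).det := by
    rw [Matrix.det_diagonal, isUnit_iff_ne_zero]
    exact Finset.prod_ne_zero_iff.2 fun i _ => hd i
  have h := Matrix.det_add_replicateCol_mul_replicateRow (ι := Unit) hu (c • w) w
  have e1 : Matrix.replicateCol Unit (c • w) * Matrix.replicateRow Unit w
      = c • Matrix.vecMulVec w w := by
    ext i j
    simp [Matrix.mul_apply, Matrix.vecMulVec_apply, mul_assoc]
  rw [e1] at h
  rw [h, Matrix.det_diagonal, Matrix.det_unique]
  have hinv : (Matrix.diagonal d)⁻¹ = Matrix.diagonal (fun i => (d i)⁻¹) := by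
    apply Matrix.inv_eq_right_inv
    rw [Matrix.diagonal_mul_diagonal]
    simp [hd]
  rw [hinv]
  simp only [Matrix.add_apply, Matrix.one_apply_eq, Matrix.mul_apply, Matrix.replicateRow_apply,
    Matrix.replicateCol_apply, Matrix.diagonal_apply, mul_ite, mul_zero, Finset.sum_ite_eq',
    Finset.sum_ite_eq, Finset.mem_univ, if_true, Pi.smul_apply, smul_eq_mul]
  rw [mul_add, mul_one, Finset.mul_sum, Finset.mul_sum]
  congr 1
  refine Finset.sum_congr rfl fun i _ => ?_
  rw [← Finset.mul_prod_erase Finset.univ d (Finset.mem_univ i)]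
  have := hd i
  field_simp

theorem matSk_rank_one (n k : ℕ) (hk : k + 1 ≤ n) (d w : Fin n → ℝ) (c : ℝ)
    (hd : ∀ i, d i ≠ 0) :
    matSk n (k + 1) (Matrix.diagonal d + c • Matrix.vecMulVec w w)
      = esymmVec n (k + 1) d + c * ∑ i, w i ^ 2 * esymmVec n k (Function.update d i 0) := by
  rw [matSk_minors n (k + 1) hk]
  have h1 : ∀ s ∈ Finset.powersetCard (k + 1) (Finset.univ : Finset (Fin n)),
      ((Matrix.diagonal d + c • Matrix.vecMulVec w w).submatrix
        (Subtype.val : s → Fin n) (Subtype.val : s → Fin n)).det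
      = ∏ i ∈ s, d i + c * ∑ i, w i ^ 2 * (if i ∈ s then ∏ j ∈ s.erase i, d j else 0) := by
    intro s _
    have e : (Matrix.diagonal d + c • Matrix.vecMulVec w w).submatrix
        (Subtype.val : s → Fin n) (Subtype.val : s → Fin n)
        = Matrix.diagonal (fun i : s => d i)
          + c • Matrix.vecMulVec (fun i : s => w i) (fun i : s => w i) := by
      ext i j
      simp only [Matrix.submatrix_apply, Matrix.add_apply, Matrix.smul_apply,
        Matrix.vecMulVec_apply, Matrix.diagonal_apply]
      by_cases h : i = j
      · subst h; simp
      · rw [if_neg h, if_neg (fun h' => h (Subtype.ext h'))]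
    have e2 := det_diag_rank_one (fun i : s => d i) (fun i : s => w i) c (fun i => hd i)
    rw [e]
    rw [Finset.prod_coe_sort s d] at e2
    refine Eq.trans (by convert e2) ?_
    congr 2
    have h2 : ∀ i : s, (∏ j ∈ Finset.univ.erase i, d j) = ∏ j ∈ s.erase (i : Fin n), d j := by
      intro i
      refine Finset.prod_bij (fun j _ => (j : Fin n)) ?_ ?_ ?_ ?_
      · intro j hj
        simp only [Finset.mem_erase, Finset.mem_univ, and_true] at hj ⊢
        exact ⟨fun h => hj (Subtype.ext h), j.2⟩
      · intro j _ l _ h; exact Subtype.ext h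
      · intro j hj
        simp only [Finset.mem_erase] at hj
        exact ⟨⟨j, hj.2⟩, by simp [Subtype.ext_iff, hj.1], rfl⟩
      · intros; rfl
    simp_rw [h2]
    rw [Finset.sum_coe_sort s (fun i => w i ^ 2 * (∏ j ∈ s.erase i, d j))]
    simp_rw [mul_ite, mul_zero]
    rw [Finset.sum_ite_mem, Finset.univ_inter]
  rw [Finset.sum_congr rfl h1, Finset.sum_add_distrib, ← Finset.mul_sum, Finset.sum_comm]
  congr 2
  refine Finset.sum_congr rfl fun i _ => ?_
  rw [← Finset.mul_sum, ← esymmVec_del_eq]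

/-- The model Hessian `p A + q (A y)(A y)ᵀ`. -/
def modelHess (n : ℕ) (a : Fin n → ℝ) (y : Euc n) (p p' : ℝ) : Matrix (Fin n) (Fin n) ℝ :=
  Matrix.diagonal (fun i => p * a i)
    + p' • Matrix.vecMulVec (fun i => a i * y i) (fun i => a i * y i)

theorem modelHess_symm (n : ℕ) (a : Fin n → ℝ) (y : Euc n) (p p' : ℝ) :
    (modelHess n a y p p').IsSymm := by
  apply Matrix.IsSymm.ext
  intro i j
  simp only [modelHess, Matrix.add_apply, Matrix.smul_apply, Matrix.vecMulVec_apply,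
    Matrix.diagonal_apply, smul_eq_mul]
  by_cases h : i = j
  · subst h; rfl
  · rw [if_neg h, if_neg (Ne.symm h)]; ring

theorem qf_modelHess (n : ℕ) (a : Fin n → ℝ) (y v : Euc n) (p p' : ℝ) :
    qf n (modelHess n a y p p') v = p * ∑ i, a i * v i ^ 2 + p' * (∑ i, a i * y i * v i) ^ 2 := by
  simp only [qf, modelHess, Matrix.add_apply, Matrix.smul_apply, Matrix.vecMulVec_apply,
    Matrix.diagonal_apply, smul_eq_mul, mul_add, add_mul, Finset.sum_add_distrib]
  congr 1
  · rw [Finset.mul_sum]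
    refine Finset.sum_congr rfl fun i _ => ?_
    simp only [mul_ite, mul_zero, ite_mul, zero_mul, Finset.sum_ite_eq, Finset.mem_univ, if_true]
    ring
  · rw [sq, Finset.sum_mul_sum, Finset.mul_sum]
    refine Finset.sum_congr rfl fun i _ => ?_
    rw [Finset.mul_sum]
    refine Finset.sum_congr rfl fun j _ => ?_
    ring

theorem update_mul_eq (n : ℕ) (a : Fin n → ℝ) (p : ℝ) (i : Fin n) :
    Function.update (fun i => p * a i) i 0 = fun j => p * Function.update a i 0 j := by
  funext j
  by_cases h : j = i
  · subst h; simp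
  · simp [Function.update_of_ne h]

theorem matSk_modelHess (n k : ℕ) (hk : k + 1 ≤ n) (a : Fin n → ℝ) (ha : ∀ i, 0 < a i)
    (y : Euc n) (p p' : ℝ) (hp : 0 < p) :
    matSk n (k + 1) (modelHess n a y p p') = p ^ k * (p * esymmVec n (k + 1) a
      + p' * ∑ i, (a i * y i) ^ 2 * esymmVec n k (Function.update a i 0)) := by
  rw [modelHess, matSk_rank_one n k hk _ _ _ (fun i => (mul_pos hp (ha i)).ne'), esymmVec_smul]
  simp_rw [update_mul_eq, esymmVec_smul]
  rw [mul_add, pow_succ, mul_assoc]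
  congr 1
  rw [Finset.mul_sum, Finset.mul_sum, Finset.mul_sum]
  refine Finset.sum_congr rfl fun i _ => ?_
  ring

theorem esymmVec_pos (n k : ℕ) (hk : k ≤ n) (a : Fin n → ℝ) (ha : ∀ i, 0 < a i) :
    0 < esymmVec n k a := by
  unfold esymmVec
  apply Finset.sum_pos
  · intro s _; exact Finset.prod_pos fun i _ => ha i
  · rw [Finset.powersetCard_nonempty]; simpa using hk

theorem esymmVec_nonneg (n k : ℕ) (a : Fin n → ℝ) (ha : ∀ i, 0 ≤ a i) :
    0 ≤ esymmVec n k a :=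
  Finset.sum_nonneg fun _ _ => Finset.prod_nonneg fun i _ => ha i

theorem update_nonneg (n : ℕ) (a : Fin n → ℝ) (ha : ∀ i, 0 < a i) (i : Fin n) :
    ∀ j, 0 ≤ Function.update a i 0 j := by
  intro j
  by_cases h : j = i
  · subst h; simp
  · simp [Function.update_of_ne h, (ha j).le]

theorem ratio_mono (n : ℕ) (a : Fin n → ℝ) (ha : ∀ i, 0 < a i) (i : Fin n) (j l : ℕ)
    (hl : j + l + 1 ≤ n) :
    esymmVec n j (Function.update a i 0) * esymmVec n (j + l + 1) a
      ≤ esymmVec n (j + l) (Function.update a i 0) * esymmVec n (j + 1) a := by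
  induction l with
  | zero => simp
  | succ l ih =>
    have ih := ih (by omega)
    have hN := esymmVec_newton n (j + l) (Function.update a i 0)
    have step : esymmVec n (j + l) (Function.update a i 0) * esymmVec n (j + l + 2) a
        ≤ esymmVec n (j + l + 1) (Function.update a i 0) * esymmVec n (j + l + 1) a := by
      rw [esymmVec_split n (j + l + 1) a i, esymmVec_split n (j + l) a i]
      nlinarith
    have p1 := esymmVec_pos n (j + l + 1) (by omega) a ha
    have p2 := esymmVec_pos n (j + 1) (by omega) a ha
    have p3 := esymmVec_pos n (j + l + 2) (by omega) a ha
    rw [show j + (l + 1) + 1 = j + l + 2 by ring, show j + (l + 1) = j + l + 1 by ring]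
    have q1 := mul_le_mul_of_nonneg_right ih p3.le
    have q2 := mul_le_mul_of_nonneg_right step p2.le
    refine le_of_mul_le_mul_right ?_ p1
    nlinarith

theorem le_hkfun (n k : ℕ) (a : Fin n → ℝ) (i : Fin n) :
    esymmVec n (k - 1) (Function.update a i 0) * a i ≤ hkfun n k a :=
  le_ciSup (f := fun i : Fin n => esymmVec n (k - 1) (Function.update a i 0) * a i)
    (Set.finite_range _).bddAbove i

theorem hk_bound (n k : ℕ) (hk1 : 1 ≤ k) (hkn : k ≤ n) (a : Fin n → ℝ) (ha : ∀ i, 0 < a i)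
    (hS : esymmVec n k a = 1) (j : ℕ) (hj : j + 1 ≤ k) (i : Fin n) :
    a i * esymmVec n j (Function.update a i 0) ≤ hkfun n k a * esymmVec n (j + 1) a := by
  have h := ratio_mono n a ha i j (k - 1 - j) (by omega)
  rw [show j + (k - 1 - j) + 1 = k by omega, show j + (k - 1 - j) = k - 1 by omega, hS,
    mul_one] at h
  have h2 := le_hkfun n k a i
  have p2 := esymmVec_pos n (j + 1) (by omega) a ha
  have q1 := mul_le_mul_of_nonneg_left h (ha i).le
  have q2 := mul_le_mul_of_nonneg_right h2 p2.le
  nlinarith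

/-- Lower bound for `S_{j+1}` of the model Hessian. -/
theorem modelHess_lower (n k : ℕ) (hk1 : 1 ≤ k) (hkn : k ≤ n) (a : Fin n → ℝ) (ha : ∀ i, 0 < a i)
    (hS : esymmVec n k a = 1) (y : Euc n) (p p' : ℝ) (hp : 0 < p) (hp' : p' ≤ 0) (j : ℕ)
    (hj : j + 1 ≤ k) :
    p ^ j * (esymmVec n (j + 1) a * (p + p' * (hkfun n k a * ∑ i, a i * y i ^ 2)))
      ≤ matSk n (j + 1) (modelHess n a y p p') := by
  rw [matSk_modelHess n j (by omega) a ha y p p' hp]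
  refine mul_le_mul_of_nonneg_left ?_ (pow_pos hp j).le
  have h : ∑ i, (a i * y i) ^ 2 * esymmVec n j (Function.update a i 0)
      ≤ esymmVec n (j + 1) a * (hkfun n k a * ∑ i, a i * y i ^ 2) := by
    rw [Finset.mul_sum, Finset.mul_sum]
    refine Finset.sum_le_sum fun i _ => ?_
    have := hk_bound n k hk1 hkn a ha hS j hj i
    have q := mul_le_mul_of_nonneg_left this (mul_nonneg (ha i).le (sq_nonneg (y i)))
    nlinarith
  nlinarith [mul_le_mul_of_nonpos_left h hp']

/-- Radial case: `S_k` of the Hessian of the fundamental solution vanishes. -/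
theorem modelHess_radial (n k : ℕ) (hk1 : 1 ≤ k) (hkn : k ≤ n) (y : Euc n) (p p' : ℝ)
    (hp : 0 < p) (hrel : p + p' * ((2 * k / n : ℝ) * ∑ i, y i ^ 2) = 0) :
    matSk n k (modelHess n (fun _ => 2) y p p') = 0 := by
  obtain ⟨m, rfl⟩ : ∃ m, k = m + 1 := ⟨k - 1, by omega⟩
  rw [matSk_modelHess n m hkn _ (fun _ => by norm_num) y p p' hp]
  set a : Fin n → ℝ := fun _ => 2 with ha
  have hE := esymmVec_euler n m a
  have hi0 : 0 < n := by omega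
  set i0 : Fin n := ⟨0, hi0⟩
  have hc : ∀ i, esymmVec n m (Function.update a i 0) = esymmVec n m (Function.update a i0 0) := by
    intro i
    have h1 : Function.update a i 0 = Function.update a i0 0 ∘ (Equiv.swap i i0) := by
      funext j
      simp only [Function.comp_apply, Function.update_apply, ha]
      by_cases hj : j = i
      · subst hj; simp
      · rw [if_neg hj, if_neg]
        intro h
        apply hj
        rw [Equiv.swap_apply_eq_iff] at h
        simpa using h
    rw [h1]
    have h3 : ∀ b : Fin n → ℝ, esymmVec n m b = (Finset.univ.val.map b).esymm m := by
      intro b; rw [Finset.esymm_map_val]; rfl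
    rw [h3, h3, ← Multiset.map_map]
    congr 2
    exact Multiset.map_univ_val_equiv (Equiv.swap i i0)
  simp_rw [hc] at hE ⊢
  set c := esymmVec n m (Function.update a i0 0)
  have hE' : (n : ℝ) * (2 * c) = ((m : ℝ) + 1) * esymmVec n (m + 1) a := by
    rw [← hE]; simp [ha]
  have hn0 : (n : ℝ) ≠ 0 := by positivity
  have hsum : ∑ i, (a i * y i) ^ 2 * c = 4 * c * ∑ i, y i ^ 2 := by
    rw [Finset.mul_sum]
    refine Finset.sum_congr rfl fun i _ => ?_
    simp only [ha]; ring
  rw [hsum]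
  push_cast at hrel
  have : c = ((m : ℝ) + 1) * esymmVec n (m + 1) a / (2 * n) := by
    field_simp; linarith
  rw [this]
  have e : p * esymmVec n (m + 1) a +
      p' * (4 * (((m : ℝ) + 1) * esymmVec n (m + 1) a / (2 * n)) * ∑ i, y i ^ 2)
      = esymmVec n (m + 1) a * (p + p' * ((2 * ((m : ℝ) + 1) / n : ℝ) * ∑ i, y i ^ 2)) := by
    field_simp
    ring
  rw [e, hrel]; simp

end

noncomputable section

/-- `f` has derivative `p` and second derivative `q` at `0`. -/
def HD2 (f : ℝ → ℝ) (p q : ℝ) : Prop :=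
  ∃ f' : ℝ → ℝ, (∀ᶠ t in 𝓝 (0 : ℝ), HasDerivAt f (f' t) t) ∧ f' 0 = p ∧ HasDerivAt f' q 0

theorem HD2.hasDerivAt {f : ℝ → ℝ} {p q : ℝ} (h : HD2 f p q) : HasDerivAt f p 0 := by
  obtain ⟨f', h1, h2, _⟩ := h
  have := h1.self_of_nhds
  rwa [h2] at this

theorem HD2.congr' {f : ℝ → ℝ} {p q p' q' : ℝ} (h : HD2 f p q) (h1 : p = p') (h2 : q = q') :
    HD2 f p' q' := by subst h1; subst h2; exact h

theorem HD2.const (c : ℝ) : HD2 (fun _ => c) 0 0 :=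
  ⟨fun _ => 0, Eventually.of_forall fun t => hasDerivAt_const t c, rfl, hasDerivAt_const 0 0⟩

theorem HD2.add {f g : ℝ → ℝ} {p q p' q' : ℝ} (hf : HD2 f p q) (hg : HD2 g p' q') :
    HD2 (fun t => f t + g t) (p + p') (q + q') := by
  obtain ⟨f', h1, h2, h3⟩ := hf
  obtain ⟨g', k1, k2, k3⟩ := hg
  refine ⟨fun t => f' t + g' t, ?_, by simp [h2, k2], h3.fun_add k3⟩
  filter_upwards [h1, k1] with t a b using a.fun_add b

theorem HD2.mul {f g : ℝ → ℝ} {p q p' q' : ℝ} (hf : HD2 f p q) (hg : HD2 g p' q') :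
    HD2 (fun t => f t * g t) (p * g 0 + f 0 * p') (q * g 0 + 2 * (p * p') + f 0 * q') := by
  have hf0 := hf.hasDerivAt
  have hg0 := hg.hasDerivAt
  obtain ⟨f', h1, h2, h3⟩ := hf
  obtain ⟨g', k1, k2, k3⟩ := hg
  refine ⟨fun t => f' t * g t + f t * g' t, ?_, by simp [h2, k2], ?_⟩
  · filter_upwards [h1, k1] with t a b using a.fun_mul b
  · refine ((h3.fun_mul hg0).fun_add (hf0.fun_mul k3)).congr_deriv ?_
    rw [h2, k2]; ring

theorem HD2.const_mul {f : ℝ → ℝ} {p q : ℝ} (c : ℝ) (hf : HD2 f p q) :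
    HD2 (fun t => c * f t) (c * p) (c * q) :=
  ((HD2.const c).mul hf).congr' (by ring) (by ring)

theorem HD2.sub {f g : ℝ → ℝ} {p q p' q' : ℝ} (hf : HD2 f p q) (hg : HD2 g p' q') :
    HD2 (fun t => f t - g t) (p - p') (q - q') := by
  have := hf.add (hg.const_mul (-1))
  refine HD2.congr' (f := fun t => f t - g t) (p := p + -1 * p') (q := q + -1 * q') ?_
    (by ring) (by ring)
  convert this using 2
  ring

theorem HD2.comp {f G G' : ℝ → ℝ} {p q G'' : ℝ} (hf : HD2 f p q)
    (hG : ∀ᶠ z in 𝓝 (f 0), HasDerivAt G (G' z) z) (hG' : HasDerivAt G' G'' (f 0)) :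
    HD2 (fun t => G (f t)) (G' (f 0) * p) (G'' * p ^ 2 + G' (f 0) * q) := by
  have hf0 := hf.hasDerivAt
  obtain ⟨f', h1, h2, h3⟩ := hf
  refine ⟨fun t => G' (f t) * f' t, ?_, by simp [h2], ?_⟩
  · filter_upwards [h1, hf0.continuousAt.eventually hG] with t a b
    exact b.comp t a
  · refine ((hG'.comp 0 hf0).fun_mul h3).congr_deriv ?_
    simp only [Function.comp, h2]; ring

theorem HD2.min {f : ℝ → ℝ} {p q : ℝ} (hf : HD2 f p q) (h : IsLocalMin f 0) :
    p = 0 ∧ 0 ≤ q := by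
  have hp : p = 0 := h.hasDerivAt_eq_zero hf.hasDerivAt
  refine ⟨hp, ?_⟩
  by_contra hq
  push Not at hq
  obtain ⟨f', h1, h2, h3⟩ := hf
  have hev : ∀ᶠ t in 𝓝[>] (0 : ℝ), f' t < 0 := by
    have h4 := hasDerivAt_iff_tendsto_slope.1 h3
    have h5 : ∀ᶠ t in 𝓝[≠] (0 : ℝ), slope f' 0 t < 0 := h4.eventually_lt_const hq
    have h6 := h5.filter_mono (nhdsWithin_mono 0 (fun t (ht : 0 < t) => ht.ne'))
    filter_upwards [h6, self_mem_nhdsWithin] with t ht ht0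
    rw [slope_def_field, h2, hp, sub_zero, sub_zero] at ht
    have ht0' : (0 : ℝ) < t := ht0
    by_contra hc
    push Not at hc
    exact absurd ht (not_lt.2 (div_nonneg hc ht0'.le))
  have hall : ∀ᶠ t in 𝓝[>] (0 : ℝ), f' t < 0 ∧ HasDerivAt f (f' t) t ∧ f 0 ≤ f t :=
    hev.and ((h1.filter_mono nhdsWithin_le_nhds).and (h.filter_mono nhdsWithin_le_nhds))
  obtain ⟨r, hr, hr'⟩ := (mem_nhdsGT_iff_exists_Ioc_subset).1 hall
  have hr0 : (0 : ℝ) < r := hr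
  obtain ⟨c, hc, hc'⟩ := exists_hasDerivAt_eq_slope f f' hr0
    (fun t ht => by
      rcases eq_or_lt_of_le ht.1 with h0 | h0
      · subst h0; exact h1.self_of_nhds.continuousAt.continuousWithinAt
      · exact (hr' ⟨h0, ht.2⟩).2.1.continuousAt.continuousWithinAt)
    (fun t ht => (hr' ⟨ht.1, ht.2.le⟩).2.1)
  have h7 := (hr' ⟨hc.1, hc.2.le⟩).1
  rw [hc', sub_zero] at h7
  have h8 := (hr' ⟨hr0, le_refl r⟩).2.2
  exact absurd h7 (not_lt.2 (div_nonneg (by linarith) hr0.le))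

/-! ### Derivatives along lines -/

theorem line_hasDerivAt {n : ℕ} {F : Type*} [NormedAddCommGroup F] [NormedSpace ℝ F]
    (g : Euc n → F) (x v : Euc n) (t : ℝ) (hg : DifferentiableAt ℝ g (x + t • v)) :
    HasDerivAt (fun t : ℝ => g (x + t • v)) (fderiv ℝ g (x + t • v) v) t := by
  have h1 : HasDerivAt (fun t : ℝ => x + t • v) v t := by
    simpa using ((hasDerivAt_id t).smul_const v).const_add x
  exact hg.hasFDerivAt.comp_hasDerivAt t h1

theorem line_tendsto {n : ℕ} (x v : Euc n) :
    Tendsto (fun t : ℝ => x + t • v) (𝓝 0) (𝓝 x) := by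
  have : Continuous (fun t : ℝ => x + t • v) := by fun_prop
  simpa using this.tendsto 0

theorem hessMat_apply (n : ℕ) (u : Euc n → ℝ) (x : Euc n) (i j : Fin n) :
    hessMat n u x i j = fderiv ℝ (fderiv ℝ u) x (ebasis n i) (ebasis n j) := by
  simp [hessMat, iteratedFDeriv_two_apply]

theorem euc_sum_ebasis (n : ℕ) (v : Euc n) : v = ∑ i, v i • ebasis n i := by
  ext j
  simp [ebasis, Finset.sum_apply, Pi.single_apply]

theorem qf_hessMat (n : ℕ) (u : Euc n → ℝ) (x v : Euc n) :
    qf n (hessMat n u x) v = fderiv ℝ (fderiv ℝ u) x v v := by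
  conv_rhs => rw [euc_sum_ebasis n v]
  simp only [qf, hessMat_apply, map_sum, map_smul, _root_.sum_apply,
    _root_.smul_apply, smul_eq_mul]
  rw [Finset.sum_comm]
  refine Finset.sum_congr rfl fun i _ => ?_
  rw [Finset.mul_sum]
  refine Finset.sum_congr rfl fun j _ => ?_
  ring

theorem cd_fderiv {n : ℕ} {F : Type*} [NormedAddCommGroup F] [NormedSpace ℝ F]
    {g : Euc n → F} {x : Euc n} (hg : ContDiffAt ℝ (⊤ : ℕ∞) g x) :
    ContDiffAt ℝ (⊤ : ℕ∞) (fderiv ℝ g) x :=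
  hg.fderiv_right (by norm_num)

theorem cd_diff {n : ℕ} {F : Type*} [NormedAddCommGroup F] [NormedSpace ℝ F]
    {g : Euc n → F} {x : Euc n} (hg : ContDiffAt ℝ (⊤ : ℕ∞) g x) :
    DifferentiableAt ℝ g x := hg.differentiableAt (by norm_num)

theorem cd_nhds {n : ℕ} {F : Type*} [NormedAddCommGroup F] [NormedSpace ℝ F]
    {g : Euc n → F} {x : Euc n} (hg : ContDiffAt ℝ (⊤ : ℕ∞) g x) :
    ∀ᶠ y in 𝓝 x, DifferentiableAt ℝ g y := by
  have h1 : ContDiffAt ℝ 1 g x := hg.of_le (by norm_cast)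
  filter_upwards [h1.eventually (by norm_num)] with y hy using hy.differentiableAt (by norm_num)

theorem hess_symm {n : ℕ} {F : Type*} [NormedAddCommGroup F] [NormedSpace ℝ F]
    {u : Euc n → F} {x : Euc n} (hu : ContDiffAt ℝ (⊤ : ℕ∞) u x) (v w : Euc n) :
    fderiv ℝ (fderiv ℝ u) x v w = fderiv ℝ (fderiv ℝ u) x w v := by
  have : IsSymmSndFDerivAt ℝ u x := hu.isSymmSndFDerivAt (by simp; norm_cast)
  exact this v w

theorem hessMat_symm {n : ℕ} {u : Euc n → ℝ} {x : Euc n} (hu : ContDiffAt ℝ (⊤ : ℕ∞) u x) :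
    (hessMat n u x).IsSymm := by
  apply Matrix.IsSymm.ext
  intro i j
  rw [hessMat_apply, hessMat_apply, hess_symm hu]

theorem HD2.line {n : ℕ} {u : Euc n → ℝ} {x : Euc n} (hu : ContDiffAt ℝ (⊤ : ℕ∞) u x)
    (v : Euc n) :
    HD2 (fun t : ℝ => u (x + t • v)) (fderiv ℝ u x v) (qf n (hessMat n u x) v) := by
  refine ⟨fun t => fderiv ℝ u (x + t • v) v, ?_, by simp, ?_⟩
  · filter_upwards [(line_tendsto x v).eventually (cd_nhds hu)] with t ht
    exact line_hasDerivAt u x v t ht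
  · have h := line_hasDerivAt (fderiv ℝ u) x v 0 (by simpa using cd_diff (cd_fderiv hu))
    have h2 := h.clm_apply (hasDerivAt_const (0 : ℝ) v)
    rw [qf_hessMat]
    simpa using h2

theorem cd_dir {n : ℕ} {u : Euc n → ℝ} {x : Euc n} (hu : ContDiffAt ℝ (⊤ : ℕ∞) u x)
    (ξ : Euc n) : ContDiffAt ℝ (⊤ : ℕ∞) (fun y => fderiv ℝ u y ξ) x :=
  (cd_fderiv hu).clm_apply contDiffAt_const

theorem fderiv_dir {n : ℕ} {F : Type*} [NormedAddCommGroup F] [NormedSpace ℝ F]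
    {u : Euc n → F} {x : Euc n} (hu : DifferentiableAt ℝ (fderiv ℝ u) x)
    (ξ v : Euc n) : fderiv ℝ (fun y => fderiv ℝ u y ξ) x v = fderiv ℝ (fderiv ℝ u) x v ξ := by
  rw [fderiv_clm_apply hu (differentiableAt_const ξ)]
  simp

theorem hessMat_deriv {n : ℕ} {u : Euc n → ℝ} {x : Euc n} (hu : ContDiffAt ℝ (⊤ : ℕ∞) u x)
    (ξ : Euc n) (i j : Fin n) :
    HasDerivAt (fun t : ℝ => hessMat n u (x + t • ξ) i j)
      (hessMat n (fun y => fderiv ℝ u y ξ) x i j) 0 := by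
  have hD1 := cd_fderiv hu
  have hD2 := cd_fderiv hD1
  have h := line_hasDerivAt (fderiv ℝ (fderiv ℝ u)) x ξ 0 (by simpa using cd_diff hD2)
  have h2 := (h.clm_apply (hasDerivAt_const (0 : ℝ) (ebasis n i))).clm_apply
    (hasDerivAt_const (0 : ℝ) (ebasis n j))
  simp only [hessMat_apply]
  refine h2.congr_deriv ?_
  simp only [map_zero, add_zero, zero_smul]
  rw [hess_symm hD1]
  have hev : ∀ᶠ y in 𝓝 x, ContDiffAt ℝ 2 u y := by
    have h1 : ContDiffAt ℝ 2 u x := hu.of_le (by norm_cast)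
    exact h1.eventually (by norm_num)
  have e1 : fderiv ℝ (fun y => fderiv ℝ u y ξ) =ᶠ[𝓝 x]
      fun y => (fderiv ℝ (fderiv ℝ u) y ξ) := by
    filter_upwards [hev] with y hy
    ext v
    have hd : DifferentiableAt ℝ (fderiv ℝ u) y :=
      (hy.fderiv_right (m := 1) (by norm_num)).differentiableAt (by norm_num)
    rw [fderiv_dir hd]
    have : IsSymmSndFDerivAt ℝ u y := hy.isSymmSndFDerivAt (by simp)
    exact this v ξ
  rw [e1.fderiv_eq, fderiv_dir (cd_diff hD2)]

end

noncomputable section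

theorem qf_sub (n : ℕ) (M N : Matrix (Fin n) (Fin n) ℝ) (v : Euc n) :
    qf n (M - N) v = qf n M v - qf n N v := by
  simp only [qf, Matrix.sub_apply, mul_sub, sub_mul, Finset.sum_sub_distrib]

theorem quadA_diag (n : ℕ) (a : Fin n → ℝ) (x : Euc n) :
    quadA n (Matrix.diagonal a) x = 1 / 2 * ∑ i, a i * x i ^ 2 := by
  unfold quadA
  congr 1
  refine Finset.sum_congr rfl fun i _ => ?_
  simp only [Matrix.diagonal_apply, mul_ite, mul_zero, ite_mul, zero_mul, Finset.sum_ite_eq,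
    Finset.mem_univ, if_true]
  ring

theorem hd2_lin (c d : ℝ) : HD2 (fun t => c + t * d) d 0 := by
  refine ⟨fun _ => d, Eventually.of_forall fun t => ?_, rfl, hasDerivAt_const 0 d⟩
  simpa using ((hasDerivAt_id t).mul_const d).const_add c

theorem hd2_sum {ι : Type*} (s : Finset ι) (f : ι → ℝ → ℝ) (p q : ι → ℝ)
    (h : ∀ i, HD2 (f i) (p i) (q i)) :
    HD2 (fun t => ∑ i ∈ s, f i t) (∑ i ∈ s, p i) (∑ i ∈ s, q i) := by
  induction s using Finset.induction_on with
  | empty => simpa using HD2.const 0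
  | insert i s hi ih =>
    simp only [Finset.sum_insert hi]
    exact (h i).add ih

theorem hd2_quad (n : ℕ) (a : Fin n → ℝ) (y v : Euc n) :
    HD2 (fun t : ℝ => quadA n (Matrix.diagonal a) (y + t • v))
      (∑ i, a i * y i * v i) (∑ i, a i * v i ^ 2) := by
  have h : ∀ i, HD2 (fun t : ℝ => 1 / 2 * (a i * ((y i + t * v i) * (y i + t * v i))))
      (a i * y i * v i) (a i * v i ^ 2) := fun i =>
    ((((hd2_lin (y i) (v i)).mul (hd2_lin (y i) (v i))).const_mul (a i)).const_mul
      (1 / 2)).congr' (by ring) (by ring)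
  have := hd2_sum Finset.univ _ _ _ h
  convert this using 2 with t
  rw [quadA_diag, Finset.mul_sum]
  refine Finset.sum_congr rfl fun i _ => ?_
  simp only [PiLp.add_apply, PiLp.smul_apply, smul_eq_mul]
  ring

theorem hd2_model (n : ℕ) (a : Fin n → ℝ) (y v : Euc n) (G G' : ℝ → ℝ) (G'' : ℝ)
    (hG : ∀ᶠ z in 𝓝 (quadA n (Matrix.diagonal a) y), HasDerivAt G (G' z) z)
    (hG' : HasDerivAt G' G'' (quadA n (Matrix.diagonal a) y)) :
    HD2 (fun t : ℝ => G (quadA n (Matrix.diagonal a) (y + t • v)))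
      (G' (quadA n (Matrix.diagonal a) y) * ∑ i, a i * y i * v i)
      (qf n (modelHess n a y (G' (quadA n (Matrix.diagonal a) y)) G'') v) := by
  have h := (hd2_quad n a y v).comp (G := G) (G' := G') (G'' := G'') (by simpa using hG)
    (by simpa using hG')
  refine h.congr' (by simp) ?_
  rw [qf_modelHess]
  simp; ring

theorem line_localMin {n : ℕ} {g : Euc n → ℝ} {x : Euc n} (h : IsLocalMin g x) (v : Euc n) :
    IsLocalMin (fun t : ℝ => g (x + t • v)) 0 := by
  have := (line_tendsto x v).eventually h
  simpa [IsLocalMin, IsMinFilter] using this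

theorem touch_below (n k : ℕ) (hk1 : 1 ≤ k) (hkn : k ≤ n) (a : Fin n → ℝ) (x c : Euc n)
    (u : Euc n → ℝ) (hu : ContDiffAt ℝ (⊤ : ℕ∞) u x) (G G' : ℝ → ℝ) (G'' : ℝ)
    (hG : ∀ᶠ z in 𝓝 (quadA n (Matrix.diagonal a) (x - c)), HasDerivAt G (G' z) z)
    (hG' : HasDerivAt G' G'' (quadA n (Matrix.diagonal a) (x - c)))
    (hmin : IsLocalMin (fun y => u y - G (quadA n (Matrix.diagonal a) (y - c))) x)
    (hg : GamM n k (modelHess n a (x - c) (G' (quadA n (Matrix.diagonal a) (x - c))) G'')) :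
    matSk n k (modelHess n a (x - c) (G' (quadA n (Matrix.diagonal a) (x - c))) G'')
      ≤ SkHess n k u x := by
  set N := modelHess n a (x - c) (G' (quadA n (Matrix.diagonal a) (x - c))) G'' with hN
  have hNs : N.IsSymm := modelHess_symm _ _ _ _ _
  have hHs := hessMat_symm hu
  have h := matSk_mono n k hk1 hkn N (hessMat n u x - N) hNs (hHs.sub hNs) hg ?_
  · simpa [SkHess] using h
  intro v
  have h1 := (HD2.line hu v).sub (hd2_model n a (x - c) v G G' G'' hG hG')
  have h2 := line_localMin hmin v
  simp only [add_sub_right_comm] at h2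
  rw [qf_sub]
  exact (h1.min h2).2

theorem touch_above (n k : ℕ) (hk1 : 1 ≤ k) (hkn : k ≤ n) (a : Fin n → ℝ) (x c : Euc n)
    (u : Euc n → ℝ) (hu : ContDiffAt ℝ (⊤ : ℕ∞) u x) (G G' : ℝ → ℝ) (G'' : ℝ)
    (hG : ∀ᶠ z in 𝓝 (quadA n (Matrix.diagonal a) (x - c)), HasDerivAt G (G' z) z)
    (hG' : HasDerivAt G' G'' (quadA n (Matrix.diagonal a) (x - c)))
    (hmin : IsLocalMin (fun y => G (quadA n (Matrix.diagonal a) (y - c)) - u y) x)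
    (hg : GamM n k (hessMat n u x)) :
    SkHess n k u x
      ≤ matSk n k (modelHess n a (x - c) (G' (quadA n (Matrix.diagonal a) (x - c))) G'') := by
  set N := modelHess n a (x - c) (G' (quadA n (Matrix.diagonal a) (x - c))) G'' with hN
  have hNs : N.IsSymm := modelHess_symm _ _ _ _ _
  have hHs := hessMat_symm hu
  have h := matSk_mono n k hk1 hkn (hessMat n u x) (N - hessMat n u x) hHs (hNs.sub hHs) hg ?_
  · simpa [SkHess] using h
  intro v
  have h1 := (hd2_model n a (x - c) v G G' G'' hG hG').sub (HD2.line hu v)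
  have h2 := line_localMin hmin v
  simp only [add_sub_right_comm] at h2
  rw [qf_sub]
  exact (h1.min h2).2

theorem linearize (n k : ℕ) (hk1 : 1 ≤ k) (hkn : k ≤ n) (x : Euc n)
    (u : Euc n → ℝ) (hu : ContDiffAt ℝ (⊤ : ℕ∞) u x) (hg : GamM n k (hessMat n u x))
    (hev : ∀ᶠ y in 𝓝 x, SkHess n k u y = 1) :
    ∃ (v : OrthonormalBasis (Fin n) ℝ (Euc n)) (f : Fin n → ℝ), (∀ i, 0 < f i) ∧
      (0 ≤ ∑ i, f i * qf n (hessMat n u x) (v i)) ∧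
      (∀ ξ, ∑ i, f i * qf n (hessMat n (fun y => fderiv ℝ u y ξ) x) (v i) = 0) ∧
      (∀ ξ, qf n (hessMat n u x) ξ ≤ 0 →
        ‖ξ‖ ^ 2 * ∑ i, f i ≤ n * ∑ i, f i * inner ℝ (v i) ξ ^ 2) := by
  obtain ⟨v, d, h1, h2, h3, h4⟩ := symm_diag n (hessMat n u x) (hessMat_symm hu)
  have hgv : GamV n k d := fun j hj1 hjk => by rw [← h3 j (by omega)]; exact hg j hj1 hjk
  obtain ⟨m, rfl⟩ : ∃ m, k = m + 1 := ⟨k - 1, by omega⟩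
  refine ⟨v, fun i => esymmVec n m (Function.update d i 0), fun i => hgv.del_pos i m (by omega),
    ?_, ?_, ?_⟩
  · have := esymmVec_euler n m d
    simp only [h2]
    rw [Finset.sum_congr rfl (fun i _ => mul_comm _ _), this]
    have h5 := hgv (m + 1) hk1 le_rfl
    positivity
  · intro ξ
    have h5 := h4 m hkn (fun t => hessMat n u (x + t • ξ)) _ 0 (by simp)
      (fun i j => hessMat_deriv hu ξ i j)
    have h6 : (fun t : ℝ => matSk n (m + 1) (hessMat n u (x + t • ξ))) =ᶠ[𝓝 0] fun _ => 1 :=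
      (line_tendsto x ξ).eventually hev
    exact h5.unique ((hasDerivAt_const (0 : ℝ) (1 : ℝ)).congr_of_eventuallyEq h6)
  · intro ξ hξ
    rw [h1] at hξ
    have h5 := hgv.cond_elliptic hk1 (fun i => inner ℝ (v i) ξ) hξ
    simp only [Nat.add_sub_cancel] at h5
    rw [OrthonormalBasis.sum_sq_inner_right] at h5
    refine h5.trans (le_of_eq ?_)
    congr 1
    exact Finset.sum_congr rfl fun i _ => mul_comm _ _

end

noncomputable section

theorem memA_pos {n k : ℕ} (hkn : k ≤ n) {a : Fin n → ℝ} (hA : MemA n k (Matrix.diagonal a)) :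
    (∀ i, 0 < a i) ∧ esymmVec n k a = 1 := by
  obtain ⟨_, h2, h3⟩ := hA
  refine ⟨?_, by rw [← matSk_diagonal n k hkn]; exact h3⟩
  exact Matrix.posDef_diagonal_iff.1 h2

theorem hk_pos (n k : ℕ) (hn : 3 ≤ n) (hk1 : 1 ≤ k) (hkn : k ≤ n) (a : Fin n → ℝ)
    (ha : ∀ i, 0 < a i) (hS : esymmVec n k a = 1) : 0 < hkfun n k a := by
  have hg : GamV n k a := fun j _ hj => esymmVec_pos n j (by omega) a ha
  have i : Fin n := ⟨0, by omega⟩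
  have h1 := hg.del_pos i (k - 1) (by omega)
  exact lt_of_lt_of_le (mul_pos h1 (ha i)) (le_hkfun n k a i)

theorem hk_lt (n k : ℕ) (hn : 3 ≤ n) (hk1 : 1 ≤ k) (hkn : k ≤ n) (a : Fin n → ℝ)
    (ha : ∀ i, 0 < a i) (hS : esymmVec n k a = 1) (hk1' : k = 1 → (⨆ i, a i) < 1 / 2) :
    2 * hkfun n k a < k := by
  haveI : Nonempty (Fin n) := ⟨⟨0, by omega⟩⟩
  by_cases hk : k = 1
  · have h := hk1' hk
    subst hk
    have : hkfun n 1 a = ⨆ i, a i := by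
      unfold hkfun
      simp [esymmVec_zero']
    rw [this]; push_cast; linarith
  · obtain ⟨i, hi⟩ := exists_eq_ciSup_of_finite
      (f := fun i : Fin n => esymmVec n (k - 1) (Function.update a i 0) * a i)
    have hi' : hkfun n k a = esymmVec n (k - 1) (Function.update a i 0) * a i := hi.symm
    have hsp := esymmVec_split n (k - 1) a i
    rw [show k - 1 + 1 = k by omega, hS] at hsp
    have h0 := esymmVec_nonneg n k (Function.update a i 0) (update_nonneg n a ha i)
    by_cases hk2 : k = 2
    · subst hk2
      have hg : GamV n 3 a := fun j _ hj => esymmVec_pos n j (by omega) a ha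
      have h1 := hg.del_pos i 2 (by omega)
      rw [hi']; push_cast
      nlinarith
    · have : (3 : ℝ) ≤ k := by exact_mod_cast (by omega : 3 ≤ k)
      rw [hi']
      nlinarith

theorem genExp_lt (n k : ℕ) (a : Fin n → ℝ) (h0 : 0 < hkfun n k a) (h1 : 2 * hkfun n k a < k) :
    genExp n k a < -1 := by
  unfold genExp
  rw [div_lt_iff₀ (by linarith)]
  linarith

theorem genInt_base_pos (n k : ℕ) (a : Fin n → ℝ) {α t : ℝ} (hα : 0 ≤ α) (ht : 0 < t) :
    1 ≤ 1 + α * t ^ genExp n k a := by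
  have := rpow_pos_of_pos ht (genExp n k a)
  nlinarith [mul_nonneg hα this.le]

theorem genInt_pow (n k : ℕ) (hk1 : 1 ≤ k) (a : Fin n → ℝ) {α t : ℝ} (hα : 0 ≤ α) (ht : 0 < t) :
    genInt n k a α t ^ k = 1 + α * t ^ genExp n k a := by
  unfold genInt
  rw [← rpow_natCast, ← rpow_mul (by linarith [genInt_base_pos n k a hα ht])]
  have : (k : ℝ) ≠ 0 := by positivity
  rw [one_div, inv_mul_cancel₀ this, rpow_one]

theorem genInt_ge_one (n k : ℕ) (a : Fin n → ℝ) {α t : ℝ} (hα : 0 ≤ α)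
    (ht : 0 < t) : 1 ≤ genInt n k a α t :=
  one_le_rpow (genInt_base_pos n k a hα ht) (by positivity)

theorem genInt_le (n k : ℕ) (hk1 : 1 ≤ k) (a : Fin n → ℝ) {α t : ℝ} (hα : 0 ≤ α)
    (ht : 0 < t) : genInt n k a α t - 1 ≤ α * t ^ genExp n k a := by
  have h1 := genInt_ge_one n k a hα ht
  have h2 := genInt_pow n k hk1 a hα ht
  have h3 : genInt n k a α t ≤ genInt n k a α t ^ k := le_self_pow₀ h1 (by omega)
  linarith

theorem genInt_deriv (n k : ℕ) (hk1 : 1 ≤ k) (a : Fin n → ℝ) (h0 : 0 < hkfun n k a)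
    {α t : ℝ} (hα : 0 ≤ α) (ht : 0 < t) :
    ∃ D : ℝ, HasDerivAt (genInt n k a α) D t ∧ D ≤ 0 ∧
      genInt n k a α t ^ (k - 1) * (genInt n k a α t + D * (2 * hkfun n k a * t)) = 1 := by
  set e := genExp n k a with he
  set B := 1 + α * t ^ e with hB
  have hB1 : 1 ≤ B := genInt_base_pos n k a hα ht
  have hkp : (0 : ℝ) < k := by exact_mod_cast hk1
  have hd1 : HasDerivAt (fun t : ℝ => 1 + α * t ^ e) (α * (e * t ^ (e - 1))) t :=
    ((hasDerivAt_rpow_const (Or.inl ht.ne')).const_mul α).const_add 1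
  have hd2 := hd1.rpow_const (p := (1 : ℝ) / k) (Or.inl (by linarith : (1 + α * t ^ e) ≠ 0))
  have he0 : e < 0 := by
    rw [he]; unfold genExp
    exact div_neg_of_neg_of_pos (by linarith) (by linarith)
  refine ⟨_, hd2, ?_, ?_⟩
  · have h1 : 0 ≤ t ^ (e - 1) := (rpow_pos_of_pos ht _).le
    have h2 : 0 ≤ (1 + α * t ^ e) ^ ((1 : ℝ) / k - 1) := (rpow_pos_of_pos (by linarith) _).le
    have h3 : α * (e * t ^ (e - 1)) ≤ 0 :=
      mul_nonpos_of_nonneg_of_nonpos hα (mul_nonpos_of_nonpos_of_nonneg he0.le h1)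
    have h4 : α * (e * t ^ (e - 1)) * (1 / (k : ℝ)) ≤ 0 :=
      mul_nonpos_of_nonpos_of_nonneg h3 (by positivity)
    exact mul_nonpos_of_nonpos_of_nonneg h4 h2
  · have hpk := genInt_pow n k hk1 a hα ht
    have e1 : genInt n k a α t ^ (k - 1) * genInt n k a α t = B := by
      rw [← pow_succ, show k - 1 + 1 = k by omega]; exact hpk
    have e2 : genInt n k a α t ^ (k - 1) * B ^ ((1 : ℝ) / k - 1) = 1 := by
      unfold genInt
      rw [← hB, ← rpow_natCast, ← rpow_mul (by linarith), ← rpow_add (by linarith)]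
      rw [Nat.cast_sub hk1]
      rw [show (1 : ℝ) / k * ((k : ℝ) - (1 : ℕ)) + (1 / k - 1) = 0 by
        push_cast; field_simp; ring, rpow_zero]
    have e3 : t ^ (e - 1) * t = t ^ e := by
      rw [rpow_sub_one ht.ne']; field_simp
    have e4 : e * (2 * hkfun n k a) = -k := by
      rw [he]; unfold genExp; field_simp
    rw [mul_add, e1]
    calc _ = B + (genInt n k a α t ^ (k - 1) * B ^ ((1 : ℝ) / k - 1)) * α * (t ^ (e - 1) * t)
          * (e * (2 * hkfun n k a)) * (1 / k) := by rw [hB]; ring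
      _ = 1 := by
        rw [e2, e3, e4, hB]; field_simp; ring

theorem genInt_large (n k : ℕ) (hk1 : 1 ≤ k) (a : Fin n → ℝ) (he : genExp n k a < 0)
    {α T t L : ℝ} (hT : 0 < T) (hL : 0 ≤ L)
    (hα : L ^ k * T ^ (-genExp n k a) ≤ α) (ht : 0 < t) (htT : t ≤ T) :
    L ≤ genInt n k a α t := by
  have hα0 : 0 ≤ α := le_trans (by positivity) hα
  have h1 := genInt_ge_one n k a hα0 ht
  have h2 := genInt_pow n k hk1 a hα0 ht
  refine (pow_le_pow_iff_left₀ hL (by linarith) (n := k) (by omega)).1 ?_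
  rw [h2]
  have h3 : T ^ genExp n k a ≤ t ^ genExp n k a :=
    rpow_le_rpow_of_nonpos ht htT he.le
  have h4 : L ^ k = L ^ k * T ^ (-genExp n k a) * T ^ genExp n k a := by
    rw [mul_assoc, ← rpow_add hT]; simp
  have h5 : 0 < T ^ genExp n k a := rpow_pos_of_pos hT _
  nlinarith [mul_le_mul hα h3 h5.le hα0]

theorem genInt_contAt (n k : ℕ) (hk1 : 1 ≤ k) (a : Fin n → ℝ) (h0 : 0 < hkfun n k a)
    {α t : ℝ} (hα : 0 ≤ α) (ht : 0 < t) : ContinuousAt (genInt n k a α) t := by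
  obtain ⟨D, hD, _⟩ := genInt_deriv n k hk1 a h0 hα ht
  exact hD.continuousAt

theorem genInt_intble (n k : ℕ) (hk1 : 1 ≤ k) (a : Fin n → ℝ) (h0 : 0 < hkfun n k a)
    {α s t : ℝ} (hα : 0 ≤ α) (hs : 0 < s) (ht : 0 < t) :
    IntervalIntegrable (genInt n k a α) volume s t := by
  apply ContinuousOn.intervalIntegrable
  intro z hz
  have : 0 < z := lt_of_lt_of_le (lt_min hs ht) hz.1
  exact (genInt_contAt n k hk1 a h0 hα this).continuousWithinAt

/-- The primitive `∫_{R₀}^z φ`. -/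
def prim (n k : ℕ) (a : Fin n → ℝ) (R₀ α z : ℝ) : ℝ := ∫ t in R₀..z, genInt n k a α t

theorem prim_deriv (n k : ℕ) (hk1 : 1 ≤ k) (a : Fin n → ℝ) (h0 : 0 < hkfun n k a)
    {α R₀ z : ℝ} (hα : 0 ≤ α) (hR : 0 < R₀) (hz : 0 < z) :
    HasDerivAt (prim n k a R₀ α) (genInt n k a α z) z := by
  have hc : ContinuousOn (genInt n k a α) (Set.Ioi 0) := fun t ht =>
    (genInt_contAt n k hk1 a h0 hα ht).continuousWithinAt
  exact intervalIntegral.integral_hasDerivAt_right (genInt_intble n k hk1 a h0 hα hR hz)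
    (hc.stronglyMeasurableAtFilter isOpen_Ioi z hz) (genInt_contAt n k hk1 a h0 hα hz)

theorem prim_lower (n k : ℕ) (hk1 : 1 ≤ k) (a : Fin n → ℝ) (h0 : 0 < hkfun n k a)
    {α R₀ L : ℝ} (hR : 0 < R₀) (hL : 1 ≤ L)
    (hα : L ^ k * (2 * R₀) ^ (-genExp n k a) ≤ α) : L * R₀ ≤ prim n k a R₀ α (2 * R₀) := by
  have hα0 : 0 ≤ α := le_trans (by positivity) hα
  have he0 : genExp n k a < 0 := by
    unfold genExp
    have : (0 : ℝ) < k := by exact_mod_cast hk1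
    exact div_neg_of_neg_of_pos (by linarith) (by linarith)
  have h := intervalIntegral.integral_mono_on (a := R₀) (b := 2 * R₀) (by linarith)
    (f := fun _ => L) (g := genInt n k a α) (by simp)
    (genInt_intble n k hk1 a h0 hα0 hR (by linarith))
    (fun t ht => genInt_large n k hk1 a he0 (T := 2 * R₀) (by linarith) (by linarith) hα
      (by linarith [ht.1]) ht.2)
  rw [intervalIntegral.integral_const, smul_eq_mul] at h
  unfold prim
  linarith

theorem prim_ge (n k : ℕ) (hk1 : 1 ≤ k) (a : Fin n → ℝ) (h0 : 0 < hkfun n k a)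
    {α R₀ S T : ℝ} (hR : 0 < R₀) (hα : 0 ≤ α) (hS : 0 < S) (hST : S ≤ T) :
    prim n k a R₀ α S + (T - S) ≤ prim n k a R₀ α T := by
  have h := intervalIntegral.integral_mono_on (a := S) (b := T) hST
    (f := fun _ => (1 : ℝ)) (g := genInt n k a α) (by simp)
    (genInt_intble n k hk1 a h0 hα hS (by linarith))
    (fun t ht => genInt_ge_one n k a hα (by linarith [ht.1]))
  have h2 := intervalIntegral.integral_add_adjacent_intervals
    (genInt_intble n k hk1 a h0 hα hR hS) (genInt_intble n k hk1 a h0 hα hS (by linarith : 0 < T))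
  rw [intervalIntegral.integral_const, smul_eq_mul] at h
  unfold prim
  linarith

theorem prim_upper (n k : ℕ) (hk1 : 1 ≤ k) (a : Fin n → ℝ) (h0 : 0 < hkfun n k a)
    (he : genExp n k a < -1)
    {α R₀ R : ℝ} (hR : 0 < R₀) (hα : 0 ≤ α) (hRR : R₀ ≤ R) :
    prim n k a R₀ α R - R ≤ α * (R₀ ^ (genExp n k a + 1) / (-genExp n k a - 1)) := by
  set e := genExp n k a with hedef
  have hi : IntervalIntegrable (fun t : ℝ => t ^ e) volume R₀ R := by
    apply intervalIntegral.intervalIntegrable_rpow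
    right
    rw [Set.uIcc_of_le hRR]
    intro h; linarith [h.1]
  have h := intervalIntegral.integral_mono_on (a := R₀) (b := R) hRR
    (f := genInt n k a α) (g := fun t => 1 + α * t ^ e)
    (genInt_intble n k hk1 a h0 hα hR (by linarith)) ((by simp : IntervalIntegrable
      (fun _ => (1 : ℝ)) volume R₀ R).add (hi.const_mul α))
    (fun t ht => by
      have := genInt_le n k hk1 a hα (by linarith [ht.1] : 0 < t)
      linarith)
  rw [intervalIntegral.integral_add (by simp) (hi.const_mul α),
    intervalIntegral.integral_const, smul_eq_mul, intervalIntegral.integral_const_mul,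
    integral_rpow (Or.inr ⟨by linarith, by
      rw [Set.uIcc_of_le hRR]
      intro h; linarith [h.1]⟩)] at h
  have h1 : (R ^ (e + 1) - R₀ ^ (e + 1)) / (e + 1) ≤ R₀ ^ (e + 1) / (-e - 1) := by
    rw [show -e - 1 = -(e + 1) by ring, div_neg, ← neg_div, sub_div, neg_div]
    have : R ^ (e + 1) / (e + 1) ≤ 0 :=
      div_nonpos_of_nonneg_of_nonpos (rpow_nonneg (by linarith) _) (by linarith)
    linarith
  have h2 := mul_le_mul_of_nonneg_left h1 hα
  unfold prim
  linarith

end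

noncomputable section

/-- The quadratic function `s`. -/
abbrev sA {n : ℕ} (a : Fin n → ℝ) (x : Euc n) : ℝ := quadA n (Matrix.diagonal a) x

theorem sA_cont {n : ℕ} (a : Fin n → ℝ) : Continuous (sA a) := by
  have : sA a = fun x : Euc n => 1 / 2 * ∑ i, a i * x i ^ 2 := by
    funext x; exact quadA_diag n a x
  rw [this]; fun_prop

theorem norm_sq_sum {n : ℕ} (x : Euc n) : ‖x‖ ^ 2 = ∑ i, x i ^ 2 := by
  rw [EuclideanSpace.norm_sq_eq]; simp

theorem sA_two {n : ℕ} (x : Euc n) : sA (fun _ => 2) x = ‖x‖ ^ 2 := by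
  rw [sA, quadA_diag, norm_sq_sum, ← Finset.mul_sum]; ring

theorem sA_ge {n : ℕ} {a : Fin n → ℝ} {m : ℝ} (h : ∀ i, m ≤ a i) (x : Euc n) :
    m / 2 * ‖x‖ ^ 2 ≤ sA a x := by
  rw [sA, quadA_diag, norm_sq_sum, show m / 2 * ∑ i, x i ^ 2 = 1 / 2 * (m * ∑ i, x i ^ 2) by ring,
    Finset.mul_sum]
  gcongr with i _
  exact h i

theorem sA_le {n : ℕ} {a : Fin n → ℝ} {m : ℝ} (h : ∀ i, a i ≤ m) (x : Euc n) :
    sA a x ≤ m / 2 * ‖x‖ ^ 2 := by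
  rw [sA, quadA_diag, norm_sq_sum, show m / 2 * ∑ i, x i ^ 2 = 1 / 2 * (m * ∑ i, x i ^ 2) by ring]
  refine mul_le_mul_of_nonneg_left ?_ (by norm_num)
  rw [Finset.mul_sum]
  exact Finset.sum_le_sum fun i _ => mul_le_mul_of_nonneg_right (h i) (sq_nonneg _)

theorem sA_smul {n : ℕ} (a : Fin n → ℝ) (c : ℝ) (x : Euc n) : sA a (c • x) = c ^ 2 * sA a x := by
  rw [sA, quadA_diag, sA, quadA_diag, mul_left_comm, Finset.mul_sum (a := c ^ 2)]
  congr 1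
  refine Finset.sum_congr rfl fun i _ => ?_
  simp; ring

/-- All the hypotheses of the approximating problem in a convenient form. -/
structure Dat (n k : ℕ) (a : Fin n → ℝ) (m Mx R₀ α : ℝ) (x₀ : Euc n) (ε R : ℝ)
    (u : Euc n → ℝ) : Prop where
  hn : 3 ≤ n
  hk1 : 1 ≤ k
  hkn : k ≤ n
  ha : ∀ i, 0 < a i
  hS : esymmVec n k a = 1
  h0 : 0 < hkfun n k a
  he : genExp n k a < -1
  hm : 0 < m
  ham : ∀ i, m ≤ a i
  haM : ∀ i, a i ≤ Mx
  hR1 : 1 ≤ R₀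
  hR5 : 5 * Mx ≤ R₀
  hα : (8 / m + 2) ^ k * (2 * R₀) ^ (-genExp n k a) ≤ α
  hx₀ : ‖x₀‖ < 1 / 2
  hε : 0 < ε
  hε2 : ε < 1 / 2
  hR : 3 * R₀ < R
  sm : ∀ x, sA a x ≤ R → ε ≤ ‖x - x₀‖ → ContDiffAt ℝ (⊤ : ℕ∞) u x
  kc : ∀ x, sA a x < R → ε < ‖x - x₀‖ → GamM n k (hessMat n u x)
  eq : ∀ x, sA a x < R → ε < ‖x - x₀‖ → SkHess n k u x = 1
  bi : ∀ x, ‖x - x₀‖ = ε → u x = 0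
  bo : ∀ x, sA a x = R → u x = prim n k a R₀ α R

theorem small_ball {n : ℕ} {a : Fin n → ℝ} {Mx R₀ : ℝ} (ha : ∀ i, 0 < a i) (hn : 3 ≤ n)
    (haM : ∀ i, a i ≤ Mx) (hR5 : 5 * Mx ≤ R₀) {x₀ x : Euc n} (hx₀ : ‖x₀‖ < 1 / 2)
    (hx : ‖x - x₀‖ ≤ 2) : sA a x < R₀ ∧ ‖x‖ ≤ 5 / 2 := by
  have h1 : ‖x‖ ≤ 5 / 2 := by
    calc ‖x‖ = ‖(x - x₀) + x₀‖ := by simp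
      _ ≤ ‖x - x₀‖ + ‖x₀‖ := norm_add_le _ _
      _ ≤ 5 / 2 := by linarith
  refine ⟨?_, h1⟩
  have h2 := sA_le haM x
  have h3 : 0 < Mx := lt_of_lt_of_le (ha ⟨0, by omega⟩) (haM _)
  nlinarith [norm_nonneg x, mul_le_mul h1 h1 (norm_nonneg x) (by norm_num)]

theorem closure_mem {n : ℕ} {a : Fin n → ℝ} {Mx R₀ : ℝ} (ha : ∀ i, 0 < a i) (hn : 3 ≤ n)
    (haM : ∀ i, a i ≤ Mx) (hR5 : 5 * Mx ≤ R₀) (hR1 : 1 ≤ R₀) {x₀ : Euc n} (hx₀ : ‖x₀‖ < 1 / 2)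
    {ε R : ℝ} (hε : 0 < ε) (hε2 : ε < 1 / 2) (hR : 3 * R₀ < R) (x : Euc n)
    (h1 : sA a x ≤ R) (h2 : ε ≤ ‖x - x₀‖) :
    x ∈ closure {x : Euc n | sA a x < R ∧ ε < ‖x - x₀‖} := by
  rcases h2.lt_or_eq with h2 | h2
  · rcases h1.lt_or_eq with h1 | h1
    · exact subset_closure ⟨h1, h2⟩
    · have hc : Continuous (fun t : ℝ => (1 - t) • x) := by fun_prop
      have ht : Tendsto (fun t : ℝ => (1 - t) • x) (𝓝[>] 0) (𝓝 x) := by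
        have := hc.tendsto 0
        simp only [sub_zero, one_smul] at this
        exact this.mono_left nhdsWithin_le_nhds
      refine mem_closure_of_tendsto ht ?_
      have hc2 : Continuous (fun z : Euc n => ‖z - x₀‖) := by fun_prop
      have h3 := (hc2.tendsto x).comp ht
      have h4 := h3.eventually_const_lt h2
      have h5 : ∀ᶠ t in 𝓝[>] (0 : ℝ), t < 1 :=
        (eventually_lt_nhds (by norm_num)).filter_mono nhdsWithin_le_nhds
      filter_upwards [h4, h5, self_mem_nhdsWithin] with t h6 h7 h8
      have h8' : (0 : ℝ) < t := h8
      refine ⟨?_, h6⟩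
      rw [sA_smul, h1]
      nlinarith [mul_pos h8' (by linarith : 0 < 1 - t)]
  · have hx := (small_ball ha hn haM hR5 hx₀ (by linarith : ‖x - x₀‖ ≤ 2)).1
    have hc : Continuous (fun t : ℝ => x + t • (x - x₀)) := by fun_prop
    have ht : Tendsto (fun t : ℝ => x + t • (x - x₀)) (𝓝[>] 0) (𝓝 x) := by
      have := hc.tendsto 0
      simp only [zero_smul, add_zero] at this
      exact this.mono_left nhdsWithin_le_nhds
    refine mem_closure_of_tendsto ht ?_
    have h4 := (((sA_cont a).tendsto x).comp ht).eventually_lt_const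
      (by linarith : sA a x < R)
    filter_upwards [h4, self_mem_nhdsWithin] with t h6 h8
    have h8' : (0 : ℝ) < t := h8
    refine ⟨h6, ?_⟩
    have : x + t • (x - x₀) - x₀ = (1 + t) • (x - x₀) := by
      rw [add_smul, one_smul]; abel
    rw [this, norm_smul, Real.norm_of_nonneg (by linarith), ← h2]
    nlinarith

theorem mkDat {n k : ℕ} {a : Fin n → ℝ} {m Mx R₀ α : ℝ} {x₀ : Euc n} {ε R : ℝ}
    {u : Euc n → ℝ} (hn : 3 ≤ n) (hk1 : 1 ≤ k) (hkn : k ≤ n)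
    (hA : MemA n k (Matrix.diagonal a))
    (hk1' : k = 1 → (⨆ i, a i) < 1 / 2)
    (hm : 0 < m) (ham : ∀ i, m ≤ a i) (haM : ∀ i, a i ≤ Mx) (hR1 : 1 ≤ R₀) (hR5 : 5 * Mx ≤ R₀)
    (hα : (8 / m + 2) ^ k * (2 * R₀) ^ (-genExp n k a) ≤ α)
    (hx₀ : x₀ ∈ Metric.ball (0 : Euc n) (1 / 2)) (hε : 0 < ε) (hε2 : ε < 1 / 2) (hR : 3 * R₀ < R)
    (hu : ApproxSol n k a x₀ ε R R₀ α u) : Dat n k a m Mx R₀ α x₀ ε R u := by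
  obtain ⟨ha, hS⟩ := memA_pos hkn hA
  have h0 := hk_pos n k hn hk1 hkn a ha hS
  have hx₀' : ‖x₀‖ < 1 / 2 := by simpa using hx₀
  have hΩ : OmegaRe n a x₀ ε R = {x : Euc n | sA a x < R ∧ ε < ‖x - x₀‖} := by
    ext x
    simp only [OmegaRe, ESet, closure_ball x₀ hε.ne', Set.mem_sdiff, Metric.mem_closedBall, sub_zero,
      dist_eq_norm, not_le]
    rfl
  obtain ⟨⟨U, hU, hUs, hUd⟩, h2, h3, h4, h5⟩ := hu
  rw [hΩ] at hUs h2 h3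
  exact {
    hn := hn, hk1 := hk1, hkn := hkn, ha := ha, hS := hS, h0 := h0
    he := genExp_lt n k a h0 (hk_lt n k hn hk1 hkn a ha hS hk1')
    hm := hm, ham := ham, haM := haM, hR1 := hR1, hR5 := hR5, hα := hα, hx₀ := hx₀'
    hε := hε, hε2 := hε2, hR := hR
    sm := fun x hx1 hx2 => hUd.contDiffAt (hU.mem_nhds
      (hUs (closure_mem ha hn haM hR5 hR1 hx₀' hε hε2 hR x hx1 hx2)))
    kc := fun x hx1 hx2 => h2 x ⟨hx1, hx2⟩
    eq := fun x hx1 hx2 => h3 x ⟨hx1, hx2⟩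
    bi := fun x hx => h4 x (by simpa [dist_eq_norm] using hx)
    bo := fun x hx => by rw [h5 x hx, ubar, prim]; simp only [sA] at hx; rw [hx] }

namespace Dat

variable {n k : ℕ} {a : Fin n → ℝ} {m Mx R₀ α : ℝ} {x₀ : Euc n} {ε R : ℝ} {u : Euc n → ℝ}

theorem alpha_pos (D : Dat n k a m Mx R₀ α x₀ ε R u) : 0 < α := by
  have := D.hm
  have := D.hR1
  exact lt_of_lt_of_le (by positivity) D.hα

theorem compact (D : Dat n k a m Mx R₀ α x₀ ε R u) (T : ℝ) : IsCompact {x : Euc n | sA a x ≤ T} := by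
  have hm := D.hm
  refine Metric.isCompact_of_isClosed_isBounded (isClosed_le (sA_cont a) continuous_const) ?_
  refine (Metric.isBounded_closedBall (x := (0 : Euc n)) (r := 2 * T / m + 1)).subset ?_
  intro x hx
  have h1 := sA_ge D.ham x
  have h2 : sA a x ≤ T := hx
  rw [mem_closedBall_zero_iff]
  have h3 : ‖x‖ ^ 2 ≤ 2 * T / m := by
    rw [le_div_iff₀ hm]; linarith
  nlinarith [norm_nonneg x, sq_nonneg (‖x‖ - 1)]

theorem contAt (D : Dat n k a m Mx R₀ α x₀ ε R u) {x : Euc n} (h1 : sA a x ≤ R)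
    (h2 : ε ≤ ‖x - x₀‖) : ContinuousAt u x := (D.sm x h1 h2).continuousAt

theorem nhds_in (_D : Dat n k a m Mx R₀ α x₀ ε R u) {x : Euc n} (h1 : sA a x < R)
    (h2 : ε < ‖x - x₀‖) : ∀ᶠ y in 𝓝 x, sA a y < R ∧ ε < ‖y - x₀‖ := by
  have hc2 : Continuous (fun z : Euc n => ‖z - x₀‖) := by fun_prop
  exact ((sA_cont a).tendsto x |>.eventually_lt_const h1).and
    ((hc2.tendsto x).eventually_const_lt h2)

theorem lin (D : Dat n k a m Mx R₀ α x₀ ε R u) {x : Euc n} (h1 : sA a x < R)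
    (h2 : ε < ‖x - x₀‖) :
    ∃ (v : OrthonormalBasis (Fin n) ℝ (Euc n)) (f : Fin n → ℝ), (∀ i, 0 < f i) ∧
      (0 ≤ ∑ i, f i * qf n (hessMat n u x) (v i)) ∧
      (∀ ξ, ∑ i, f i * qf n (hessMat n (fun y => fderiv ℝ u y ξ) x) (v i) = 0) ∧
      (∀ ξ, qf n (hessMat n u x) ξ ≤ 0 →
        ‖ξ‖ ^ 2 * ∑ i, f i ≤ n * ∑ i, f i * inner ℝ (v i) ξ ^ 2) :=
  linearize n k D.hk1 D.hkn x u (D.sm x h1.le h2.le) (D.kc x h1 h2)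
    ((D.nhds_in h1 h2).mono fun y hy => D.eq y hy.1 hy.2)

theorem small (D : Dat n k a m Mx R₀ α x₀ ε R u) {x : Euc n} (hx : ‖x - x₀‖ ≤ 2) :
    sA a x < R₀ ∧ ‖x‖ ≤ 5 / 2 := small_ball D.ha D.hn D.haM D.hR5 D.hx₀ hx

/-- `c_R - R ≥ 0`. -/
theorem cR_ge (D : Dat n k a m Mx R₀ α x₀ ε R u) : R ≤ prim n k a R₀ α R := by
  have hm := D.hm
  have h8 : 0 < 8 / m := by positivity
  have h1 := prim_lower n k D.hk1 a D.h0 (by linarith [D.hR1]) (by linarith) D.hα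
  have h2 := prim_ge n k D.hk1 a D.h0 (by linarith [D.hR1] : 0 < R₀) D.alpha_pos.le
    (by linarith [D.hR1] : 0 < 2 * R₀) (by linarith [D.hR, D.hR1] : 2 * R₀ ≤ R)
  nlinarith [D.hR1]

end Dat

end

noncomputable section

theorem esymm_two_gt (n k : ℕ) (hk1 : 1 ≤ k) (hkn : k ≤ n) : 1 < esymmVec n k (fun _ => 2) := by
  have h : esymmVec n k (fun _ => 2) = (n.choose k : ℝ) * 2 ^ k := by
    unfold esymmVec
    rw [Finset.sum_congr rfl (g := fun _ => (2 : ℝ) ^ k)]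
    · simp
    · intro s hs
      rw [Finset.prod_const, (Finset.mem_powersetCard.1 hs).2]
  rw [h]
  have h1 : (1 : ℝ) ≤ n.choose k := by exact_mod_cast Nat.choose_pos hkn
  have h2 : (2 : ℝ) ≤ 2 ^ k := le_self_pow₀ (by norm_num) (by omega)
  nlinarith

theorem modelHess_two (n j : ℕ) (hj1 : 1 ≤ j) (hjn : j ≤ n) (y : Euc n) :
    matSk n j (modelHess n (fun _ => 2) y 1 0) = esymmVec n j (fun _ => 2) := by
  obtain ⟨m, rfl⟩ : ∃ m, j = m + 1 := ⟨j - 1, by omega⟩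
  rw [matSk_modelHess n m hjn _ (fun _ => by norm_num) y 1 0 (by norm_num)]
  simp

theorem barrier_cone (n k : ℕ) (hk1 : 1 ≤ k) (hkn : k ≤ n) (a : Fin n → ℝ)
    (ha : ∀ i, 0 < a i) (hS : esymmVec n k a = 1) (y : Euc n) (p D η : ℝ)
    (hp : 1 ≤ p) (hD : D ≤ 0) (hη : 0 < η)
    (hrel : p ^ (k - 1) * (p + D * (2 * hkfun n k a * sA a y)) = 1) :
    GamM n k (modelHess n a y (p + η) D) ∧ 1 < matSk n k (modelHess n a y (p + η) D) := by
  have hs : ∑ i, a i * y i ^ 2 = 2 * sA a y := by rw [sA, quadA_diag]; ring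
  have hpk : 0 < p ^ (k - 1) := by positivity
  have hq : 0 < p + D * (2 * hkfun n k a * sA a y) := by
    by_contra h
    push Not at h
    nlinarith
  have hlow := modelHess_lower n k hk1 hkn a ha hS y (p + η) D (by linarith) hD
  have e : p + η + D * (hkfun n k a * (2 * sA a y)) = p + D * (2 * hkfun n k a * sA a y) + η := by
    ring
  simp only [hs, e] at hlow
  constructor
  · intro j hj1 hjk
    obtain ⟨i, rfl⟩ : ∃ i, j = i + 1 := ⟨j - 1, by omega⟩
    refine lt_of_lt_of_le ?_ (hlow i hjk)
    have := esymmVec_pos n (i + 1) (by omega) a ha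
    have h3 : 0 < (p + η) ^ i := by positivity
    positivity
  · have h := hlow (k - 1) (by omega)
    rw [show k - 1 + 1 = k by omega, hS, one_mul] at h
    refine lt_of_lt_of_le ?_ h
    have h2 : p ^ (k - 1) ≤ (p + η) ^ (k - 1) :=
      pow_le_pow_left₀ (by linarith) (by linarith) _
    calc (1 : ℝ) < 1 + p ^ (k - 1) * η := by nlinarith [mul_pos hpk hη]
      _ = p ^ (k - 1) * (p + D * (2 * hkfun n k a * sA a y) + η) := by rw [mul_add, hrel]
      _ ≤ _ := mul_le_mul_of_nonneg_right h2 (by linarith)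

namespace Dat

variable {n k : ℕ} {a : Fin n → ℝ} {m Mx R₀ α : ℝ} {x₀ : Euc n} {ε R : ℝ} {u : Euc n → ℝ}

theorem exists_level (D : Dat n k a m Mx R₀ α x₀ ε R u) (T : ℝ) (hT : 0 ≤ T) :
    ∃ x, sA a x = T := by
  have i : Fin n := ⟨0, by have := D.hn; omega⟩
  have h := sA_ge D.ham (ebasis n i)
  have h1 : ‖ebasis n i‖ = 1 := by simp [ebasis]
  rw [h1] at h
  have hm := D.hm
  have hp : 0 < sA a (ebasis n i) := by nlinarith
  refine ⟨Real.sqrt (T / sA a (ebasis n i)) • ebasis n i, ?_⟩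
  rw [sA_smul, Real.sq_sqrt (by positivity)]
  field_simp

theorem far (D : Dat n k a m Mx R₀ α x₀ ε R u) {x : Euc n} (h : R₀ ≤ sA a x) : 2 < ‖x - x₀‖ := by
  by_contra hc
  push Not at hc
  linarith [(D.small hc).1]

theorem lower_eta (D : Dat n k a m Mx R₀ α x₀ ε R u) (η : ℝ) (hη : 0 < η) (hηR : η * R ≤ 1) :
    (∀ x, R₀ ≤ sA a x → sA a x ≤ R → prim n k a R₀ α (sA a x) + η * (sA a x - R) ≤ u x) ∧
    (∀ x, sA a x ≤ 2 * R₀ → ε ≤ ‖x - x₀‖ → ‖x - x₀‖ ^ 2 - ε ^ 2 ≤ u x) := by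
  have hR1 := D.hR1
  have hR := D.hR
  have hε := D.hε
  have hε2 := D.hε2
  have hm := D.hm
  set f1 : Euc n → ℝ := fun x => u x - (prim n k a R₀ α (sA a x) + η * (sA a x - R)) with hf1
  set f2 : Euc n → ℝ := fun x => u x - (‖x - x₀‖ ^ 2 - ε ^ 2) with hf2
  set K1 : Set (Euc n) := {x | sA a x ≤ R} ∩ {x | R₀ ≤ sA a x} with hK1
  set K2 : Set (Euc n) := {x | sA a x ≤ 2 * R₀} ∩ {x | ε ≤ ‖x - x₀‖} with hK2
  have hc2 : Continuous (fun z : Euc n => ‖z - x₀‖) := by fun_prop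
  have hK1c : IsCompact K1 := (D.compact R).inter_right (isClosed_le continuous_const (sA_cont a))
  have hK2c : IsCompact K2 := (D.compact _).inter_right (isClosed_le continuous_const hc2)
  have hf1c : ContinuousOn f1 K1 := by
    intro x hx
    have h1 : ContinuousAt u x := D.contAt hx.1 (by linarith [D.far hx.2])
    have h2 : ContinuousAt (fun x => prim n k a R₀ α (sA a x)) x :=
      ContinuousAt.comp (g := prim n k a R₀ α)
        (prim_deriv n k D.hk1 a D.h0 D.alpha_pos.le (by linarith)
          (by linarith [show R₀ ≤ sA a x from hx.2])).continuousAt (sA_cont a).continuousAt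
    have h3 : ContinuousAt (fun x => η * (sA a x - R)) x :=
      (continuous_const.mul ((sA_cont a).sub continuous_const)).continuousAt
    exact (h1.sub (h2.add h3)).continuousWithinAt
  have hf2c : ContinuousOn f2 K2 := by
    intro x hx
    have h1 : ContinuousAt u x := D.contAt (by linarith [show sA a x ≤ 2 * R₀ from hx.1]) hx.2
    have h2 : ContinuousAt (fun x : Euc n => ‖x - x₀‖ ^ 2 - ε ^ 2) x := by fun_prop
    exact (h1.sub h2).continuousWithinAt
  obtain ⟨z1, hz1⟩ := D.exists_level R₀ (by linarith)
  have hK1n : K1.Nonempty := ⟨z1, by show sA a z1 ≤ R; linarith, hz1.ge⟩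
  have hK2n : K2.Nonempty := ⟨z1, by show sA a z1 ≤ 2 * R₀; linarith, by
    show ε ≤ ‖z1 - x₀‖; linarith [D.far hz1.ge]⟩
  obtain ⟨x1, hx1, hmin1⟩ := hK1c.exists_isMinOn hK1n hf1c
  obtain ⟨x2, hx2, hmin2⟩ := hK2c.exists_isMinOn hK2n hf2c
  have hm1 : ∀ y ∈ K1, f1 x1 ≤ f1 y := fun y hy => hmin1 hy
  have hm2 : ∀ y ∈ K2, f2 x2 ≤ f2 y := fun y hy => hmin2 hy
  have claim1 : f1 x1 < 0 → f1 x1 ≤ f2 x2 → False := by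
    intro hneg hle
    have ha1 : sA a x1 ≤ R := hx1.1
    have ha2 : R₀ ≤ sA a x1 := hx1.2
    have hfar := D.far ha2
    rcases ha1.lt_or_eq with ha1 | ha1
    · rcases ha2.lt_or_eq with ha2 | ha2
      · obtain ⟨d, hd, hd0, hrel⟩ := genInt_deriv n k D.hk1 a D.h0 D.alpha_pos.le
          (by linarith : 0 < sA a x1)
        obtain ⟨hg, hgt⟩ := barrier_cone n k D.hk1 D.hkn a D.ha D.hS x1 _ d η
          (genInt_ge_one n k a D.alpha_pos.le (by linarith : 0 < sA a x1)) hd0 hη hrel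
        have hloc : IsLocalMin f1 x1 := by
          have h1 := (sA_cont a).tendsto x1 |>.eventually_lt_const ha1
          have h2 := (sA_cont a).tendsto x1 |>.eventually_const_lt ha2
          filter_upwards [h1, h2] with y h3 h4 using hm1 y ⟨h3.le, h4.le⟩
        have h := touch_below n k D.hk1 D.hkn a x1 0 u (D.sm x1 ha1.le (by linarith))
          (fun z => prim n k a R₀ α z + η * (z - R)) (fun z => genInt n k a α z + η) d
          (by
            rw [sub_zero]
            filter_upwards [eventually_gt_nhds (by linarith : 0 < sA a x1)] with z hz
            have h1 := prim_deriv n k D.hk1 a D.h0 D.alpha_pos.le (by linarith : 0 < R₀) hz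
            have h2 := ((hasDerivAt_id z).sub_const R).const_mul η
            exact (h1.fun_add h2).congr_deriv (by simp))
          (by rw [sub_zero]; exact hd.add_const η)
          (by simpa only [sub_zero] using hloc)
          (by simpa only [sub_zero] using hg)
        simp only [sub_zero] at h
        rw [D.eq x1 ha1 (by linarith)] at h
        linarith
      · have hk2 : x1 ∈ K2 := ⟨by show sA a x1 ≤ 2 * R₀; linarith, by
          show ε ≤ ‖x1 - x₀‖; linarith⟩
        have h1 := hm2 x1 hk2
        have h2 : f1 x1 = u x1 - (0 + η * (R₀ - R)) := by
          simp only [hf1]; rw [← ha2]; simp [prim]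
        have h3 : f2 x1 = u x1 - (‖x1 - x₀‖ ^ 2 - ε ^ 2) := rfl
        have h4 : η * (R₀ - R) < 0 := mul_neg_of_pos_of_neg hη (by linarith)
        nlinarith
    · have h1 := D.bo x1 ha1
      have h2 : f1 x1 = 0 := by simp only [hf1]; rw [h1, ha1]; ring
      linarith
  have claim2 : f2 x2 < 0 → f2 x2 ≤ f1 x1 → False := by
    intro hneg hle
    have ha1 : sA a x2 ≤ 2 * R₀ := hx2.1
    have ha2 : ε ≤ ‖x2 - x₀‖ := hx2.2
    rcases ha2.lt_or_eq with ha2 | ha2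
    · rcases ha1.lt_or_eq with ha1 | ha1
      · have hloc : IsLocalMin f2 x2 := by
          have h1 := (sA_cont a).tendsto x2 |>.eventually_lt_const ha1
          have h2 := hc2.tendsto x2 |>.eventually_const_lt ha2
          filter_upwards [h1, h2] with y h3 h4 using hm2 y ⟨h3.le, h4.le⟩
        have h := touch_below n k D.hk1 D.hkn (fun _ => 2) x2 x₀ u
          (D.sm x2 (by linarith) (by linarith))
          (fun z => z - ε ^ 2) (fun _ => 1) 0
          (Eventually.of_forall fun z => (hasDerivAt_id z).sub_const (ε ^ 2))
          (hasDerivAt_const _ _)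
          (by
            have : f2 = fun y => u y - (sA (fun _ => 2) (y - x₀) - ε ^ 2) := by
              funext y; simp only [hf2, sA_two]
            rw [this] at hloc; exact hloc)
          (fun j hj1 hjk => by
            rw [modelHess_two n j hj1 (by linarith [D.hkn])]
            exact esymmVec_pos n j (by linarith [D.hkn]) _ (fun _ => by norm_num))
        rw [D.eq x2 (by linarith) ha2, modelHess_two n k D.hk1 D.hkn] at h
        linarith [esymm_two_gt n k D.hk1 D.hkn]
      · have hk1 : x2 ∈ K1 := ⟨by show sA a x2 ≤ R; linarith, by show R₀ ≤ sA a x2; linarith⟩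
        have h1 := hm1 x2 hk1
        have h2 : f1 x2 = u x2 - (prim n k a R₀ α (2 * R₀) + η * (2 * R₀ - R)) := by
          simp only [hf1]; rw [ha1]
        have h3 : f2 x2 = u x2 - (‖x2 - x₀‖ ^ 2 - ε ^ 2) := rfl
        have h4 : -1 ≤ η * (2 * R₀ - R) := by nlinarith
        have h8 : 0 < 8 / m := by positivity
        have h5 := prim_lower n k D.hk1 a D.h0 (by linarith [D.hR1]) (by linarith) D.hα
        have h6 : ‖x2 - x₀‖ ≤ ‖x2‖ + ‖x₀‖ := norm_sub_le _ _
        have h7 := D.hx₀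
        have h9 := sA_ge D.ham x2
        rw [ha1] at h9
        have h10 : ‖x2‖ ^ 2 ≤ 4 * R₀ / m := by
          rw [le_div_iff₀ hm]; nlinarith
        have h11 : 8 / m * R₀ = 2 * (4 * R₀ / m) := by ring
        have h12 : ‖x2 - x₀‖ ^ 2 ≤ (‖x2‖ + ‖x₀‖) ^ 2 :=
          pow_le_pow_left₀ (norm_nonneg _) h6 2
        nlinarith [sq_nonneg (‖x2‖ - ‖x₀‖), norm_nonneg x₀, norm_nonneg x2]
    · have h1 := D.bi x2 ha2.symm
      have h2 : f2 x2 = 0 := by simp only [hf2]; rw [h1, ← ha2]; ring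
      linarith
  have hpos : 0 ≤ f1 x1 ∧ 0 ≤ f2 x2 := by
    rcases le_total (f1 x1) (f2 x2) with h | h
    · have : 0 ≤ f1 x1 := by by_contra hc; exact claim1 (by linarith) h
      exact ⟨this, by linarith⟩
    · have : 0 ≤ f2 x2 := by by_contra hc; exact claim2 (by linarith) h
      exact ⟨by linarith, this⟩
  constructor
  · intro x h1 h2
    have h3 := hm1 x ⟨h2, h1⟩
    simp only [hf1] at h3 hpos
    linarith [hpos.1]
  · intro x h1 h2
    have h3 := hm2 x ⟨h1, h2⟩
    simp only [hf2] at h3 hpos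
    linarith [hpos.2]

theorem lower_out (D : Dat n k a m Mx R₀ α x₀ ε R u) {x : Euc n} (h1 : R₀ ≤ sA a x)
    (h2 : sA a x ≤ R) : prim n k a R₀ α (sA a x) ≤ u x := by
  have hRp : 0 < R := by linarith [D.hR, D.hR1]
  have ht : Tendsto (fun η : ℝ => prim n k a R₀ α (sA a x) + η * (sA a x - R)) (𝓝[>] 0)
      (𝓝 (prim n k a R₀ α (sA a x))) := by
    have hc : Continuous (fun η : ℝ => prim n k a R₀ α (sA a x) + η * (sA a x - R)) := by fun_prop
    have := hc.tendsto 0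
    simp only [zero_mul, add_zero] at this
    exact this.mono_left nhdsWithin_le_nhds
  refine le_of_tendsto ht ?_
  have h5 : ∀ᶠ t in 𝓝[>] (0 : ℝ), t < 1 / R :=
    (eventually_lt_nhds (by positivity)).filter_mono nhdsWithin_le_nhds
  filter_upwards [h5, self_mem_nhdsWithin] with η h6 h7
  refine (D.lower_eta η h7 ?_).1 x h1 h2
  rw [lt_div_iff₀ hRp] at h6
  exact h6.le

theorem lower_in (D : Dat n k a m Mx R₀ α x₀ ε R u) {x : Euc n} (h1 : sA a x ≤ 2 * R₀)
    (h2 : ε ≤ ‖x - x₀‖) : ‖x - x₀‖ ^ 2 - ε ^ 2 ≤ u x := by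
  have hRp : 0 < R := by linarith [D.hR, D.hR1]
  exact (D.lower_eta (1 / R) (by positivity) (by field_simp; rfl)).2 x h1 h2

end Dat

end

noncomputable section

theorem deriv_nonneg_right {f : ℝ → ℝ} {d : ℝ} (hf : HasDerivAt f d 0)
    (h : ∀ᶠ t in 𝓝[>] (0 : ℝ), f 0 ≤ f t) : 0 ≤ d := by
  have h4 := (hasDerivAt_iff_tendsto_slope.1 hf).mono_left
    (nhdsWithin_mono 0 (fun t (ht : 0 < t) => ht.ne') : 𝓝[>] (0 : ℝ) ≤ 𝓝[≠] 0)
  refine ge_of_tendsto h4 ?_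
  filter_upwards [h, self_mem_nhdsWithin] with t ht ht0
  have ht0' : (0 : ℝ) < t := ht0
  rw [slope_def_field, sub_zero]
  exact div_nonneg (by linarith) ht0'.le

theorem deriv_neg_right {f : ℝ → ℝ} {d : ℝ} (hf : HasDerivAt f d 0) (hd : d < 0) :
    ∀ᶠ t in 𝓝[>] (0 : ℝ), f t < f 0 := by
  have h4 := (hasDerivAt_iff_tendsto_slope.1 hf).mono_left
    (nhdsWithin_mono 0 (fun t (ht : 0 < t) => ht.ne') : 𝓝[>] (0 : ℝ) ≤ 𝓝[≠] 0)
  filter_upwards [h4.eventually_lt_const hd, self_mem_nhdsWithin] with t ht ht0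
  have ht0' : (0 : ℝ) < t := ht0
  rw [slope_def_field, sub_zero, div_lt_iff₀ ht0'] at ht
  linarith

theorem normal_form {n : ℕ} (ℓ : Euc n →L[ℝ] ℝ) (y : Euc n) (hy : y ≠ 0)
    (h : ∀ e, 0 < inner ℝ y e → 0 ≤ ℓ e) : ‖ℓ‖ ≤ ℓ y / ‖y‖ := by
  have hyp : 0 < ‖y‖ := norm_pos_iff.2 hy
  have hyy : inner ℝ y y = ‖y‖ ^ 2 := real_inner_self_eq_norm_sq y
  have hly : 0 ≤ ℓ y := h y (by rw [hyy]; positivity)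
  have hperp : ∀ w, inner ℝ y w = 0 → 0 ≤ ℓ w := by
    intro w hw
    have ht : Tendsto (fun t : ℝ => ℓ w + t * ℓ y) (𝓝[>] 0) (𝓝 (ℓ w)) := by
      have hc : Continuous (fun t : ℝ => ℓ w + t * ℓ y) := by fun_prop
      have := hc.tendsto 0
      simp only [zero_mul, add_zero] at this
      exact this.mono_left nhdsWithin_le_nhds
    refine ge_of_tendsto ht ?_
    filter_upwards [self_mem_nhdsWithin] with t ht0
    have ht0' : (0 : ℝ) < t := ht0
    have := h (w + t • y) (by
      rw [inner_add_right, hw, inner_smul_right, hyy]; positivity)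
    simpa using this
  have hperp0 : ∀ w, inner ℝ y w = 0 → ℓ w = 0 := by
    intro w hw
    have h1 := hperp w hw
    have h2 := hperp (-w) (by rw [inner_neg_right, hw, neg_zero])
    rw [map_neg] at h2
    linarith
  refine ContinuousLinearMap.opNorm_le_bound _ (by positivity) fun e => ?_
  have h1 := hperp0 (e - (inner ℝ y e / ‖y‖ ^ 2) • y) (by
    rw [inner_sub_right, inner_smul_right, hyy]; field_simp; ring)
  rw [map_sub, map_smul, smul_eq_mul, sub_eq_zero] at h1
  rw [h1, norm_mul, Real.norm_of_nonneg hly, norm_div, Real.norm_of_nonneg (sq_nonneg ‖y‖)]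
  have h2 : ‖inner ℝ y e‖ ≤ ‖y‖ * ‖e‖ := norm_inner_le_norm y e
  calc ‖inner ℝ y e‖ / ‖y‖ ^ 2 * ℓ y ≤ (‖y‖ * ‖e‖) / ‖y‖ ^ 2 * ℓ y := by gcongr
    _ = ℓ y / ‖y‖ * ‖e‖ := by field_simp

/-- The vector `A x`. -/
def Avec {n : ℕ} (a : Fin n → ℝ) (x : Euc n) : Euc n := WithLp.toLp 2 (fun i => a i * x i)

theorem inner_Avec {n : ℕ} (a : Fin n → ℝ) (x v : Euc n) :
    inner ℝ (Avec a x) v = ∑ i, a i * x i * v i := by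
  simp only [Avec, PiLp.inner_apply]
  refine Finset.sum_congr rfl fun i _ => ?_
  simp; ring

theorem norm_Avec_sq {n : ℕ} (a : Fin n → ℝ) (x : Euc n) :
    ‖Avec a x‖ ^ 2 = ∑ i, a i * (a i * x i ^ 2) := by
  rw [norm_sq_sum]
  refine Finset.sum_congr rfl fun i _ => ?_
  simp [Avec]; ring

theorem norm_Avec_le {n : ℕ} {a : Fin n → ℝ} {Mx : ℝ} (ha : ∀ i, 0 < a i) (hM : ∀ i, a i ≤ Mx)
    (x : Euc n) : ‖Avec a x‖ ^ 2 ≤ 2 * Mx * sA a x := by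
  rw [norm_Avec_sq, sA, quadA_diag, show 2 * Mx * (1 / 2 * ∑ i, a i * x i ^ 2)
    = Mx * ∑ i, a i * x i ^ 2 by ring, Finset.mul_sum]
  refine Finset.sum_le_sum fun i _ => ?_
  exact mul_le_mul_of_nonneg_right (hM i) (mul_nonneg (ha i).le (sq_nonneg _))

theorem sA_line_deriv {n : ℕ} (a : Fin n → ℝ) (x v : Euc n) :
    HasDerivAt (fun t : ℝ => sA a (x + t • v)) (inner ℝ (Avec a x) v) 0 := by
  rw [inner_Avec]; exact (hd2_quad n a x v).hasDerivAt

theorem inner_Avec_self {n : ℕ} (a : Fin n → ℝ) (x : Euc n) :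
    inner ℝ (Avec a x) x = 2 * sA a x := by
  rw [inner_Avec, sA, quadA_diag, Finset.mul_sum, Finset.mul_sum]
  refine Finset.sum_congr rfl fun i _ => ?_
  ring

namespace Dat

variable {n k : ℕ} {a : Fin n → ℝ} {m Mx R₀ α : ℝ} {x₀ : Euc n} {ε R : ℝ} {u : Euc n → ℝ}

theorem kcompact (D : Dat n k a m Mx R₀ α x₀ ε R u) (T δ : ℝ) :
    IsCompact ({x : Euc n | sA a x ≤ T} ∩ {x | δ ≤ ‖x - x₀‖}) := by
  have hc2 : Continuous (fun z : Euc n => ‖z - x₀‖) := by fun_prop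
  exact (D.compact T).inter_right (isClosed_le continuous_const hc2)

theorem upper_eta (D : Dat n k a m Mx R₀ α x₀ ε R u) (η : ℝ) (hη : 0 < η) (hη1 : η < 1)
    {x : Euc n} (h1 : sA a x ≤ R) (h2 : ε ≤ ‖x - x₀‖) :
    u x ≤ (1 - η) * sA a x + (prim n k a R₀ α R - R) + η * R := by
  have hRp : 0 < R := by linarith [D.hR, D.hR1]
  set g : Euc n → ℝ := fun x => (1 - η) * sA a x + (prim n k a R₀ α R - R) - u x with hg
  have hgc : ContinuousOn g ({x : Euc n | sA a x ≤ R} ∩ {x | ε ≤ ‖x - x₀‖}) := by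
    intro y hy
    have h3 : ContinuousAt (fun x => (1 - η) * sA a x + (prim n k a R₀ α R - R)) y :=
      ((continuous_const.mul (sA_cont a)).add continuous_const).continuousAt
    exact (h3.sub (D.contAt hy.1 hy.2)).continuousWithinAt
  obtain ⟨z, hz, hmin⟩ := (D.kcompact R ε).exists_isMinOn ⟨x, h1, h2⟩ hgc
  have hx : g z ≤ g x := hmin ⟨h1, h2⟩
  have key : -(η * R) ≤ g z := by
    have ha1 : sA a z ≤ R := hz.1
    have ha2 : ε ≤ ‖z - x₀‖ := hz.2
    have hc := D.cR_ge
    rcases ha2.lt_or_eq with ha2 | ha2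
    · rcases ha1.lt_or_eq with ha1 | ha1
      · exfalso
        have hloc : IsLocalMin g z := by
          filter_upwards [D.nhds_in ha1 ha2] with y hy using hmin ⟨hy.1.le, hy.2.le⟩
        have h := touch_above n k D.hk1 D.hkn a z 0 u (D.sm z ha1.le ha2.le)
          (fun z => (1 - η) * z + (prim n k a R₀ α R - R)) (fun _ => 1 - η) 0
          (Eventually.of_forall fun z => by
            simpa using ((hasDerivAt_id z).const_mul (1 - η)).add_const (prim n k a R₀ α R - R))
          (hasDerivAt_const _ _)
          (by simpa only [sub_zero] using hloc)
          (D.kc z ha1 ha2)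
        rw [D.eq z ha1 ha2] at h
        obtain ⟨j, rfl⟩ : ∃ j, k = j + 1 := ⟨k - 1, by have := D.hk1; omega⟩
        rw [matSk_modelHess n j D.hkn a D.ha _ _ _ (by linarith), D.hS] at h
        have h3 : (1 - η) ^ j ≤ 1 := pow_le_one₀ (by linarith) (by linarith)
        nlinarith [pow_pos (by linarith : 0 < 1 - η) j]
      · have := D.bo z ha1
        simp only [hg]; rw [this, ha1]; linarith
    · have h3 := D.bi z ha2.symm
      have h4 : 0 ≤ sA a z := le_trans (by have := D.hm; positivity) (sA_ge D.ham z)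
      simp only [hg]; rw [h3]
      nlinarith [mul_nonneg (by linarith : 0 ≤ 1 - η) h4, mul_pos hη hRp]
  simp only [hg] at key hx
  linarith

theorem upper (D : Dat n k a m Mx R₀ α x₀ ε R u)
    {x : Euc n} (h1 : sA a x ≤ R) (h2 : ε ≤ ‖x - x₀‖) :
    u x ≤ sA a x + (prim n k a R₀ α R - R) := by
  have ht : Tendsto (fun η : ℝ => (1 - η) * sA a x + (prim n k a R₀ α R - R) + η * R) (𝓝[>] 0)
      (𝓝 (sA a x + (prim n k a R₀ α R - R))) := by
    have hc : Continuous (fun η : ℝ => (1 - η) * sA a x + (prim n k a R₀ α R - R) + η * R) := by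
      fun_prop
    have := hc.tendsto 0
    simp only [zero_mul, add_zero, sub_zero, one_mul] at this
    exact this.mono_left nhdsWithin_le_nhds
  refine ge_of_tendsto ht ?_
  have h5 : ∀ᶠ t in 𝓝[>] (0 : ℝ), t < 1 :=
    (eventually_lt_nhds (by norm_num)).filter_mono nhdsWithin_le_nhds
  filter_upwards [h5, self_mem_nhdsWithin] with η h6 h7 using D.upper_eta η h7 h6 h1 h2

/-- Gradient estimate on the outer boundary. -/
theorem outer (D : Dat n k a m Mx R₀ α x₀ ε R u) {x : Euc n} (hx : sA a x = R) :
    ‖innerSL ℝ (Avec a x) - fderiv ℝ u x‖ ≤ α * (1 + 2 * Mx) := by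
  have hR1 := D.hR1
  have hR := D.hR
  have hα := D.alpha_pos
  have hfar := D.far (x := x) (by linarith)
  have hε2 := D.hε2
  set ℓ : Euc n →L[ℝ] ℝ := innerSL ℝ (Avec a x) - fderiv ℝ u x with hℓ
  have hN : Avec a x ≠ 0 := by
    intro h
    have := inner_Avec_self a x
    rw [h, inner_zero_left, hx] at this
    linarith
  have hNp : 0 < ‖Avec a x‖ := norm_pos_iff.2 hN
  have hsm := D.sm x hx.le (by linarith)
  have hline : ∀ e, HasDerivAt (fun t : ℝ => sA a (x + t • e) - u (x + t • e)) (ℓ e) 0 := by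
    intro e
    have h1 := (HD2.line hsm e).hasDerivAt
    exact (sA_line_deriv a x e).fun_sub h1
  have hsn : HasDerivAt (fun t : ℝ => sA a (x + t • (-Avec a x))) (-‖Avec a x‖ ^ 2) 0 := by
    refine (sA_line_deriv a x _).congr_deriv ?_
    rw [inner_neg_right, real_inner_self_eq_norm_sq]
  have hev : ∀ e, ∀ᶠ t in 𝓝[>] (0 : ℝ), ε ≤ ‖x + t • e - x₀‖ ∧ R₀ ≤ sA a (x + t • e) := by
    intro e
    have hc2 : Continuous (fun z : Euc n => ‖z - x₀‖) := by fun_prop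
    have h1 := (hc2.tendsto x).comp (line_tendsto x e)
    have h2 := ((sA_cont a).tendsto x).comp (line_tendsto x e)
    have h3 := (h1.eventually_const_lt (by linarith : ε < ‖x - x₀‖)).and
      (h2.eventually_const_lt (by linarith : R₀ < sA a x))
    exact (h3.filter_mono nhdsWithin_le_nhds).mono fun t ht => ⟨ht.1.le, ht.2.le⟩
  have hnf := normal_form ℓ (-Avec a x) (neg_ne_zero.2 hN) (by
    intro e he
    rw [inner_neg_left] at he
    have h1 := deriv_neg_right (sA_line_deriv a x e) (by linarith)
    refine deriv_nonneg_right (hline e) ?_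
    filter_upwards [h1, hev e] with t h2 h3
    simp only [zero_smul, add_zero] at h2 ⊢
    have h4 := D.upper (x := x + t • e) (by linarith) h3.1
    have h5 := D.bo x hx
    linarith)
  have hval : ℓ (-Avec a x) ≤ (genInt n k a α R - 1) * ‖Avec a x‖ ^ 2 := by
    have hp : HasDerivAt (fun t : ℝ => prim n k a R₀ α (sA a (x + t • (-Avec a x))))
        (genInt n k a α R * (-‖Avec a x‖ ^ 2)) 0 := by
      have h1 := prim_deriv n k D.hk1 a D.h0 hα.le (by linarith : 0 < R₀) (by linarith : 0 < R)
      refine HasDerivAt.comp (h₂ := prim n k a R₀ α) 0 ?_ hsn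
      simpa [hx] using h1
    have h2 := deriv_nonneg_right ((hsn.fun_sub hp).fun_sub (hline (-Avec a x))) (by
      have h3 := deriv_neg_right hsn (by nlinarith [sq_pos_of_pos hNp])
      filter_upwards [h3, hev (-Avec a x)] with t h4 h5
      simp only [zero_smul, add_zero] at h4 ⊢
      have h6 := D.lower_out h5.2 (by linarith)
      have h7 := D.bo x hx
      rw [h7, hx]
      linarith)
    linarith
  rw [norm_neg] at hnf
  have hφ := genInt_le n k D.hk1 a hα.le (by linarith : 0 < R)
  have hRe : R ^ genExp n k a ≤ R⁻¹ := by
    rw [← rpow_neg_one]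
    exact rpow_le_rpow_of_exponent_le (by linarith) D.he.le
  have hRp : 0 < R := by linarith
  have hA2 := norm_Avec_le D.ha D.haM x
  rw [hx] at hA2
  have hMx : 0 < Mx := lt_of_lt_of_le (D.ha ⟨0, by have := D.hn; omega⟩) (D.haM _)
  calc ‖ℓ‖ ≤ ℓ (-Avec a x) / ‖Avec a x‖ := hnf
    _ ≤ (genInt n k a α R - 1) * ‖Avec a x‖ ^ 2 / ‖Avec a x‖ := by gcongr
    _ = (genInt n k a α R - 1) * ‖Avec a x‖ := by field_simp
    _ ≤ (α * R⁻¹) * (1 + 2 * Mx * R) := by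
      have h1 : ‖Avec a x‖ ≤ 1 + 2 * Mx * R := by nlinarith [sq_nonneg (‖Avec a x‖ - 1)]
      have h2 : genInt n k a α R - 1 ≤ α * R⁻¹ :=
        hφ.trans (mul_le_mul_of_nonneg_left hRe hα.le)
      exact mul_le_mul h2 h1 hNp.le (by positivity)
    _ = α * (R⁻¹ + 2 * Mx) := by field_simp
    _ ≤ α * (1 + 2 * Mx) := by
      have : R⁻¹ ≤ 1 := inv_le_one_of_one_le₀ (by linarith)
      gcongr

end Dat

end

noncomputable section

/-- The upper bound for `u` near the hole. -/
def M0 (n k : ℕ) (a : Fin n → ℝ) (R₀ α : ℝ) : ℝ :=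
  R₀ + α * (R₀ ^ (genExp n k a + 1) / (-genExp n k a - 1))

/-- The radial profile. -/
def Hrad (γ ε z : ℝ) : ℝ := ∫ τ in (ε ^ 2)..z, τ ^ (-γ)

theorem rpow_intble {γ s t : ℝ} (hs : 0 < s) (ht : 0 < t) :
    IntervalIntegrable (fun τ : ℝ => τ ^ (-γ)) volume s t := by
  apply intervalIntegral.intervalIntegrable_rpow
  right
  intro h
  have := h.1
  have : 0 < min s t := lt_min hs ht
  linarith [h.1]

theorem Hrad_deriv {γ ε z : ℝ} (hε : 0 < ε) (hz : 0 < z) :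
    HasDerivAt (Hrad γ ε) (z ^ (-γ)) z := by
  have hc : ContinuousOn (fun τ : ℝ => τ ^ (-γ)) (Set.Ioi 0) := fun t ht =>
    (continuousAt_rpow_const t _ (Or.inl (ne_of_gt ht))).continuousWithinAt
  exact intervalIntegral.integral_hasDerivAt_right (rpow_intble (by positivity) hz)
    (hc.stronglyMeasurableAtFilter isOpen_Ioi z hz)
    (continuousAt_rpow_const z _ (Or.inl hz.ne'))

theorem Hrad_pos {γ ε : ℝ} (hε : 0 < ε) (hε1 : ε < 1) : 0 < Hrad γ ε 1 := by
  refine intervalIntegral.intervalIntegral_pos_of_pos_on (rpow_intble (by positivity) one_pos) ?_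
    (by nlinarith)
  intro t ht
  exact rpow_pos_of_pos (lt_trans (by positivity) ht.1) _

namespace Dat

variable {n k : ℕ} {a : Fin n → ℝ} {m Mx R₀ α : ℝ} {x₀ : Euc n} {ε R : ℝ} {u : Euc n → ℝ}

theorem M0_pos (D : Dat n k a m Mx R₀ α x₀ ε R u) : 1 ≤ M0 n k a R₀ α := by
  have h1 := D.hR1
  have h2 := D.alpha_pos
  have h3 : 0 < -genExp n k a - 1 := by linarith [D.he]
  have : 0 ≤ α * (R₀ ^ (genExp n k a + 1) / (-genExp n k a - 1)) := by positivity
  unfold M0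
  linarith

theorem le_M0 (D : Dat n k a m Mx R₀ α x₀ ε R u) {x : Euc n} (h1 : ε ≤ ‖x - x₀‖)
    (h2 : ‖x - x₀‖ ≤ 2) : u x ≤ M0 n k a R₀ α := by
  have h3 := (D.small h2).1
  have hR := D.hR
  have hR1 := D.hR1
  have h4 := D.upper (x := x) (by linarith) h1
  have h5 := prim_upper n k D.hk1 a D.h0 D.he (by linarith : 0 < R₀) D.alpha_pos.le
    (by linarith : R₀ ≤ R)
  unfold M0
  linarith

theorem nonneg (D : Dat n k a m Mx R₀ α x₀ ε R u) {x : Euc n} (h1 : ε ≤ ‖x - x₀‖)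
    (h2 : ‖x - x₀‖ ≤ 2) : 0 ≤ u x := by
  have h3 := (D.small h2).1
  have h4 := D.lower_in (x := x) (by linarith [D.hR1]) h1
  have := D.hε
  nlinarith

theorem radial_upper (D : Dat n k a m Mx R₀ α x₀ ε R u) {x : Euc n} (h1 : ε ≤ ‖x - x₀‖)
    (h2 : ‖x - x₀‖ ≤ 1) :
    u x ≤ M0 n k a R₀ α / Hrad (n / (2 * k)) ε 1 * Hrad (n / (2 * k)) ε (‖x - x₀‖ ^ 2) := by
  have hε := D.hε
  have hR := D.hR
  have hR1 := D.hR1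
  have hn := D.hn
  have hk1 := D.hk1
  have hkp : (0 : ℝ) < k := by exact_mod_cast hk1
  have hnp : (0 : ℝ) < n := by exact_mod_cast (by omega : 0 < n)
  set γ : ℝ := n / (2 * k) with hγ
  have hJ : 0 < Hrad γ ε 1 := Hrad_pos hε (by linarith [D.hε2])
  set c := M0 n k a R₀ α / Hrad γ ε 1 with hc
  have hcp : 0 < c := div_pos (by linarith [D.M0_pos]) hJ
  set g : Euc n → ℝ := fun x => c * Hrad γ ε (sA (fun _ => 2) (x - x₀)) - u x with hg
  set K : Set (Euc n) := Metric.closedBall x₀ 1 ∩ {x | ε ≤ ‖x - x₀‖} with hK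
  have hc2 : Continuous (fun z : Euc n => ‖z - x₀‖) := by fun_prop
  have hKc : IsCompact K := (isCompact_closedBall x₀ 1).inter_right
    (isClosed_le continuous_const hc2)
  have hK1 : ∀ y ∈ K, ‖y - x₀‖ ≤ 1 := fun y hy => by
    have := hy.1; rwa [Metric.mem_closedBall, dist_eq_norm] at this
  have hsR : ∀ y : Euc n, ‖y - x₀‖ ≤ 1 → sA a y < R := fun y hy => by
    linarith [(D.small (x := y) (by linarith)).1]
  have hz : ∀ y : Euc n, ε ≤ ‖y - x₀‖ → 0 < sA (fun _ => 2) (y - x₀) := fun y hy => by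
    rw [sA_two]; have : 0 < ‖y - x₀‖ := by linarith
    positivity
  have hgc : ContinuousOn g K := by
    intro y hy
    have h3 : ContinuousAt (fun x : Euc n => Hrad γ ε (sA (fun _ => 2) (x - x₀))) y := by
      refine ContinuousAt.comp (g := Hrad γ ε) (Hrad_deriv hε (hz y hy.2)).continuousAt ?_
      exact ((sA_cont _).comp (continuous_id.sub continuous_const)).continuousAt
    exact ((h3.const_mul c).sub (D.contAt (hsR y (hK1 y hy)).le hy.2)).continuousWithinAt
  have hxK : x ∈ K := ⟨by rw [Metric.mem_closedBall, dist_eq_norm]; exact h2, h1⟩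
  obtain ⟨z, hzK, hmin⟩ := hKc.exists_isMinOn ⟨x, hxK⟩ hgc
  have hx : g z ≤ g x := hmin hxK
  have key : 0 ≤ g z := by
    have ha1 := hK1 z hzK
    have ha2 : ε ≤ ‖z - x₀‖ := hzK.2
    have hsz := hsR z ha1
    rcases ha2.lt_or_eq with ha2 | ha2
    · rcases ha1.lt_or_eq with ha1 | ha1
      · exfalso
        have hloc : IsLocalMin g z := by
          filter_upwards [hc2.tendsto z |>.eventually_lt_const ha1,
            hc2.tendsto z |>.eventually_const_lt ha2] with y h3 h4
          exact hmin ⟨by rw [Metric.mem_closedBall, dist_eq_norm]; exact h3.le, h4.le⟩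
        have hzp := hz z ha2.le
        have hd : HasDerivAt (fun τ : ℝ => c * τ ^ (-γ))
            (c * (-γ * (sA (fun _ => 2) (z - x₀)) ^ (-γ - 1))) (sA (fun _ => 2) (z - x₀)) :=
          (hasDerivAt_rpow_const (Or.inl hzp.ne')).const_mul c
        have h := touch_above n k D.hk1 D.hkn (fun _ => 2) z x₀ u (D.sm z hsz.le ha2.le)
          (fun z => c * Hrad γ ε z) (fun τ => c * τ ^ (-γ)) _
          (by
            filter_upwards [eventually_gt_nhds hzp] with y hy
            exact (Hrad_deriv hε hy).const_mul c)
          hd hloc (D.kc z hsz ha2)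
        rw [D.eq z hsz ha2, modelHess_radial n k D.hk1 D.hkn _ _ _ ?_ ?_] at h
        · linarith
        · exact mul_pos hcp (rpow_pos_of_pos hzp _)
        · rw [← norm_sq_sum, ← sA_two]
          set w := sA (fun _ => 2) (z - x₀) with hw
          have e3 : w ^ (-γ - 1) * w = w ^ (-γ) := by
            rw [rpow_sub_one hzp.ne']; field_simp
          have e4 : γ * (2 * k / n) = 1 := by rw [hγ]; field_simp
          show c * w ^ (-γ) + c * (-γ * w ^ (-γ - 1)) * (2 * ↑k / ↑n * w) = 0
          calc _ = c * w ^ (-γ) - c * (γ * (2 * k / n)) * (w ^ (-γ - 1) * w) := by ring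
            _ = 0 := by rw [e3, e4]; ring
      · simp only [hg, sA_two]
        rw [ha1, one_pow, hc, div_mul_cancel₀ _ hJ.ne']
        linarith [D.le_M0 (x := z) ha2.le (by linarith)]
    · simp only [hg, sA_two]
      rw [← ha2, D.bi z ha2.symm]
      simp [Hrad]
  simp only [hg, sA_two] at key hx
  linarith

/-- Gradient estimate on the inner sphere. -/
theorem inner_grad (D : Dat n k a m Mx R₀ α x₀ ε R u) {x : Euc n} (hx : ‖x - x₀‖ = ε) :
    ‖fderiv ℝ u x‖ ≤ 2 * M0 n k a R₀ α * ε ^ (1 - (n : ℝ) / k) / Hrad (n / (2 * k)) ε 1 := by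
  have hε := D.hε
  have hε2 := D.hε2
  have hR := D.hR
  have hR1 := D.hR1
  have hk1 := D.hk1
  have hkp : (0 : ℝ) < k := by exact_mod_cast hk1
  have hs := (D.small (x := x) (by linarith)).1
  have hsm := D.sm x (by linarith) hx.ge
  set y := x - x₀ with hy
  have hy0 : y ≠ 0 := by rw [← norm_pos_iff, hx]; exact hε
  have hc2 : Continuous (fun z : Euc n => ‖z - x₀‖) := by fun_prop
  have hnear : ∀ e, ∀ᶠ t in 𝓝[>] (0 : ℝ), ‖x + t • e - x₀‖ < 1 := by
    intro e
    have h1 := (hc2.tendsto x).comp (line_tendsto x e)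
    exact (h1.eventually_lt_const (by linarith : ‖x - x₀‖ < 1)).filter_mono nhdsWithin_le_nhds
  have hnf := normal_form (fderiv ℝ u x) y hy0 (by
    intro e he
    refine deriv_nonneg_right (HD2.line hsm e).hasDerivAt ?_
    filter_upwards [hnear e, self_mem_nhdsWithin] with t h1 h2
    have h2' : (0 : ℝ) < t := h2
    simp only [zero_smul, add_zero]
    rw [D.bi x hx]
    refine D.nonneg ?_ (by linarith)
    have e1 : x + t • e - x₀ = y + t • e := by rw [hy]; abel
    have e2 : ‖y + t • e‖ ^ 2 = ‖y‖ ^ 2 + 2 * (t * inner ℝ y e) + t ^ 2 * ‖e‖ ^ 2 := by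
      rw [norm_add_sq_real, inner_smul_right, norm_smul, mul_pow, Real.norm_eq_abs, sq_abs]
    rw [e1]
    rw [hx] at e2
    refine le_of_sq_le_sq (by rw [e2]; nlinarith [mul_pos h2' he, sq_nonneg (t * ‖e‖)])
      (norm_nonneg _))
  set γ : ℝ := n / (2 * k) with hγ
  set c := M0 n k a R₀ α / Hrad γ ε 1 with hc
  have hval : fderiv ℝ u x y ≤ c * (ε ^ 2) ^ (-γ) * (2 * ε ^ 2) := by
    have hl : HasDerivAt (fun t : ℝ => ‖x + t • y - x₀‖ ^ 2) (2 * ε ^ 2) 0 := by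
      have e1 : (fun t : ℝ => ‖x + t • y - x₀‖ ^ 2) = fun t : ℝ => (1 + t) ^ 2 * ε ^ 2 := by
        funext t
        have : x + t • y - x₀ = (1 + t) • y := by rw [add_smul, one_smul, hy]; abel
        rw [this, norm_smul, mul_pow, hx, Real.norm_eq_abs, sq_abs]
      rw [e1]
      have h2 : HasDerivAt (fun t : ℝ => (1 + t)) 1 0 := by
        simpa using (hasDerivAt_id (0 : ℝ)).const_add 1
      refine ((h2.fun_pow 2).mul_const (ε ^ 2)).congr_deriv ?_
      norm_num
    have hH : HasDerivAt (fun t : ℝ => c * Hrad γ ε (‖x + t • y - x₀‖ ^ 2))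
        (c * ((ε ^ 2) ^ (-γ) * (2 * ε ^ 2))) 0 := by
      have h1 : HasDerivAt (Hrad γ ε) ((ε ^ 2) ^ (-γ)) (‖x + (0 : ℝ) • y - x₀‖ ^ 2) := by
        have : ‖x + (0 : ℝ) • y - x₀‖ ^ 2 = ε ^ 2 := by rw [zero_smul, add_zero, ← hy, hx]
        rw [this]
        exact Hrad_deriv hε (by positivity)
      exact (HasDerivAt.comp (h₂ := Hrad γ ε) (0 : ℝ) h1 hl).const_mul c
    have h3 := deriv_nonneg_right (hH.fun_sub (HD2.line hsm y).hasDerivAt) (by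
      filter_upwards [hnear y, self_mem_nhdsWithin] with t h1 h2
      have h2' : (0 : ℝ) < t := h2
      have h4 : ε ≤ ‖x + t • y - x₀‖ := by
        have : x + t • y - x₀ = (1 + t) • y := by rw [add_smul, one_smul, hy]; abel
        rw [this, norm_smul, hx, Real.norm_of_nonneg (by linarith)]
        nlinarith
      have h5 := D.radial_upper h4 h1.le
      rw [← hγ, ← hc] at h5
      have h6 : Hrad γ ε (ε ^ 2) = 0 := by unfold Hrad; exact intervalIntegral.integral_same
      simp only [zero_smul, add_zero]
      rw [D.bi x hx, ← hy, hx, h6]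
      linarith)
    linarith
  rw [hx] at hnf
  refine hnf.trans ?_
  rw [div_le_iff₀ hε]
  refine hval.trans (le_of_eq ?_)
  have e1 : (ε ^ 2) ^ (-γ) = ε ^ (-(n : ℝ) / k) := by
    rw [← rpow_natCast, ← rpow_mul hε.le]
    congr 1
    rw [hγ]; push_cast; field_simp
  have e2 : ε ^ (1 - (n : ℝ) / k) = ε ^ (-(n : ℝ) / k) * ε := by
    rw [show 1 - (n : ℝ) / k = -(n : ℝ) / k + 1 by ring, rpow_add_one hε.ne']
  rw [e1, e2, hc]; ring

end Dat

/-! ### The constants `C_ε` -/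

theorem Ceps_mul (n k : ℕ) (C ε : ℝ) : Ceps n k C ε = C * Ceps n k 1 ε := by
  unfold Ceps
  split_ifs <;> ring

theorem Ceps_inner (n k : ℕ) (hk1 : 1 ≤ k) : ∃ K : ℝ, 0 < K ∧ ∀ ε, 0 < ε → ε < 1 / 2 →
    2 * ε ^ (1 - (n : ℝ) / k) / Hrad (n / (2 * k)) ε 1 ≤ K * Ceps n k 1 ε := by
  have hkp : (0 : ℝ) < k := by exact_mod_cast hk1
  by_cases c1 : 2 * k < n
  · set p : ℝ := (n : ℝ) / k - 2 with hp
    have hp0 : 0 < p := by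
      have : (2 : ℝ) * k < n := by exact_mod_cast c1
      rw [hp, sub_pos, lt_div_iff₀ hkp]; exact this
    have h2 : (1 / 2 : ℝ) ^ p < 1 := rpow_lt_one (by norm_num) (by norm_num) hp0
    refine ⟨1 / (1 - (1 / 2 : ℝ) ^ p), by
      have : 0 < 1 - (1 / 2 : ℝ) ^ p := by linarith
      positivity, fun ε hε hε2 => ?_⟩
    have hJ : Hrad (n / (2 * k)) ε 1 = 2 * (ε ^ (-p) - 1) / p := by
      unfold Hrad
      rw [integral_rpow (Or.inr ⟨by
        intro h
        have : (n : ℝ) / k = 2 := by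
          have h3 : (n : ℝ) / (2 * k) = 1 := by linarith
          field_simp at h3 ⊢; linarith
        linarith, by
        intro h
        have h4 := h.1
        have : 0 < min (ε ^ 2) 1 := lt_min (by positivity) one_pos
        linarith⟩)]
      rw [one_rpow, ← rpow_natCast, ← rpow_mul hε.le]
      have e1 : -((n : ℝ) / (2 * k)) + 1 = -p / 2 := by rw [hp]; field_simp; ring
      rw [e1, show ((2 : ℕ) : ℝ) * (-p / 2) = -p by push_cast; ring]
      field_simp
      ring
    have hq : ε ^ p ≤ (1 / 2 : ℝ) ^ p := rpow_le_rpow hε.le hε2.le hp0.le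
    have hqp : 0 < ε ^ p := rpow_pos_of_pos hε p
    have e2 : ε ^ (1 - (n : ℝ) / k) = (ε ^ p)⁻¹ * ε⁻¹ := by
      rw [show 1 - (n : ℝ) / k = -p - 1 by rw [hp]; ring, rpow_sub_one hε.ne', rpow_neg hε.le]
      rfl
    have e3 : Ceps n k 1 ε = p * ε⁻¹ := by
      unfold Ceps; rw [if_pos c1]; ring
    rw [hJ, e2, e3, rpow_neg hε.le]
    have h5 : 0 < 1 - ε ^ p := by linarith
    have h6 : 2 * ((ε ^ p)⁻¹ * ε⁻¹) / (2 * ((ε ^ p)⁻¹ - 1) / p) = 1 / (1 - ε ^ p) * (p * ε⁻¹) := by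
      have : (ε ^ p)⁻¹ - 1 = (1 - ε ^ p) / ε ^ p := by field_simp
      rw [this]; field_simp
    rw [h6]
    have h7 : 0 < 1 - (1 / 2 : ℝ) ^ p := by linarith
    gcongr
  · by_cases c2 : 2 * k = n
    · refine ⟨1, one_pos, fun ε hε hε2 => ?_⟩
      have hnk : (n : ℝ) = 2 * k := by exact_mod_cast c2.symm
      have hlog : Real.log ε < 0 := Real.log_neg hε (by linarith)
      have hJ : Hrad (n / (2 * k)) ε 1 = 2 * |Real.log ε| := by
        unfold Hrad
        rw [hnk, div_self (by positivity)]
        simp only [rpow_neg_one]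
        rw [integral_inv_of_pos (by positivity) one_pos, one_div, Real.log_inv, Real.log_pow,
          abs_of_neg hlog]
        push_cast; ring
      have e3 : Ceps n k 1 ε = ε⁻¹ * |Real.log ε|⁻¹ := by
        unfold Ceps; rw [if_neg c1, if_pos c2]; ring
      rw [hJ, e3, hnk, show (1 : ℝ) - 2 * k / k = -1 by field_simp; norm_num, rpow_neg_one]
      have : 0 < |Real.log ε| := abs_pos.2 hlog.ne
      refine le_of_eq ?_
      field_simp
    · set p : ℝ := 2 - (n : ℝ) / k with hp
      have hp0 : 0 < p := by
        have : (n : ℝ) < 2 * k := by exact_mod_cast (by omega : n < 2 * k)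
        rw [hp, sub_pos, div_lt_iff₀ hkp]; exact this
      have h2 : (1 / 2 : ℝ) ^ p < 1 := rpow_lt_one (by norm_num) (by norm_num) hp0
      refine ⟨1 / (1 - (1 / 2 : ℝ) ^ p), by
        have : 0 < 1 - (1 / 2 : ℝ) ^ p := by linarith
        positivity, fun ε hε hε2 => ?_⟩
      have hJ : Hrad (n / (2 * k)) ε 1 = 2 * (1 - ε ^ p) / p := by
        unfold Hrad
        rw [integral_rpow (Or.inr ⟨by
          intro h
          have : (n : ℝ) / k = 2 := by
            have h3 : (n : ℝ) / (2 * k) = 1 := by linarith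
            field_simp at h3 ⊢; linarith
          linarith, by
          intro h
          have h4 := h.1
          have : 0 < min (ε ^ 2) 1 := lt_min (by positivity) one_pos
          linarith⟩)]
        rw [one_rpow, ← rpow_natCast, ← rpow_mul hε.le]
        have e1 : -((n : ℝ) / (2 * k)) + 1 = p / 2 := by rw [hp]; field_simp; ring
        rw [e1, show ((2 : ℕ) : ℝ) * (p / 2) = p by push_cast; ring]
        field_simp
      have hq : ε ^ p ≤ (1 / 2 : ℝ) ^ p := rpow_le_rpow hε.le hε2.le hp0.le
      have e3 : Ceps n k 1 ε = p * ε ^ (1 - (n : ℝ) / k) := by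
        unfold Ceps; rw [if_neg c1, if_neg c2]; ring
      have hqp : 0 < ε ^ (1 - (n : ℝ) / k) := rpow_pos_of_pos hε _
      rw [hJ, e3]
      have h5 : 0 < 1 - ε ^ p := by linarith
      have h7 : 0 < 1 - (1 / 2 : ℝ) ^ p := by linarith
      have h6 : 2 * ε ^ (1 - (n : ℝ) / k) / (2 * (1 - ε ^ p) / p)
          = 1 / (1 - ε ^ p) * (p * ε ^ (1 - (n : ℝ) / k)) := by field_simp
      rw [h6]
      gcongr

theorem Ceps_lower (n k : ℕ) (hk1 : 1 ≤ k) (hkn : k ≤ n) : ∃ K : ℝ, 0 < K ∧ ∀ ε, 0 < ε →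
    ε < 1 / 2 → 1 ≤ K * Ceps n k 1 ε := by
  have hkp : (0 : ℝ) < k := by exact_mod_cast hk1
  by_cases c1 : 2 * k < n
  · have hp0 : 0 < (n : ℝ) / k - 2 := by
      have : (2 : ℝ) * k < n := by exact_mod_cast c1
      rw [sub_pos, lt_div_iff₀ hkp]; exact this
    refine ⟨1 / ((n : ℝ) / k - 2), by positivity, fun ε hε hε2 => ?_⟩
    unfold Ceps; rw [if_pos c1]
    have : 1 ≤ ε⁻¹ := (one_le_inv₀ hε).2 (by linarith)
    calc (1 : ℝ) ≤ ε⁻¹ := this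
      _ = _ := by rw [one_mul, ← mul_assoc, one_div, inv_mul_cancel₀ hp0.ne', one_mul]
  · by_cases c2 : 2 * k = n
    · refine ⟨1, one_pos, fun ε hε hε2 => ?_⟩
      unfold Ceps; rw [if_neg c1, if_pos c2, one_mul, one_mul]
      have hlog : Real.log ε < 0 := Real.log_neg hε (by linarith)
      rw [abs_of_neg hlog, ← Real.log_inv, ← div_eq_mul_inv, le_div_iff₀ (by
        rw [Real.log_inv]; linarith), one_mul]
      have := Real.log_le_sub_one_of_pos (inv_pos.2 hε)
      linarith
    · have hp0 : 0 < 2 - (n : ℝ) / k := by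
        have : (n : ℝ) < 2 * k := by exact_mod_cast (by omega : n < 2 * k)
        rw [sub_pos, div_lt_iff₀ hkp]; exact this
      refine ⟨1 / (2 - (n : ℝ) / k), by positivity, fun ε hε hε2 => ?_⟩
      unfold Ceps; rw [if_neg c1, if_neg c2]
      have h1 : 1 ≤ (n : ℝ) / k := by
        rw [le_div_iff₀ hkp, one_mul]; exact_mod_cast hkn
      have : 1 ≤ ε ^ (1 - (n : ℝ) / k) :=
        one_le_rpow_of_pos_of_le_one_of_nonpos hε (by linarith) (by linarith)
      calc (1 : ℝ) ≤ ε ^ (1 - (n : ℝ) / k) := this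
        _ = _ := by rw [one_mul, ← mul_assoc, one_div, inv_mul_cancel₀ hp0.ne', one_mul]

theorem Ceps_upper (n k : ℕ) (hk1 : 1 ≤ k) (hkn : k ≤ n) (δ : ℝ) (hδ : 0 < δ) :
    ∃ K : ℝ, 0 < K ∧ ∀ ε, δ ≤ ε → ε < 1 / 2 → Ceps n k 1 ε ≤ K := by
  have hkp : (0 : ℝ) < k := by exact_mod_cast hk1
  by_cases c1 : 2 * k < n
  · have hp0 : 0 < (n : ℝ) / k - 2 := by
      have : (2 : ℝ) * k < n := by exact_mod_cast c1
      rw [sub_pos, lt_div_iff₀ hkp]; exact this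
    refine ⟨((n : ℝ) / k - 2) * δ⁻¹, by positivity, fun ε hε hε2 => ?_⟩
    unfold Ceps; rw [if_pos c1, one_mul]
    gcongr
  · by_cases c2 : 2 * k = n
    · have hl : 0 < Real.log 2 := Real.log_pos (by norm_num)
      refine ⟨δ⁻¹ * (Real.log 2)⁻¹, by positivity, fun ε hε hε2 => ?_⟩
      unfold Ceps; rw [if_neg c1, if_pos c2, one_mul]
      have hε0 : 0 < ε := by linarith
      have hlog : Real.log ε < 0 := Real.log_neg hε0 (by linarith)
      have h3 : Real.log 2 ≤ |Real.log ε| := by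
        rw [abs_of_neg hlog, ← Real.log_inv]
        apply Real.log_le_log (by norm_num)
        rw [le_inv_comm₀ (by norm_num) hε0]; linarith
      gcongr
    · have hp0 : 0 < 2 - (n : ℝ) / k := by
        have : (n : ℝ) < 2 * k := by exact_mod_cast (by omega : n < 2 * k)
        rw [sub_pos, div_lt_iff₀ hkp]; exact this
      refine ⟨(2 - (n : ℝ) / k) * δ ^ (1 - (n : ℝ) / k), by positivity, fun ε hε hε2 => ?_⟩
      unfold Ceps; rw [if_neg c1, if_neg c2, one_mul]
      have h1 : 1 ≤ (n : ℝ) / k := by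
        rw [le_div_iff₀ hkp, one_mul]; exact_mod_cast hkn
      refine mul_le_mul_of_nonneg_left ?_ hp0.le
      exact rpow_le_rpow_of_nonpos hδ hε (by linarith)

end

noncomputable section

theorem Avec_cont {n : ℕ} (a : Fin n → ℝ) (e : Euc n) :
    Continuous (fun y : Euc n => inner ℝ (Avec a y) e) := by
  simp only [inner_Avec]; fun_prop

theorem Avec_line {n : ℕ} (a : Fin n → ℝ) (x v e : Euc n) (t : ℝ) :
    inner ℝ (Avec a (x + t • v)) e = inner ℝ (Avec a x) e + t * inner ℝ (Avec a v) e := by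
  simp only [inner_Avec, Finset.mul_sum, ← Finset.sum_add_distrib]
  refine Finset.sum_congr rfl fun i _ => ?_
  simp only [PiLp.add_apply, PiLp.smul_apply, smul_eq_mul]
  ring

theorem qf_zero_sum_two {n : ℕ} (v : Euc n) (hv : ‖v‖ = 1) :
    ∑ i, (2 : ℝ) * v i ^ 2 = 2 := by
  rw [← Finset.mul_sum, ← norm_sq_sum, hv]; norm_num

namespace Dat

variable {n k : ℕ} {a : Fin n → ℝ} {m Mx R₀ α : ℝ} {x₀ : Euc n} {ε R : ℝ} {u : Euc n → ℝ}

theorem max_eta (D : Dat n k a m Mx R₀ α x₀ ε R u) {δ B η : ℝ} (hδ : ε ≤ δ) (hη : 0 < η)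
    (hB1 : ∀ x, sA a x = R → ‖innerSL ℝ (Avec a x) - fderiv ℝ u x‖ ≤ B)
    (hB2 : ∀ x, ‖x - x₀‖ = δ → sA a x ≤ R → ‖innerSL ℝ (Avec a x) - fderiv ℝ u x‖ ≤ B)
    {x : Euc n} (h1 : sA a x ≤ R) (h2 : δ ≤ ‖x - x₀‖) (e : Euc n) :
    (innerSL ℝ (Avec a x) - fderiv ℝ u x) e ≤ B * ‖e‖ + η * (2 * R / m) := by
  have hm := D.hm
  set g : Euc n → ℝ := fun y => fderiv ℝ u y e - inner ℝ (Avec a y) e - η * sA (fun _ => 2) y with hg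
  have hgc : ContinuousOn g ({x : Euc n | sA a x ≤ R} ∩ {x | δ ≤ ‖x - x₀‖}) := by
    intro y hy
    have h3 := (cd_dir (D.sm y hy.1 (hδ.trans hy.2)) e).continuousAt
    have h4 := (Avec_cont a e).continuousAt (x := y)
    have h5 := (sA_cont (fun _ : Fin n => (2 : ℝ))).continuousAt (x := y)
    exact ((h3.sub h4).sub (h5.const_mul η)).continuousWithinAt
  obtain ⟨z, hzK, hmin⟩ := (D.kcompact R δ).exists_isMinOn ⟨x, h1, h2⟩ hgc
  have hx : g z ≤ g x := hmin ⟨h1, h2⟩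
  have hz1 : sA a z ≤ R := hzK.1
  have hz2 : δ ≤ ‖z - x₀‖ := hzK.2
  have hzn : ‖z‖ ^ 2 ≤ 2 * R / m := by
    have := sA_ge D.ham z
    rw [le_div_iff₀ hm]; linarith
  have key : ‖innerSL ℝ (Avec a z) - fderiv ℝ u z‖ ≤ B := by
    rcases hz1.lt_or_eq with ha1 | ha1
    · rcases hz2.lt_or_eq with ha2 | ha2
      · exfalso
        have hc2 : Continuous (fun z : Euc n => ‖z - x₀‖) := by fun_prop
        have hloc : IsLocalMin g z := by
          filter_upwards [(sA_cont a).tendsto z |>.eventually_lt_const ha1,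
            hc2.tendsto z |>.eventually_const_lt ha2] with y h3 h4
          exact hmin ⟨h3.le, h4.le⟩
        obtain ⟨v, f, hf, -, hl, -⟩ := D.lin ha1 (lt_of_le_of_lt hδ ha2)
        have hsm := cd_dir (D.sm z hz1 (hδ.trans hz2)) e
        have hi : ∀ i, 2 * η ≤ qf n (hessMat n (fun y => fderiv ℝ u y e) z) (v i) := by
          intro i
          have ht := line_localMin hloc (v i)
          simp only [hg, Avec_line] at ht
          have := (((HD2.line hsm (v i)).sub (hd2_lin (inner ℝ (Avec a z) e)
            (inner ℝ (Avec a (v i)) e))).sub ((hd2_quad n (fun _ => 2) z (v i)).const_mul η)).min ht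
          rw [qf_zero_sum_two (v i) (v.norm_eq_one i)] at this
          linarith [this.2]
        have hs : ∑ i, f i * (2 * η)
            ≤ ∑ i, f i * qf n (hessMat n (fun y => fderiv ℝ u y e) z) (v i) :=
          Finset.sum_le_sum fun i _ => mul_le_mul_of_nonneg_left (hi i) (hf i).le
        rw [hl e] at hs
        have hn := D.hn
        have : 0 < ∑ i, f i * (2 * η) :=
          Finset.sum_pos (fun i _ => mul_pos (hf i) (by linarith)) ⟨⟨0, by omega⟩, Finset.mem_univ _⟩
        linarith
      · exact hB2 z ha2.symm hz1
    · exact hB1 z ha1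
  have h7 : (innerSL ℝ (Avec a z) - fderiv ℝ u z) e ≤ B * ‖e‖ :=
    (le_abs_self _).trans ((ContinuousLinearMap.le_opNorm _ e).trans
      (mul_le_mul_of_nonneg_right key (norm_nonneg e)))
  simp only [hg, sA_two] at hx
  simp only [_root_.sub_apply, innerSL_apply_apply] at h7 ⊢
  have h8 : 0 ≤ η * ‖x‖ ^ 2 := by positivity
  have h9 : η * ‖z‖ ^ 2 ≤ η * (2 * R / m) := mul_le_mul_of_nonneg_left hzn hη.le
  linarith

theorem max_principle (D : Dat n k a m Mx R₀ α x₀ ε R u) {δ B : ℝ} (hδ : ε ≤ δ) (hB : 0 ≤ B)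
    (hB1 : ∀ x, sA a x = R → ‖innerSL ℝ (Avec a x) - fderiv ℝ u x‖ ≤ B)
    (hB2 : ∀ x, ‖x - x₀‖ = δ → sA a x ≤ R → ‖innerSL ℝ (Avec a x) - fderiv ℝ u x‖ ≤ B)
    {x : Euc n} (h1 : sA a x ≤ R) (h2 : δ ≤ ‖x - x₀‖) :
    ‖innerSL ℝ (Avec a x) - fderiv ℝ u x‖ ≤ B := by
  have hm := D.hm
  have hRp : 0 < 2 * R / m := by
    have := D.hR; have := D.hR1
    have : 0 < R := by linarith
    positivity
  have h3 : ∀ e, (innerSL ℝ (Avec a x) - fderiv ℝ u x) e ≤ B * ‖e‖ := by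
    intro e
    refine le_of_forall_pos_le_add fun η hη => ?_
    have := D.max_eta hδ (η := η / (2 * R / m)) (by positivity) hB1 hB2 h1 h2 e
    rwa [div_mul_cancel₀ _ hRp.ne'] at this
  refine ContinuousLinearMap.opNorm_le_bound _ hB fun e => ?_
  rw [Real.norm_eq_abs]
  refine abs_le.2 ⟨?_, h3 e⟩
  have := h3 (-e)
  rw [map_neg, norm_neg] at this
  linarith

end Dat

end

noncomputable section

/-- The cut-off function. -/
def cutr {n : ℕ} (xb : Euc n) (r : ℝ) (y : Euc n) : ℝ := 1 - 1 / r ^ 2 * sA (fun _ => 2) (y - xb)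

theorem cutr_cont {n : ℕ} (xb : Euc n) (r : ℝ) : Continuous (cutr xb r) := by
  have := (sA_cont (fun _ : Fin n => (2 : ℝ))).comp (continuous_id.sub (continuous_const (y := xb)))
  exact continuous_const.sub (continuous_const.mul this)

theorem hd2_cutr {n : ℕ} (xb : Euc n) (r : ℝ) (y v : Euc n) :
    HD2 (fun t : ℝ => cutr xb r (y + t • v)) (-(2 / r ^ 2 * inner ℝ (y - xb) v))
      (-(2 / r ^ 2 * ‖v‖ ^ 2)) := by
  have h := (HD2.const 1).sub ((hd2_quad n (fun _ => 2) (y - xb) v).const_mul (1 / r ^ 2))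
  simp only [cutr, add_sub_right_comm]
  refine h.congr' ?_ ?_
  · have : ∑ i, (2 : ℝ) * (y - xb) i * v i = 2 * inner ℝ (y - xb) v := by
      rw [PiLp.inner_apply, Finset.mul_sum]
      refine Finset.sum_congr rfl fun i _ => ?_
      simp; ring
    rw [this]; ring
  · rw [← Finset.mul_sum, ← norm_sq_sum]; ring

theorem bern_alg {f w ρi g ρ P gi gii uii r : ℝ} (hf : 0 < f) (hr : 0 < r)
    (hρ1 : ρ ≤ 1) (hρi : ρi ^ 2 ≤ 4 / r ^ 2) (hw : w = gi * ρ + g * ρi)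
    (hQ : 0 ≤ -(P * uii) - 2 * w ^ 2
      - 2 * g * ρ * (gii * ρ + 2 * (gi * ρi) + g * (-(2 / r ^ 2)))) :
    f * w ^ 2 ≤ f * (36 * g ^ 2 / r ^ 2) - P * (f * uii) - 2 * g * ρ ^ 2 * (f * gii) := by
  have h1 : gi * ρ = w - g * ρi := by rw [hw]; ring
  have h2 : w ^ 2 ≤ 36 * g ^ 2 / r ^ 2 - P * uii - 2 * g * ρ ^ 2 * gii := by
    have e1 : -(P * uii) - 2 * w ^ 2 - 2 * g * ρ * (gii * ρ + 2 * (gi * ρi) + g * (-(2 / r ^ 2)))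
        = -(P * uii) - 2 * w ^ 2 - 2 * g * ρ ^ 2 * gii - 4 * g * (gi * ρ) * ρi
          + 4 * ρ * (g ^ 2 / r ^ 2) := by ring
    rw [e1, h1] at hQ
    have h3 : 0 ≤ g ^ 2 / r ^ 2 := by positivity
    have h4 : ρ * (g ^ 2 / r ^ 2) ≤ 1 * (g ^ 2 / r ^ 2) := mul_le_mul_of_nonneg_right hρ1 h3
    have h5 : g ^ 2 * ρi ^ 2 ≤ g ^ 2 * (4 / r ^ 2) := mul_le_mul_of_nonneg_left hρi (sq_nonneg g)
    have h6 : 0 ≤ (w + 2 * g * ρi) ^ 2 := sq_nonneg _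
    have h7 : g ^ 2 * (4 / r ^ 2) = 4 * (g ^ 2 / r ^ 2) := by ring
    have h8 : 36 * g ^ 2 / r ^ 2 = 36 * (g ^ 2 / r ^ 2) := by ring
    rw [h8]
    rw [h7] at h5
    nlinarith
  have := mul_le_mul_of_nonneg_left h2 hf.le
  linarith

theorem clm_dir {n : ℕ} (ℓ : Euc n →L[ℝ] ℝ) (hℓ : ℓ ≠ 0) :
    ∃ ξ : Euc n, ‖ξ‖ = 1 ∧ ∀ v, ℓ v = ‖ℓ‖ * inner ℝ v ξ := by
  set y := (InnerProductSpace.toDual ℝ (Euc n)).symm ℓ with hy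
  have hyn : ‖y‖ = ‖ℓ‖ := by rw [hy, LinearIsometryEquiv.norm_map]
  have hp : 0 < ‖ℓ‖ := norm_pos_iff.2 hℓ
  refine ⟨‖ℓ‖⁻¹ • y, by rw [norm_smul, hyn, norm_inv, norm_norm, inv_mul_cancel₀ hp.ne'], ?_⟩
  intro v
  rw [inner_smul_right, real_inner_comm, ← mul_assoc, mul_inv_cancel₀ hp.ne', one_mul, hy,
    InnerProductSpace.toDual_symm_apply]

namespace Dat

variable {n k : ℕ} {a : Fin n → ℝ} {m Mx R₀ α : ℝ} {x₀ : Euc n} {ε R : ℝ} {u : Euc n → ℝ}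

theorem bern_local (D : Dat n k a m Mx R₀ α x₀ ε R u) {z xb : Euc n} {r M P : ℝ}
    (h1 : sA a z < R) (h2 : ε < ‖z - x₀‖) (hr : 0 < r) (hz : ‖z - xb‖ ≤ r)
    (hρ : 0 < cutr xb r z) (hu0 : 0 ≤ u z) (huM : u z + 1 ≤ M) (hP : 0 < P)
    (hPz : P * (M - u z) = ‖fderiv ℝ u z‖ ^ 2 * cutr xb r z ^ 2)
    (hloc : ∀ᶠ y in 𝓝 z, ‖fderiv ℝ u y‖ ^ 2 * cutr xb r y ^ 2 ≤ P * (M - u y)) :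
    P ≤ 144 * n * M ^ 2 / r ^ 2 := by
  have hn := D.hn
  have hn3 : (3 : ℝ) ≤ n := by exact_mod_cast hn
  have hsm := D.sm z h1.le h2.le
  set g := ‖fderiv ℝ u z‖ with hg
  set ρ := cutr xb r z with hρdef
  have hMu : 1 ≤ M - u z := by linarith
  have hg0 : 0 < g := by
    rcases (norm_nonneg (fderiv ℝ u z)).lt_or_eq with h | h
    · exact h
    · rw [← hg] at h
      rw [← h] at hPz
      have : 0 < P * (M - u z) := by positivity
      rw [hPz] at this; norm_num at this
  obtain ⟨ξ, hξ, hdu⟩ := clm_dir (fderiv ℝ u z) (norm_pos_iff.1 hg0)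
  rw [← hg] at hdu
  have hρ1 : ρ ≤ 1 := by
    have : 0 ≤ 1 / r ^ 2 * ‖z - xb‖ ^ 2 := by positivity
    rw [hρdef, cutr, sA_two]; linarith
  set Q : Euc n → ℝ := fun y => P * (M - u y)
    - (fderiv ℝ u y ξ * cutr xb r y) * (fderiv ℝ u y ξ * cutr xb r y) with hQ
  have hgz : fderiv ℝ u z ξ = g := by rw [hdu, real_inner_self_eq_norm_sq, hξ]; ring
  have hQz : Q z = 0 := by
    simp only [hQ]; rw [hgz, ← hρdef, hPz]; ring
  have hQmin : IsLocalMin Q z := by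
    filter_upwards [hloc] with y hy
    rw [hQz]
    simp only [hQ]
    have h3 : (fderiv ℝ u y ξ) ^ 2 ≤ ‖fderiv ℝ u y‖ ^ 2 := by
      have := (fderiv ℝ u y).le_opNorm ξ
      rw [hξ, mul_one, Real.norm_eq_abs] at this
      rw [← sq_abs (fderiv ℝ u y ξ)]
      exact pow_le_pow_left₀ (abs_nonneg _) this 2
    have := mul_le_mul_of_nonneg_right h3 (sq_nonneg (cutr xb r y))
    nlinarith
  have hsmg := cd_dir hsm ξ
  set G : Euc n → ℝ := fun y => fderiv ℝ u y ξ with hG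
  have hmain : ∀ v : Euc n, ∃ w, w = fderiv ℝ G z v * ρ + g * (-(2 / r ^ 2 * inner ℝ (z - xb) v)) ∧
      P * fderiv ℝ u z v + 2 * g * ρ * w = 0 ∧
      0 ≤ -(P * qf n (hessMat n u z) v) - 2 * w ^ 2 - 2 * g * ρ * (qf n (hessMat n G z) v * ρ
        + 2 * (fderiv ℝ G z v * (-(2 / r ^ 2 * inner ℝ (z - xb) v)))
        + g * (-(2 / r ^ 2 * ‖v‖ ^ 2))) := by
    intro v
    refine ⟨_, rfl, ?_⟩
    have ht := line_localMin hQmin v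
    have hgr := (HD2.line hsmg v).mul (hd2_cutr xb r z v)
    have hd := (((HD2.const M).sub (HD2.line hsm v)).const_mul P).sub (hgr.mul hgr)
    have := hd.min ht
    simp only [zero_smul, add_zero, hG, hgz] at this
    rw [← hρdef] at this
    constructor
    · linarith [this.1]
    · have h3 := this.2
      refine h3.trans (le_of_eq ?_)
      ring
  obtain ⟨v, f, hf, hl1, hl2, hl3⟩ := D.lin h1 h2
  have hinner : ∀ w : Euc n, ‖w‖ = 1 → (-(2 / r ^ 2 * inner ℝ (z - xb) w)) ^ 2 ≤ 4 / r ^ 2 := by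
    intro w hw
    have h3 := abs_real_inner_le_norm (z - xb) w
    rw [hw, mul_one] at h3
    have h4 : (inner ℝ (z - xb) w) ^ 2 ≤ r ^ 2 := by
      rw [← sq_abs]
      exact pow_le_pow_left₀ (abs_nonneg _) (h3.trans hz) 2
    have e : (-(2 / r ^ 2 * inner ℝ (z - xb) w)) ^ 2 = 4 / r ^ 4 * (inner ℝ (z - xb) w) ^ 2 := by
      field_simp; ring
    rw [e]
    calc 4 / r ^ 4 * (inner ℝ (z - xb) w) ^ 2 ≤ 4 / r ^ 4 * r ^ 2 := by gcongr
      _ = _ := by field_simp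
  have hsum : ∀ i, f i * (g ^ 2 * ρ * inner ℝ (v i) ξ / (2 * (M - u z))) ^ 2
      ≤ f i * (36 * g ^ 2 / r ^ 2) - P * (f i * qf n (hessMat n u z) (v i))
        - 2 * g * ρ ^ 2 * (f i * qf n (hessMat n G z) (v i)) := by
    intro i
    obtain ⟨w, hw, hw1, hw2⟩ := hmain (v i)
    have hvi := v.norm_eq_one i
    rw [hvi, one_pow, mul_one] at hw2
    have h3 := bern_alg (hf i) hr hρ1 (hinner _ hvi) hw (P := P) hw2
    have hw3 : w = -(g ^ 2 * ρ * inner ℝ (v i) ξ / (2 * (M - u z))) := by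
      rw [hdu] at hw1
      have h4 : 2 * g * ρ * (w * (2 * (M - u z)))
          = 2 * g * ρ * -(g ^ 2 * ρ * inner ℝ (v i) ξ) := by
        linear_combination 2 * (M - u z) * hw1 - 2 * g * inner ℝ (v i) ξ * hPz
      have h5 := mul_left_cancel₀ (by positivity : 2 * g * ρ ≠ 0) h4
      rw [← neg_div, eq_div_iff (by linarith), h5]
    rw [hw3, neg_sq] at h3
    exact h3
  have hfin : g ^ 2 * ρ ^ 2 ≤ 144 * n * M ^ 2 / r ^ 2 := by
    by_cases hc : qf n (hessMat n u z) ξ ≤ 0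
    · have h3 := Finset.sum_le_sum fun i (_ : i ∈ Finset.univ) => hsum i
      rw [Finset.sum_sub_distrib, Finset.sum_sub_distrib, ← Finset.mul_sum, ← Finset.mul_sum,
        ← Finset.sum_mul, hl2 ξ, mul_zero, sub_zero] at h3
      have h4 := hl3 ξ hc
      rw [hξ, one_pow, one_mul] at h4
      have e1 : ∑ i, f i * (g ^ 2 * ρ * inner ℝ (v i) ξ / (2 * (M - u z))) ^ 2
          = g ^ 4 * ρ ^ 2 / (4 * (M - u z) ^ 2) * ∑ i, f i * inner ℝ (v i) ξ ^ 2 := by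
        rw [Finset.mul_sum]
        refine Finset.sum_congr rfl fun i _ => ?_
        field_simp; ring
      rw [e1] at h3
      set F := ∑ i, f i with hF
      have hFp : 0 < F := Finset.sum_pos (fun i _ => hf i) ⟨⟨0, by omega⟩, Finset.mem_univ _⟩
      set S := ∑ i, f i * inner ℝ (v i) ξ ^ 2 with hS
      have h5 : g ^ 4 * ρ ^ 2 / (4 * (M - u z) ^ 2) * S ≤ F * (36 * g ^ 2 / r ^ 2) := by
        have : 0 ≤ P * ∑ i, f i * qf n (hessMat n u z) (v i) := mul_nonneg hP.le hl1
        linarith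
      have hMu0 : 0 < M - u z := by linarith
      rw [div_mul_eq_mul_div, div_le_iff₀ (by positivity)] at h5
      have h6 : g ^ 4 * ρ ^ 2 * F ≤ n * (F * (36 * g ^ 2 / r ^ 2) * (4 * (M - u z) ^ 2)) := by
        calc g ^ 4 * ρ ^ 2 * F ≤ g ^ 4 * ρ ^ 2 * (n * S) :=
              mul_le_mul_of_nonneg_left h4 (by positivity)
          _ = n * (g ^ 4 * ρ ^ 2 * S) := by ring
          _ ≤ _ := mul_le_mul_of_nonneg_left h5 (by positivity)
      have h7 : (g ^ 2 * F) * (g ^ 2 * ρ ^ 2)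
          ≤ (g ^ 2 * F) * (144 * n * (M - u z) ^ 2 / r ^ 2) := by
        calc _ = g ^ 4 * ρ ^ 2 * F := by ring
          _ ≤ _ := h6
          _ = _ := by ring
      have h8 := le_of_mul_le_mul_left h7 (by positivity)
      refine h8.trans ?_
      have : M - u z ≤ M := by linarith
      gcongr
    · push Not at hc
      obtain ⟨w, hw, hw1, -⟩ := hmain ξ
      have e1 : fderiv ℝ G z ξ = qf n (hessMat n u z) ξ := by
        rw [qf_hessMat, hG, fderiv_dir (cd_diff (cd_fderiv hsm))]
      rw [hgz] at hw1
      have h3 := abs_le_of_sq_le_sq' (a := -(2 / r ^ 2 * inner ℝ (z - xb) ξ)) (b := 2 / r)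
        ((hinner ξ hξ).trans (le_of_eq (by field_simp; norm_num))) (by positivity)
      have h4 : -w ≤ g * (2 / r) := by
        rw [hw, e1]
        have h5 : 0 < qf n (hessMat n u z) ξ * ρ := mul_pos hc hρ
        have h6 := mul_le_mul_of_nonneg_left h3.1 hg0.le
        linarith
      have hMu0 : 0 < M - u z := by linarith
      have h5 : 2 * g * ρ * (-w * (M - u z)) = 2 * g * ρ * (g ^ 2 * ρ / 2) := by
        linear_combination -(M - u z) * hw1 + g * hPz
      have h6 := mul_left_cancel₀ (by positivity : 2 * g * ρ ≠ 0) h5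
      have h7 : g * (g * ρ) ≤ g * (4 * M / r) := by
        have h8 : -w * (M - u z) ≤ g * (2 / r) * M := by
          calc -w * (M - u z) ≤ g * (2 / r) * (M - u z) := mul_le_mul_of_nonneg_right h4 hMu0.le
            _ ≤ g * (2 / r) * M := by
              refine mul_le_mul_of_nonneg_left (by linarith) (by positivity)
        rw [h6] at h8
        have : g * (4 * M / r) = 2 * (g * (2 / r) * M) := by ring
        rw [this]; nlinarith
      have h8 := le_of_mul_le_mul_left h7 hg0
      have h9 : (g * ρ) ^ 2 ≤ (4 * M / r) ^ 2 := pow_le_pow_left₀ (by positivity) h8 2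
      calc g ^ 2 * ρ ^ 2 = (g * ρ) ^ 2 := by ring
        _ ≤ (4 * M / r) ^ 2 := h9
        _ = 16 * (M ^ 2 / r ^ 2) := by ring
        _ ≤ 144 * n * (M ^ 2 / r ^ 2) := by
          refine mul_le_mul_of_nonneg_right (by linarith) (by positivity)
        _ = _ := by ring
  calc P = P * 1 := by ring
    _ ≤ P * (M - u z) := mul_le_mul_of_nonneg_left hMu hP.le
    _ = g ^ 2 * ρ ^ 2 := hPz
    _ ≤ _ := hfin

/-- Interior gradient estimate. -/
theorem bernstein (D : Dat n k a m Mx R₀ α x₀ ε R u) {xb : Euc n} {δ : ℝ} (hδ : 0 < δ)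
    (hδ1 : δ ≤ 1) (hεδ : ε < δ / 2) (hxb : ‖xb - x₀‖ = δ) :
    ‖fderiv ℝ u xb‖ ^ 2 ≤ 144 * n * (M0 n k a R₀ α + 1) ^ 3 / (δ / 2) ^ 2 := by
  set r := δ / 2 with hr
  have hr0 : 0 < r := by positivity
  set M := M0 n k a R₀ α + 1 with hM
  have hM0 : 1 ≤ M := by linarith [D.M0_pos]
  have hRR := D.hR
  have hR1 := D.hR1
  have hball : ∀ y ∈ Metric.closedBall xb r, sA a y < R ∧ ε < ‖y - x₀‖ ∧ 0 ≤ u y ∧ u y + 1 ≤ M := by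
    intro y hy
    rw [Metric.mem_closedBall, dist_eq_norm] at hy
    have h1 : ‖y - x₀‖ ≤ ‖y - xb‖ + ‖xb - x₀‖ := by
      have := norm_add_le (y - xb) (xb - x₀); rwa [sub_add_sub_cancel] at this
    have h2 : ‖xb - x₀‖ ≤ ‖y - xb‖ + ‖y - x₀‖ := by
      have := norm_sub_le (y - x₀) (y - xb)
      rw [sub_sub_sub_cancel_left] at this; linarith
    have h3 : ‖y - x₀‖ ≤ 2 := by linarith
    have h4 : ε < ‖y - x₀‖ := by linarith
    exact ⟨by linarith [(D.small h3).1], h4, D.nonneg h4.le h3, by linarith [D.le_M0 h4.le h3]⟩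
  set Pf : Euc n → ℝ := fun y => ‖fderiv ℝ u y‖ ^ 2 * cutr xb r y ^ 2 / (M - u y) with hPf
  have hc : ContinuousOn Pf (Metric.closedBall xb r) := by
    intro y hy
    obtain ⟨h1, h2, h3, h4⟩ := hball y hy
    have hsm := D.sm y h1.le h2.le
    have c1 : ContinuousAt (fun y => ‖fderiv ℝ u y‖) y := (cd_fderiv hsm).continuousAt.norm
    have c2 : ContinuousAt (cutr xb r) y := (cutr_cont xb r).continuousAt
    have c3 : ContinuousAt u y := hsm.continuousAt
    have hne : M - u y ≠ 0 := by linarith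
    exact (((c1.pow 2).mul (c2.pow 2)).div (continuousAt_const.sub c3) hne).continuousWithinAt
  obtain ⟨z, hz, hmax⟩ := (isCompact_closedBall xb r).exists_isMaxOn
    ⟨xb, Metric.mem_closedBall_self hr0.le⟩ hc
  have hPle : Pf z ≤ 144 * n * M ^ 2 / r ^ 2 := by
    rcases le_or_gt (Pf z) 0 with hP | hP
    · exact hP.trans (by positivity)
    obtain ⟨h1, h2, h3, h4⟩ := hball z hz
    have hz' := hz
    rw [Metric.mem_closedBall, dist_eq_norm] at hz'
    have hzr : ‖z - xb‖ < r := by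
      refine lt_of_le_of_ne hz' fun h => ?_
      have : cutr xb r z = 0 := by rw [cutr, sA_two, h]; field_simp; ring
      simp only [hPf] at hP
      rw [this] at hP
      norm_num at hP
    have hρ : 0 < cutr xb r z := by
      rw [cutr, sA_two, sub_pos, one_div, inv_mul_lt_iff₀ (by positivity), mul_one]
      exact pow_lt_pow_left₀ hzr (norm_nonneg _) (by norm_num)
    refine D.bern_local h1 h2 hr0 hz' hρ h3 h4 hP ?_ ?_
    · simp only [hPf]
      rw [div_mul_cancel₀ _ (by linarith)]
    · have : ∀ᶠ y in 𝓝 z, y ∈ Metric.closedBall xb r := by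
        have hzb : z ∈ Metric.ball xb r := by rwa [Metric.mem_ball, dist_eq_norm]
        exact mem_of_superset (Metric.isOpen_ball.mem_nhds hzb) Metric.ball_subset_closedBall
      filter_upwards [this] with y hy
      obtain ⟨-, -, -, k4⟩ := hball y hy
      have k5 : Pf y ≤ Pf z := hmax hy
      rw [← div_le_iff₀ (by linarith)]
      exact k5
  have hx := hball xb (Metric.mem_closedBall_self hr0.le)
  have h5 : Pf xb ≤ Pf z := hmax (Metric.mem_closedBall_self hr0.le)
  have h6 : Pf xb = ‖fderiv ℝ u xb‖ ^ 2 / (M - u xb) := by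
    simp [hPf, cutr, sA_two]
  rw [h6] at h5
  have h7 := h5.trans hPle
  rw [div_le_iff₀ (by linarith)] at h7
  refine h7.trans ?_
  calc 144 * n * M ^ 2 / r ^ 2 * (M - u xb) ≤ 144 * n * M ^ 2 / r ^ 2 * M := by
        refine mul_le_mul_of_nonneg_left (by linarith) (by positivity)
    _ = _ := by ring

end Dat

end

noncomputable section

namespace Dat

variable {n k : ℕ} {a : Fin n → ℝ} {m Mx R₀ α : ℝ} {x₀ : Euc n} {ε R : ℝ} {u : Euc n → ℝ}

theorem Mx_pos (D : Dat n k a m Mx R₀ α x₀ ε R u) : 0 < Mx := by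
  have hn := D.hn
  exact lt_of_lt_of_le (D.ha ⟨0, by omega⟩) (D.haM _)

theorem Avec_near (D : Dat n k a m Mx R₀ α x₀ ε R u) {x : Euc n} {T : ℝ} (h : sA a x ≤ T) :
    ‖Avec a x‖ ≤ √(2 * Mx * T) := by
  apply Real.le_sqrt_of_sq_le
  refine (norm_Avec_le D.ha D.haM x).trans ?_
  have := D.Mx_pos
  gcongr

theorem core (D : Dat n k a m Mx R₀ α x₀ ε R u) {δ G : ℝ} (hδ : ε ≤ δ) (hδ2 : δ ≤ 2) (hG : 0 ≤ G)
    (h : ∀ x, ‖x - x₀‖ = δ → ‖fderiv ℝ u x‖ ≤ G)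
    {x : Euc n} (h1 : sA a x ≤ R) (h2 : δ ≤ ‖x - x₀‖) :
    ‖innerSL ℝ (Avec a x) - fderiv ℝ u x‖ ≤ α * (1 + 2 * Mx) + √(2 * Mx * R₀) + G := by
  have hα := D.alpha_pos
  have hM := D.Mx_pos
  have hB0 : 0 ≤ α * (1 + 2 * Mx) := by positivity
  have hA0 : 0 ≤ √(2 * Mx * R₀) := Real.sqrt_nonneg _
  refine D.max_principle hδ (by positivity) ?_ ?_ h1 h2
  · intro y hy
    have := D.outer hy
    linarith
  · intro y hy _
    have h3 := D.Avec_near (D.small (x := y) (by linarith)).1.le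
    have h4 := norm_sub_le (innerSL ℝ (Avec a y)) (fderiv ℝ u y)
    rw [innerSL_apply_norm] at h4
    linarith [h y hy]

theorem core' (D : Dat n k a m Mx R₀ α x₀ ε R u) {δ G T : ℝ} (hδ : ε ≤ δ) (hδ2 : δ ≤ 2)
    (hG : 0 ≤ G) (h : ∀ x, ‖x - x₀‖ = δ → ‖fderiv ℝ u x‖ ≤ G)
    {x : Euc n} (h1 : sA a x ≤ R) (hT : sA a x ≤ T) (h2 : δ ≤ ‖x - x₀‖) :
    ‖fderiv ℝ u x‖ ≤ α * (1 + 2 * Mx) + √(2 * Mx * R₀) + G + √(2 * Mx * T) := by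
  have h3 := D.core hδ hδ2 hG h h1 h2
  have h4 := D.Avec_near hT
  have h5 : ‖fderiv ℝ u x‖ ≤ ‖innerSL ℝ (Avec a x)‖ + ‖innerSL ℝ (Avec a x) - fderiv ℝ u x‖ := by
    have := norm_sub_le (innerSL ℝ (Avec a x)) (innerSL ℝ (Avec a x) - fderiv ℝ u x)
    rwa [sub_sub_cancel] at this
  rw [innerSL_apply_norm] at h5
  linarith

theorem part_one (D : Dat n k a m Mx R₀ α x₀ ε R u) {K : ℝ} (hK : 0 ≤ K)
    (h : 2 * ε ^ (1 - (n : ℝ) / k) / Hrad (n / (2 * k)) ε 1 ≤ K)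
    {x : Euc n} (h1 : sA a x ≤ R₀) (h2 : ε ≤ ‖x - x₀‖) :
    ‖fderiv ℝ u x‖ ≤ α * (1 + 2 * Mx) + √(2 * Mx * R₀) + M0 n k a R₀ α * K + √(2 * Mx * R₀) := by
  have hM := D.M0_pos
  have hε2 := D.hε2
  refine D.core' le_rfl (by linarith) (by positivity) ?_ (by linarith [D.hR, D.hR1]) h1 h2
  intro y hy
  refine (D.inner_grad hy).trans ?_
  calc _ = M0 n k a R₀ α * (2 * ε ^ (1 - (n : ℝ) / k) / Hrad (n / (2 * k)) ε 1) := by ring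
    _ ≤ _ := mul_le_mul_of_nonneg_left h (by linarith)

theorem bern' (D : Dat n k a m Mx R₀ α x₀ ε R u) {δ : ℝ} (hδ : 0 < δ)
    (hδ1 : δ ≤ 1) (hεδ : ε < δ / 2) (x : Euc n) (hx : ‖x - x₀‖ = δ) :
    ‖fderiv ℝ u x‖ ≤ √(144 * n * (M0 n k a R₀ α + 1) ^ 3 / (δ / 2) ^ 2) :=
  Real.le_sqrt_of_sq_le (D.bernstein hδ hδ1 hεδ hx)

theorem near (D : Dat n k a m Mx R₀ α x₀ ε R u) {x : Euc n} (hx : x ∈ Metric.ball (0 : Euc n) 2) :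
    sA a x ≤ R₀ := by
  rw [mem_ball_zero_iff] at hx
  have h1 := sA_le D.haM x
  have h2 := D.hR5
  have h3 := D.Mx_pos
  have : ‖x‖ ^ 2 ≤ 2 ^ 2 := pow_le_pow_left₀ (norm_nonneg x) hx.le 2
  nlinarith

end Dat

theorem Ceps_pos {n k : ℕ} {K ε : ℝ} (hK : 0 < K) (h : 1 ≤ K * Ceps n k 1 ε) :
    0 < Ceps n k 1 ε := by
  by_contra hc
  push Not at hc
  nlinarith

end

/-- Lemma 2.5: gradient estimates near and away from the boundary. -/
theorem statement7 (n k : ℕ) (hn : 3 ≤ n) (hk1 : 1 ≤ k) (hkn : k ≤ n)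
    (a : Fin n → ℝ) (hA : MemA n k (Matrix.diagonal a))
    (hk1' : k = 1 → (⨆ i, a i) < 1 / 2) :
    ∃ Λ₀ : ℝ, 0 < Λ₀ ∧ ∀ R₀ : ℝ, Λ₀ ≤ R₀ →
      ∃ α₀ : ℝ, 0 < α₀ ∧ ∀ α : ℝ, α₀ ≤ α →
        (∃ C : ℝ, 0 < C ∧
          ∀ x₀ : Euc n, x₀ ∈ Metric.ball (0 : Euc n) (1 / 2) → x₀ ≠ 0 →
          ∀ ε : ℝ, 0 < ε → ε < 1 / 2 →
          ∀ R : ℝ, 3 * R₀ < R →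
          ∀ u : Euc n → ℝ, ApproxSol n k a x₀ ε R R₀ α u →
            (∀ x ∈ Metric.ball (0 : Euc n) 2 \ Metric.ball x₀ ε,
              ‖fderiv ℝ u x‖ ≤ Ceps n k C ε) ∧
            (∀ x ∈ ESet n (Matrix.diagonal a) 0 R \ ESet n (Matrix.diagonal a) 0 (2 * R / 3),
              ‖fderiv ℝ u x‖ ≤ C * Real.sqrt R)) ∧
        (∀ δ : ℝ, 0 < δ →
          ∃ C' : ℝ, 0 < C' ∧
          ∀ x₀ : Euc n, x₀ ∈ Metric.ball (0 : Euc n) (1 / 2) → x₀ ≠ 0 →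
          ∀ ε : ℝ, 0 < ε → ε < 1 / 2 → ε < δ →
          ∀ R : ℝ, 3 * R₀ < R →
          ∀ u : Euc n → ℝ, ApproxSol n k a x₀ ε R R₀ α u →
            ∀ x ∈ Metric.ball (0 : Euc n) 2 \ Metric.ball x₀ δ,
              ‖fderiv ℝ u x‖ ≤ C') := by
  have : Nonempty (Fin n) := ⟨⟨0, by omega⟩⟩
  obtain ⟨ha, -⟩ := memA_pos hkn hA
  obtain ⟨i₀, hi₀⟩ := Finite.exists_min a
  set m := a i₀ with hm
  have hm0 : 0 < m := ha i₀
  set Mx := ∑ i, a i with hMx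
  have haM : ∀ i, a i ≤ Mx := fun i =>
    Finset.single_le_sum (f := a) (fun j _ => (ha j).le) (Finset.mem_univ i)
  have hMx0 : 0 < Mx := lt_of_lt_of_le hm0 (haM i₀)
  obtain ⟨K1, hK1, hC1⟩ := Ceps_inner n k hk1
  obtain ⟨K2, hK2, hC2⟩ := Ceps_lower n k hk1 hkn
  refine ⟨1 + 5 * Mx, by positivity, fun R₀ hR₀ => ?_⟩
  have hR1 : 1 ≤ R₀ := by linarith
  have hR5 : 5 * Mx ≤ R₀ := by linarith
  refine ⟨(8 / m + 2) ^ k * (2 * R₀) ^ (-genExp n k a), by positivity, fun α hα => ?_⟩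
  have hα0 : 0 < α := lt_of_lt_of_le (by positivity) hα
  set A0 := √(2 * Mx * R₀) with hA0
  have hA0p : 0 ≤ A0 := Real.sqrt_nonneg _
  set B0 := α * (1 + 2 * Mx) with hB0
  have hB0p : 0 < B0 := by positivity
  set N := M0 n k a R₀ α with hN
  have mk : ∀ {x₀ : Euc n} {ε R : ℝ} {u : Euc n → ℝ}, x₀ ∈ Metric.ball (0 : Euc n) (1 / 2) →
      0 < ε → ε < 1 / 2 → 3 * R₀ < R → ApproxSol n k a x₀ ε R R₀ α u →
      Dat n k a m Mx R₀ α x₀ ε R u := fun h1 h2 h3 h4 h5 =>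
    mkDat hn hk1 hkn hA hk1' hm0 hi₀ haM hR1 hR5 hα h1 h2 h3 h4 h5
  constructor
  · set G1 := √(144 * n * (N + 1) ^ 3 / ((1 : ℝ) / 2) ^ 2) with hG1
    have hG1p : 0 ≤ G1 := Real.sqrt_nonneg _
    have hs : 0 ≤ √(2 * Mx) := Real.sqrt_nonneg _
    have hpos : 0 < (B0 + A0 + A0) * K2 + |N| * K1 + (B0 + A0 + G1 + √(2 * Mx)) := by positivity
    refine ⟨_, hpos, ?_⟩
    intro x₀ hx₀ _ ε hε hε2 R hR u hu
    have D := mk hx₀ hε hε2 hR hu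
    have hN1 : 1 ≤ N := D.M0_pos
    have hc := Ceps_pos hK2 (hC2 ε hε hε2)
    constructor
    · intro x hx
      have h2 : ε ≤ ‖x - x₀‖ := by
        have := hx.2
        rwa [Metric.mem_ball, not_lt, dist_eq_norm] at this
      have h3 := D.part_one (K := K1 * Ceps n k 1 ε) (by positivity) (hC1 ε hε hε2)
        (D.near hx.1) h2
      refine h3.trans ?_
      rw [Ceps_mul n k ((B0 + A0 + A0) * K2 + |N| * K1 + (B0 + A0 + G1 + √(2 * Mx))) ε,
        abs_of_pos (by linarith : 0 < N)]
      have h4 : (B0 + A0 + A0) * 1 ≤ (B0 + A0 + A0) * (K2 * Ceps n k 1 ε) :=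
        mul_le_mul_of_nonneg_left (hC2 ε hε hε2) (by positivity)
      have h5 : 0 ≤ (B0 + A0 + G1 + √(2 * Mx)) * Ceps n k 1 ε := by positivity
      calc B0 + A0 + N * (K1 * Ceps n k 1 ε) + A0
          = (B0 + A0 + A0) * 1 + N * K1 * Ceps n k 1 ε := by ring
        _ ≤ (B0 + A0 + A0) * (K2 * Ceps n k 1 ε) + N * K1 * Ceps n k 1 ε
            + (B0 + A0 + G1 + √(2 * Mx)) * Ceps n k 1 ε := by linarith
        _ = _ := by ring
    · intro x hx
      have h1 : sA a x < R := by have := hx.1; simpa [ESet] using this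
      have h2 : 2 * R / 3 ≤ sA a x := by have := hx.2; simpa [ESet] using this
      have h3 := D.far (x := x) (by linarith)
      have h4 := D.core' (δ := 1) (G := G1) (T := R) (by linarith) (by norm_num) hG1p
        (D.bern' one_pos le_rfl (by linarith)) h1.le h1.le (by linarith)
      refine h4.trans ?_
      have hR' : 1 ≤ √R := Real.one_le_sqrt.2 (by linarith)
      rw [Real.sqrt_mul (by positivity : 0 ≤ 2 * Mx) R]
      have h5 : (B0 + A0 + G1) * 1 ≤ (B0 + A0 + G1) * √R :=
        mul_le_mul_of_nonneg_left hR' (by positivity)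
      have h6 : 0 ≤ ((B0 + A0 + A0) * K2 + |N| * K1) * √R := by positivity
      have h7 : ((B0 + A0 + A0) * K2 + |N| * K1 + (B0 + A0 + G1 + √(2 * Mx))) * √R
          = ((B0 + A0 + A0) * K2 + |N| * K1) * √R + (B0 + A0 + G1) * √R + √(2 * Mx) * √R := by
        ring
      rw [h7]
      linarith
  · intro δ hδ
    set d := min δ 1 with hd
    have hd0 : 0 < d := lt_min hδ one_pos
    have hd1 : d ≤ 1 := min_le_right _ _
    obtain ⟨K3, hK3, hC3⟩ := Ceps_upper n k hk1 hkn (d / 2) (by positivity)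
    set Gd := √(144 * n * (N + 1) ^ 3 / (d / 2) ^ 2) with hGd
    have hGdp : 0 ≤ Gd := Real.sqrt_nonneg _
    have hpos : 0 < B0 + A0 + Gd + |N| * (K1 * K3) + A0 := by positivity
    refine ⟨_, hpos, ?_⟩
    intro x₀ hx₀ _ ε hε hε2 hεδ R hR u hu x hx
    have D := mk hx₀ hε hε2 hR hu
    have hN1 : 1 ≤ N := D.M0_pos
    have h2 : δ ≤ ‖x - x₀‖ := by
      have := hx.2
      rwa [Metric.mem_ball, not_lt, dist_eq_norm] at this
    have h1 := D.near hx.1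
    have hdδ : d ≤ δ := min_le_left _ _
    rw [abs_of_pos (by linarith : 0 < N)]
    rcases lt_or_ge ε (d / 2) with hcase | hcase
    · have h3 := D.core' (δ := d) (G := Gd) (T := R₀) (by linarith) (by linarith) hGdp
        (D.bern' hd0 hd1 hcase) (by linarith) h1 (by linarith)
      have : 0 ≤ N * (K1 * K3) := by positivity
      linarith
    · have h3 := D.part_one (K := K1 * K3) (by positivity)
        ((hC1 ε hε hε2).trans (mul_le_mul_of_nonneg_left (hC3 ε hcase hε2) hK1.le)) h1 (by linarith)
      linarith
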